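/- For any e.s.c.s. S there exists a closed geodesic in S which is the unique closed geodesic in its free homotopy class; equivalently, there exists a closed geodesic in the universal cover S̃ that is not the boundary line of a flat strip. -/

import Mathlib

/-!
The proof exhibits a closed geodesic through a conical point `q` which makes an angle larger than
`π` on both sides of `q`, and shows that such a geodesic is alone in its free homotopy class.

*Local geometry.* In polar coordinates around any point the metric is that of a cone of angle at
least `2π`. By compactness there is a scale `ε` at which geodesics exist, are extendible, and
satisfy the inequality of Bruhat and Tits (`ESCS.exists_good`). Midpoint curve shortening of chains
with small steps then converges to discrete geodesics, and the distance between two nearby chains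
is subharmonic under shortening.

*Uniqueness* (`unique_of_vertexRigid`). The tracks of a free homotopy between closed geodesics `g`
and `h` are cut into fine chains, and curve shortening replaces each of them by a discrete geodesic
with the same endpoints on `g` and `h`. The step length of these discrete geodesics is a convex
periodic function of the time parameter, hence constant, so that the intermediate closed curves are
geodesics parallel to `g` (`rigidity_of_chain`). At `q` an angle larger than `π` on both sides
excludes parallel curves other than translates of `g` itself (`IsConeChart.vertexRigid`), so `h` is
a translate of `g`.

*Existence* (`ESCS.exists_rigid`). Extending a geodesic far in a direction `v` at `q` and moving its
endpoint to `q` turns its initial direction only a little; so there are geodesic arcs from `q` to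
`q` leaving in directions arbitrarily close to any given one. As the cone angle exceeds `2π`, after
each arc a next one can be chosen, out of finitely many, which makes an angle larger than `π` with
its predecessor on both sides. A repetition in this sequence yields a closed geodesic.

*There is a conical point* (`ESCS.conical_nonempty`). Otherwise local Euclidean frames can be
transported along straight lines, which gives a developing map `E : ℂ → S`, isometric on disks of a
fixed radius `ρ`, through which paths lift. The `2 ^ n` positive words of length `n` in the free
group of rank two inside the fundamental group would give `2 ^ n` distinct `ρ`-separated points in
a disk of radius `O(n)` of the plane.
-/


open Metric Filter Topology Set

noncomputable section

namespace ESCSPaper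

/-! ### The standard cone -/

/-- Angular distance between `a b : ℝ` regarded as angles modulo `θ`. -/
def angDist (θ a b : ℝ) : ℝ := sInf {d : ℝ | ∃ k : ℤ, d = |a - b + θ * k|}

/-- The distance on the standard cone `C(v, θ)` of cone angle `θ`, written in polar
coordinates `(r, t)` around the vertex `v = (0, _)`; it is induced by the length
element `ds² = dr² + r² dt²`. -/
def coneDist (θ : ℝ) (x y : ℝ × ℝ) : ℝ :=
  if angDist θ x.2 y.2 ≤ Real.pi then
    Real.sqrt (x.1 ^ 2 + y.1 ^ 2 - 2 * x.1 * y.1 * Real.cos (angDist θ x.2 y.2))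
  else x.1 + y.1

/-! ### Euclidean surfaces with conical singularities -/

/-- A Euclidean surface with conical singularities (e.s.c.s.): a closed (compact,
connected) surface of genus `≥ 2` (encoded by the fundamental group containing a
free group of rank two, which for closed surfaces characterises negative Euler
characteristic, i.e. genus `≥ 2` in the orientable case), equipped with a length
metric which is locally Euclidean away from a finite set of conical points, each of
cone angle `> 2π`. -/
structure ESCS (S : Type) [MetricSpace S] : Type where
  compact : CompactSpace S
  connected : ConnectedSpace S
  /-- `S` is a surface: every point has a neighborhood homeomorphic to an open planar set. -/
  surface : ∀ x : S, ∃ U : Set S, U ∈ nhds x ∧ ∃ V : Set (ℝ × ℝ), IsOpen V ∧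
    Nonempty (↥U ≃ₜ ↥V)
  /-- genus at least two: the fundamental group contains a free group of rank two. -/
  genus_ge_two : ∃ x : S, ∃ ι : FreeGroup Bool →* FundamentalGroup S x, Function.Injective ι
  /-- the metric of `S` is a length metric. -/
  length_metric : ∀ x y : S, ∀ ε > (0:ℝ), ∃ γ : ℝ → S, Continuous γ ∧ γ 0 = x ∧ γ 1 = y ∧
    eVariationOn γ (Set.Icc 0 1) ≤ ENNReal.ofReal (dist x y + ε)
  /-- the (finitely many) conical points. -/
  conical : Finset S
  /-- the cone angle at each conical point. -/
  angle : S → ℝ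
  angle_gt : ∀ s ∈ conical, 2 * Real.pi < angle s
  /-- every regular point has a neighborhood isometric to a Euclidean disk. -/
  euclidean_at : ∀ x : S, x ∉ conical → ∃ ε > (0:ℝ), ∃ f : S → EuclideanSpace ℝ (Fin 2),
    (∀ y ∈ ball x ε, ∀ z ∈ ball x ε, dist (f y) (f z) = dist y z) ∧
    f '' ball x ε = ball (f x) ε
  /-- every conical point `s` has a neighborhood isometric to a neighborhood of the
  vertex of the standard cone `C(v, angle s)`. -/
  cone_at : ∀ s ∈ conical, ∃ ε > (0:ℝ), ∃ f : S → ℝ × ℝ,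
    f s = (0, 0) ∧
    (∀ y ∈ ball s ε, ∀ z ∈ ball s ε, coneDist (angle s) (f y) (f z) = dist y z) ∧
    f '' ball s ε = insert ((0:ℝ), (0:ℝ)) (Set.Ioo 0 ε ×ˢ Set.Ico 0 (angle s))

/-! ### Geodesics -/

/-- A local isometric map `ℝ → S`, i.e. a (unit speed, bi-infinite) geodesic of `S`. -/
def IsLocalGeodesic {S : Type} [MetricSpace S] (g : ℝ → S) : Prop :=
  ∀ t : ℝ, ∃ ε > (0:ℝ), ∀ s u : ℝ, |s - t| < ε → |u - t| < ε → dist (g s) (g u) = |s - u|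

/-- Two periodic maps (closed curves) `ℝ → S` are freely homotopic: for suitable
periods, the corresponding loops (parametrized with period `1`) are homotopic through
closed loops. -/
def FreelyHomotopic {S : Type} [TopologicalSpace S] (g h : ℝ → S) : Prop :=
  ∃ T₁ > (0:ℝ), ∃ T₂ > (0:ℝ), Function.Periodic g T₁ ∧ Function.Periodic h T₂ ∧
    ∃ F : ℝ → ℝ → S, Continuous (Function.uncurry F) ∧
      (∀ s : ℝ, F 0 s = g (T₁ * s)) ∧ (∀ s : ℝ, F 1 s = h (T₂ * s)) ∧
      ∀ u s : ℝ, F u (s + 1) = F u s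

/-- `g` is a closed geodesic of `S` which is the unique closed geodesic in its free
homotopy class (up to re-parametrization). -/
def UniqueClosedGeodesic {S : Type} [MetricSpace S] (g : ℝ → S) : Prop :=
  IsLocalGeodesic g ∧ (∃ T > (0:ℝ), Function.Periodic g T) ∧
    ∀ h : ℝ → S, IsLocalGeodesic h → (∃ T > (0:ℝ), Function.Periodic h T) →
      FreelyHomotopic g h → ∃ a : ℝ, ∀ t : ℝ, h t = g (t + a)

/-- `c'` is a parallel translate of the geodesic line `c` (the two lines bound a flat
strip): `c'` is a geodesic line which stays at constant distance from `c`. -/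
def ParallelTranslate {X : Type} [MetricSpace X] (c c' : ℝ → X) : Prop :=
  Isometry c' ∧ ∃ d : ℝ, ∀ t : ℝ, dist (c' t) (c t) = d

/-! ### The universal cover and its deck group -/

/-- The universal cover `X` of `S`, with the lifted metric: a simply connected space
together with a covering projection `p : X → S` which is a local isometry. -/
structure UnivCover (S X : Type) [MetricSpace S] [MetricSpace X] : Type where
  p : X → S
  covering : IsCoveringMap p
  localIsom : ∀ x : X, ∃ ε > (0:ℝ), ∀ y ∈ ball x ε, ∀ z ∈ ball x ε,
    dist (p y) (p z) = dist y z
  simplyConnected : SimplyConnectedSpace X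

/-- The deck (covering) group `Γ ≅ π₁(S)` of the universal cover: the group of
isometries of `X` commuting with the projection. -/
def deck {S X : Type} [MetricSpace S] [MetricSpace X] (cov : UnivCover S X) :
    Subgroup (X ≃ᵢ X) where
  carrier := {φ : X ≃ᵢ X | ∀ x : X, cov.p (φ x) = cov.p x}
  one_mem' := fun _ => rfl
  mul_mem' := by
    intro φ ψ hφ hψ x
    exact (hφ (ψ x)).trans (hψ x)
  inv_mem' := by
    intro φ hφ x
    have h := hφ (φ⁻¹ x)
    have h2 : φ (φ⁻¹ x) = x := by simp
    rw [h2] at h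
    exact h.symm

/-! ### The visual boundary -/

/-- A geodesic ray: a map `ℝ → X` which is isometric on `[0, ∞)`. -/
def IsRay {X : Type} [MetricSpace X] (r : ℝ → X) : Prop :=
  ∀ s t : ℝ, 0 ≤ s → 0 ≤ t → dist (r s) (r t) = |s - t|

/-- The space of geodesic rays of `X`, with the topology of pointwise convergence
(which on rays agrees with uniform convergence on compact sets). -/
abbrev RaySp (X : Type) [MetricSpace X] : Type := {r : ℝ → X // IsRay r}

/-- Two rays are asymptotic if they stay at bounded distance. -/
instance raySetoid (X : Type) [MetricSpace X] : Setoid (RaySp X) where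
  r r₁ r₂ := ∃ C : ℝ, ∀ t : ℝ, 0 ≤ t → dist (r₁.1 t) (r₂.1 t) ≤ C
  iseqv := by
    refine ⟨fun r => ⟨0, fun t _ => by simp⟩, ?_, ?_⟩
    · rintro a b ⟨C, h⟩
      exact ⟨C, fun t ht => by rw [dist_comm]; exact h t ht⟩
    · rintro a b c ⟨C₁, h₁⟩ ⟨C₂, h₂⟩
      exact ⟨C₁ + C₂, fun t ht =>
        (dist_triangle (a.1 t) (b.1 t) (c.1 t)).trans (add_le_add (h₁ t ht) (h₂ t ht))⟩

/-- The visual boundary `∂X̃`: asymptoty classes of geodesic rays, with the quotient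
topology. -/
abbrev Bdry (X : Type) [MetricSpace X] : Type := Quotient (raySetoid X)

/-- The point of the visual boundary determined by the positive end of a geodesic
line `g`, i.e. `g(+∞)`. -/
def endPlus {X : Type} [MetricSpace X] (g : ℝ → X) (hg : Isometry g) : Bdry X :=
  ⟦⟨g, fun s t _ _ => by rw [hg.dist_eq, Real.dist_eq]⟩⟧

/-- The point of the visual boundary determined by the negative end of a geodesic
line `g`, i.e. `g(−∞)`. -/
def endMinus {X : Type} [MetricSpace X] (g : ℝ → X) (hg : Isometry g) : Bdry X :=
  ⟦⟨fun t => g (-t), fun s t _ _ => by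
      rw [hg.dist_eq, Real.dist_eq, show -s - -t = -(s - t) by ring, abs_neg]⟩⟧

/-- The induced action of an isometry of `X` on the visual boundary. -/
def bdryMap {X : Type} [MetricSpace X] (φ : X ≃ᵢ X) : Bdry X → Bdry X :=
  Quotient.map
    (fun r => ⟨fun t => φ (r.1 t), fun s t hs ht => by
      rw [φ.dist_eq]; exact r.2 s t hs ht⟩)
    (by
      rintro r₁ r₂ ⟨C, h⟩
      exact ⟨C, fun t ht => by
        simpa only [φ.dist_eq] using h t ht⟩)

/-- A sequence of points of `X` converges to the boundary point `ξ` (in the cone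
topology): the geodesic segments from a fixed origin to the points converge (uniformly
on compacta, equivalently pointwise) to a ray representing `ξ`, while their lengths
tend to infinity. -/
def TendstoBdry {X : Type} [MetricSpace X] (x : ℕ → X) (ξ : Bdry X) : Prop :=
  ∃ r : RaySp X, ⟦r⟧ = ξ ∧
    ∃ (σ : ℕ → ℝ → X) (d : ℕ → ℝ),
      (∀ n : ℕ, 0 ≤ d n ∧ σ n 0 = r.1 0 ∧ σ n (d n) = x n ∧
        ∀ s t : ℝ, s ∈ Set.Icc 0 (d n) → t ∈ Set.Icc 0 (d n) →
          dist (σ n s) (σ n t) = |s - t|) ∧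
      Tendsto d atTop atTop ∧
      ∀ t : ℝ, 0 ≤ t → Tendsto (fun n => σ n t) atTop (nhds (r.1 t))

/-- The set `F_h` of boundary points fixed by some nontrivial (hyperbolic) deck
transformation. -/
def Fh {S X : Type} [MetricSpace S] [MetricSpace X] (cov : UnivCover S X) :
    Set (Bdry X) :=
  {ξ : Bdry X | ∃ φ ∈ deck cov, φ ≠ 1 ∧ bdryMap φ ξ = ξ}

/-! ### Busemann functions -/

/-- The Busemann function of a geodesic ray: `b_r(y) = lim_{t→∞} (d(y, r t) − t)`
(the function is nonincreasing in `t` and bounded below, so the limit is the inf). -/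
def busemannFun {X : Type} [MetricSpace X] (r : RaySp X) (y : X) : ℝ :=
  ⨅ t : Set.Ici (0:ℝ), (dist y (r.1 t.1) - t.1)

/-- The generalized Busemann function `α(ξ, x, x') = "d(x',ξ) − d(x,ξ)"` for a boundary
point `ξ`: the difference of Busemann functions of a ray representing `ξ` (in a Hadamard
space this does not depend on the chosen representative). -/
def genBusemann {X : Type} [MetricSpace X] (ξ : Bdry X) (x y : X) : ℝ :=
  busemannFun (Quotient.out ξ) y - busemannFun (Quotient.out ξ) x

/-! ### The space of geodesics and the geodesic flow -/

/-- `GS`: the space of (bi-infinite, locally isometric) geodesics of `S`, topologized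
as a subspace of `C(ℝ, S)` with the compact-open topology. -/
abbrev GeodSp (S : Type) [MetricSpace S] : Type := {g : C(ℝ, S) // IsLocalGeodesic ⇑g}

/-- The geodesic flow: `(t · g)(s) = g(s + t)`. -/
def geodFlow {S : Type} [MetricSpace S] (t : ℝ) (g : GeodSp S) : GeodSp S :=
  ⟨⟨fun s => g.1 (s + t), g.1.continuous.comp (continuous_id.add continuous_const)⟩, by
    intro u
    obtain ⟨ε, hε, h⟩ := g.2 (u + t)
    refine ⟨ε, hε, fun s v hs hv => ?_⟩
    have h1 : |s + t - (u + t)| < ε := by rwa [show s + t - (u + t) = s - u by ring]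
    have h2 : |v + t - (u + t)| < ε := by rwa [show v + t - (u + t) = v - u by ring]
    have h3 := h (s + t) (v + t) h1 h2
    rwa [show s + t - (v + t) = s - v by ring] at h3⟩

/-- The stable set `W^s(g)` of `g ∈ GS`: geodesics `h` admitting lifts to the universal
cover asymptotic to a lift of `g` (same point at `+∞`). -/
def WsGS {S X : Type} [MetricSpace S] [MetricSpace X] (cov : UnivCover S X)
    (g : GeodSp S) : Set (GeodSp S) :=
  {h : GeodSp S | ∃ (g' h' : ℝ → X) (hg : Isometry g') (hh : Isometry h'),
    (∀ t : ℝ, cov.p (g' t) = g.1 t) ∧ (∀ t : ℝ, cov.p (h' t) = h.1 t) ∧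
    endPlus h' hh = endPlus g' hg}

/-- The strong stable set `W^ss(g)` of `g ∈ GS`: geodesics `h` admitting lifts
asymptotic to a lift of `g` whose time-`0` points are equidistant from the common
point at infinity (the generalized Busemann function vanishes). -/
def WssGS {S X : Type} [MetricSpace S] [MetricSpace X] (cov : UnivCover S X)
    (g : GeodSp S) : Set (GeodSp S) :=
  {h : GeodSp S | ∃ (g' h' : ℝ → X) (hg : Isometry g') (hh : Isometry h'),
    (∀ t : ℝ, cov.p (g' t) = g.1 t) ∧ (∀ t : ℝ, cov.p (h' t) = h.1 t) ∧
    endPlus h' hh = endPlus g' hg ∧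
    genBusemann (endPlus g' hg) (g' 0) (h' 0) = 0}

/-- `h` is `s_n`-mixing with `f`: for all neighborhoods `O ∋ h`, `U ∋ f`, eventually
`s_n · O ∩ U ≠ ∅`. -/
def SnMixing {S : Type} [MetricSpace S] (s : ℕ → ℝ) (h f : GeodSp S) : Prop :=
  ∀ O U : Set (GeodSp S), IsOpen O → IsOpen U → h ∈ O → f ∈ U →
    ∀ᶠ n in atTop, (geodFlow (s n) '' O ∩ U).Nonempty

/-! ### Angles modulo `θ` and the cone metric -/

lemma angDist_le (θ a b : ℝ) (k : ℤ) : angDist θ a b ≤ |a - b + θ * k| :=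
  csInf_le ⟨0, by rintro _ ⟨k, rfl⟩; exact abs_nonneg _⟩ ⟨k, rfl⟩

lemma exists_angDist_eq {θ : ℝ} (hθ : 0 < θ) (a b : ℝ) :
    ∃ k : ℤ, angDist θ a b = |a - b + θ * k| := by
  refine ⟨-round ((a - b) / θ), le_antisymm (angDist_le _ _ _ _) ?_⟩
  refine le_csInf ⟨_, 0, rfl⟩ ?_
  rintro _ ⟨k, rfl⟩
  have h := round_le ((a - b) / θ) (-k)
  have key : ∀ z : ℝ, |a - b + θ * z| = θ * |(a - b) / θ - (-z)| := by
    intro z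
    rw [← abs_of_pos hθ, ← abs_mul, abs_of_pos hθ]
    congr 1
    field_simp
    ring
  rw [key, key]
  push_cast at h ⊢
  simpa using mul_le_mul_of_nonneg_left h hθ.le

lemma angDist_nonneg (θ a b : ℝ) : 0 ≤ angDist θ a b :=
  Real.sInf_nonneg (by rintro _ ⟨k, rfl⟩; exact abs_nonneg _)

lemma angDist_le_abs (θ a b : ℝ) : angDist θ a b ≤ |a - b| := by
  simpa using angDist_le θ a b 0

lemma angDist_self (θ a : ℝ) : angDist θ a a = 0 :=
  le_antisymm (by simpa using angDist_le_abs θ a a) (angDist_nonneg _ _ _)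

lemma angDist_comm (θ a b : ℝ) : angDist θ a b = angDist θ b a := by
  have h : ∀ a b : ℝ, angDist θ b a ≤ angDist θ a b := by
    intro a b
    refine le_csInf ⟨_, 0, rfl⟩ ?_
    rintro _ ⟨k, rfl⟩
    refine (angDist_le θ b a (-k)).trans (le_of_eq ?_)
    rw [← abs_neg]
    congr 1
    push_cast
    ring
  exact le_antisymm (h _ _) (h _ _)

lemma angDist_triangle {θ : ℝ} (hθ : 0 < θ) (a b c : ℝ) :
    angDist θ a c ≤ angDist θ a b + angDist θ b c := by
  obtain ⟨k, hk⟩ := exists_angDist_eq hθ a b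
  obtain ⟨l, hl⟩ := exists_angDist_eq hθ b c
  rw [hk, hl]
  refine (angDist_le θ a c (k + l)).trans ((le_of_eq ?_).trans (abs_add_le _ _))
  congr 1
  push_cast
  ring

lemma angDist_add_mul {θ : ℝ} (hθ : 0 < θ) (a b : ℝ) (k : ℤ) :
    angDist θ (a + θ * k) b = angDist θ a b := by
  have h0 : ∀ (a : ℝ) (k : ℤ), angDist θ (a + θ * k) a = 0 := by
    intro a k
    refine le_antisymm ((angDist_le θ _ _ (-k)).trans (le_of_eq ?_)) (angDist_nonneg _ _ _)
    push_cast
    rw [abs_eq_zero]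
    ring
  have h1 := angDist_triangle hθ (a + θ * k) a b
  have h2 := angDist_triangle hθ a (a + θ * k) b
  rw [angDist_comm θ a (a + θ * k)] at h2
  rw [h0] at h1 h2
  linarith

lemma angDist_eq_abs {θ : ℝ} (hθ : 0 < θ) {a b : ℝ} (h : |a - b| ≤ θ / 2) :
    angDist θ a b = |a - b| := by
  refine le_antisymm (angDist_le_abs _ _ _) ?_
  obtain ⟨k, hk⟩ := exists_angDist_eq hθ a b
  rw [hk]
  rcases eq_or_ne k 0 with rfl | hk0
  · simp
  · have h1 : (1 : ℝ) ≤ |(k : ℝ)| := by exact_mod_cast Int.one_le_abs hk0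
    have h2 : θ ≤ |θ * k| := by
      rw [abs_mul, abs_of_pos hθ]; nlinarith
    have h3 : |θ * k| ≤ |a - b + θ * k| + |a - b| := by
      have := abs_sub (a - b + θ * k) (a - b)
      rwa [show a - b + θ * k - (a - b) = θ * k by ring] at this
    linarith

/-- The cosine of the angle at the apex of a cone of angle `θ` between the directions `a` and `b`,
the angle being truncated at `π`. With it the cone metric obeys the law of cosines. -/
def coneCos (θ a b : ℝ) : ℝ := Real.cos (min (angDist θ a b) Real.pi)

lemma coneCos_comm (θ a b : ℝ) : coneCos θ a b = coneCos θ b a := by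
  unfold coneCos; rw [angDist_comm]

lemma coneCos_le_of_le {θ a b ψ : ℝ} (h0 : 0 ≤ ψ) (h1 : ψ ≤ Real.pi) (h : ψ ≤ angDist θ a b) :
    coneCos θ a b ≤ Real.cos ψ :=
  Real.cos_le_cos_of_nonneg_of_le_pi h0 (min_le_right _ _) (le_min h h1)

lemma coneCos_eq {θ a b : ℝ} (hθ : 2 * Real.pi ≤ θ) (h : |a - b| ≤ Real.pi) :
    coneCos θ a b = Real.cos (a - b) := by
  have hp := Real.pi_pos
  unfold coneCos
  rw [angDist_eq_abs (by linarith) (by linarith), min_eq_left h, Real.cos_abs]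

lemma coneCos_eq_neg_one {θ a b : ℝ} (h : Real.pi ≤ angDist θ a b) : coneCos θ a b = -1 := by
  unfold coneCos; rw [min_eq_right h, Real.cos_pi]

lemma coneCos_le_one (θ a b : ℝ) : coneCos θ a b ≤ 1 := Real.cos_le_one _

lemma neg_one_le_coneCos (θ a b : ℝ) : -1 ≤ coneCos θ a b := Real.neg_one_le_cos _

lemma angDist_eq_zero_of_coneCos {θ a b : ℝ} (h : coneCos θ a b = 1) : angDist θ a b = 0 := by
  have hp := Real.pi_pos
  have h0 := angDist_nonneg θ a b
  have h1 : 0 ≤ min (angDist θ a b) Real.pi := le_min h0 hp.le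
  have h2 := (Real.cos_eq_one_iff_of_lt_of_lt (x := min (angDist θ a b) Real.pi) (by linarith)
    (by linarith [min_le_right (angDist θ a b) Real.pi])).1 h
  rcases min_choice (angDist θ a b) Real.pi with h3 | h3 <;> linarith

/-- On directions at distance at most `2π`, the truncated cosine is at most the planar one;
this is where a cone angle `≥ 2π` makes the cone nonpositively curved. -/
lemma coneCos_le {θ a b : ℝ} (hθ : 2 * Real.pi ≤ θ) (h : |a - b| ≤ 2 * Real.pi) :
    coneCos θ a b ≤ Real.cos (a - b) := by
  have hp := Real.pi_pos
  rcases le_total |a - b| Real.pi with h1 | h1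
  · exact (coneCos_eq hθ h1).le
  · have h2 : 2 * Real.pi - |a - b| ≤ angDist θ a b := by
      obtain ⟨k, hk⟩ := exists_angDist_eq (show 0 < θ by linarith) a b
      rw [hk]
      rcases eq_or_ne k 0 with rfl | hk0
      · simp; linarith
      · have h1 : (1 : ℝ) ≤ |(k : ℝ)| := by exact_mod_cast Int.one_le_abs hk0
        have h2 : θ ≤ |θ * k| := by
          rw [abs_mul, abs_of_pos (show 0 < θ by linarith)]; nlinarith
        have h3 : |θ * k| ≤ |a - b + θ * k| + |a - b| := by
          have := abs_sub (a - b + θ * k) (a - b)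
          rwa [show a - b + θ * k - (a - b) = θ * k by ring] at this
        linarith
    have h3 := coneCos_le_of_le (by linarith) (by linarith) h2
    rwa [Real.cos_two_pi_sub, Real.cos_abs] at h3

lemma coneDist_nonneg {θ : ℝ} {x y : ℝ × ℝ} (hx : 0 ≤ x.1) (hy : 0 ≤ y.1) :
    0 ≤ coneDist θ x y := by
  unfold coneDist; split_ifs
  · exact Real.sqrt_nonneg _
  · linarith

lemma coneDist_sq {θ : ℝ} (r r' a b : ℝ) :
    coneDist θ (r, a) (r', b) ^ 2 = r ^ 2 + r' ^ 2 - 2 * (r * r') * coneCos θ a b := by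
  unfold coneDist coneCos
  split_ifs with h
  · simp only at h ⊢
    rw [min_eq_left h, Real.sq_sqrt]
    · ring
    · have h1 := Real.cos_le_one (angDist θ a b)
      have h2 := Real.neg_one_le_cos (angDist θ a b)
      have : r ^ 2 + r' ^ 2 - 2 * r * r' * Real.cos (angDist θ a b) =
        (r - r' * Real.cos (angDist θ a b)) ^ 2 + r' ^ 2 * (1 - Real.cos (angDist θ a b) ^ 2) := by
        ring
      rw [this]
      have : 0 ≤ 1 - Real.cos (angDist θ a b) ^ 2 := by nlinarith
      positivity
  · simp only at h ⊢
    rw [min_eq_right (by linarith), Real.cos_pi]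
    ring

/-! ### Cone charts -/

/-- `P` is a parametrization by polar coordinates `(r, a)` of the ball of radius `ε` about `q`,
which is isometric to a ball about the apex of the cone of angle `θ ≥ 2π`. The angle `a` ranges
over all of `ℝ`. -/
structure IsConeChart {S : Type} [MetricSpace S] (q : S) (θ ε : ℝ) (P : ℝ → ℝ → S) : Prop where
  angle_ge : 2 * Real.pi ≤ θ
  pos : 0 < ε
  dist_eq : ∀ r r' a b : ℝ, 0 ≤ r → r < ε → 0 ≤ r' → r' < ε →
    dist (P r a) (P r' b) = coneDist θ (r, a) (r', b)
  zero : ∀ a, P 0 a = q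
  surj : ∀ y, dist q y < ε → ∃ a, y = P (dist q y) a

lemma coneDist_zero_left {θ r b a : ℝ} (hr : 0 ≤ r) : coneDist θ (0, a) (r, b) = r := by
  unfold coneDist; split_ifs
  · simp [Real.sqrt_sq hr]
  · simp

lemma coneDist_congr {θ r r' a a' b b' : ℝ} (h : angDist θ a b = angDist θ a' b') :
    coneDist θ (r, a) (r', b) = coneDist θ (r, a') (r', b') := by
  unfold coneDist; simp only [h]

lemma coneDist_comm (θ : ℝ) (x y : ℝ × ℝ) : coneDist θ x y = coneDist θ y x := by
  unfold coneDist; rw [angDist_comm θ x.2 y.2, add_comm x.1]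
  congr 2
  ring

lemma ESCS.exists_coneChart {S : Type} [MetricSpace S] (hS : ESCS S) {s : S}
    (hs : s ∈ hS.conical) : ∃ ε P, IsConeChart s (hS.angle s) ε P := by
  obtain ⟨ε, hε, f, hf0, hfd, hfi⟩ := hS.cone_at s hs
  have hpi := Real.pi_pos
  set θ := hS.angle s
  have hθ : 2 * Real.pi < θ := hS.angle_gt s hs
  have hθ0 : 0 < θ := by linarith
  have hpre : ∀ r a : ℝ, ∃ y : S, (r = 0 → y = s) ∧ (0 < r → r < ε →
      y ∈ ball s ε ∧ f y = (r, toIcoMod hθ0 0 a)) := by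
    intro r a
    by_cases h : 0 < r ∧ r < ε
    · have : (r, toIcoMod hθ0 0 a) ∈ f '' ball s ε := by
        rw [hfi]
        right
        refine ⟨⟨h.1, h.2⟩, ?_⟩
        simpa using toIcoMod_mem_Ico hθ0 0 a
      obtain ⟨y, hy, hfy⟩ := this
      exact ⟨y, fun h0 => absurd h.1 (by simp [h0]), fun _ _ => ⟨hy, hfy⟩⟩
    · exact ⟨s, fun _ => rfl, fun h1 h2 => absurd ⟨h1, h2⟩ h⟩
  choose P hP0 hP1 using hpre
  have hsball : s ∈ ball s ε := mem_ball_self hε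
  have hmod : ∀ a : ℝ, ∃ k : ℤ, toIcoMod hθ0 0 a = a + θ * k := by
    intro a
    refine ⟨-toIcoDiv hθ0 0 a, ?_⟩
    rw [toIcoMod]
    push_cast
    rw [zsmul_eq_mul]
    ring
  have hang : ∀ a b : ℝ, angDist θ (toIcoMod hθ0 0 a) (toIcoMod hθ0 0 b) = angDist θ a b := by
    intro a b
    obtain ⟨k, hk⟩ := hmod a
    obtain ⟨l, hl⟩ := hmod b
    rw [hk, hl, angDist_add_mul hθ0, angDist_comm, angDist_add_mul hθ0, angDist_comm]
  have hz : ∀ r' a b, 0 ≤ r' → r' < ε → dist s (P r' b) = coneDist θ (0, a) (r', b) := by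
    intro r' a b h1 h2
    rw [coneDist_zero_left h1]
    rcases h1.eq_or_lt with h1 | h1
    · subst h1; rw [hP0 0 b rfl, dist_self]
    · obtain ⟨hy, hfy⟩ := hP1 r' b h1 h2
      rw [← hfd s hsball _ hy, hf0, hfy, coneDist_zero_left h1.le]
  refine ⟨ε, P, hθ.le, hε, ?_, fun a => hP0 0 a rfl, ?_⟩
  · intro r r' a b h1 h2 h3 h4
    rcases h1.eq_or_lt with h1 | h1
    · subst h1
      rw [hP0 0 a rfl]
      exact hz _ _ _ h3 h4
    rcases h3.eq_or_lt with h3 | h3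
    · subst h3
      rw [hP0 0 b rfl, dist_comm, coneDist_comm]
      exact hz _ _ _ h1.le h2
    obtain ⟨hy, hfy⟩ := hP1 r a h1 h2
    obtain ⟨hy', hfy'⟩ := hP1 r' b h3 h4
    rw [← hfd _ hy _ hy', hfy, hfy']
    exact coneDist_congr (hang a b)
  · intro y hy
    have hyb : y ∈ ball s ε := by rwa [mem_ball, dist_comm]
    have h1 : f y ∈ f '' ball s ε := ⟨y, hyb, rfl⟩
    have h2 := hfd s hsball y hyb
    rw [hfi] at h1
    rcases h1 with h1 | h1
    · rw [hf0, h1, coneDist_zero_left le_rfl] at h2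
      refine ⟨0, ?_⟩
      rw [← h2, hP0 0 0 rfl]
      exact (dist_eq_zero.1 h2.symm).symm
    · obtain ⟨⟨h3, h4⟩, h5⟩ := h1
      rw [hf0, show f y = ((f y).1, (f y).2) from rfl, coneDist_zero_left h3.le] at h2
      refine ⟨(f y).2, ?_⟩
      rw [← h2]
      obtain ⟨hz, hfz⟩ := hP1 (f y).1 (f y).2 h3 h4
      have h6 : toIcoMod hθ0 0 (f y).2 = (f y).2 := by
        rw [toIcoMod_eq_self]; simpa using h5
      rw [h6] at hfz
      apply dist_eq_zero.1
      rw [← hfd _ hyb _ hz, hfz]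
      have h7 := coneDist_sq (θ := θ) (f y).1 (f y).1 (f y).2 (f y).2
      have h8 : coneCos θ (f y).2 (f y).2 = 1 := by
        unfold coneCos; rw [angDist_self, min_eq_left hpi.le, Real.cos_zero]
      rw [h8] at h7
      have h9 : coneDist θ ((f y).1, (f y).2) ((f y).1, (f y).2) ^ 2 = 0 := by rw [h7]; ring
      exact pow_eq_zero_iff two_ne_zero |>.1 h9

namespace IsConeChart

variable {S : Type} [MetricSpace S] {q : S} {θ ε : ℝ} {P : ℝ → ℝ → S}

lemma period_pos (C : IsConeChart q θ ε P) : 0 < θ := by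
  linarith [C.angle_ge, Real.pi_pos]

lemma dist_sq (C : IsConeChart q θ ε P) {r r' : ℝ} (a b : ℝ) (h1 : 0 ≤ r) (h2 : r < ε)
    (h3 : 0 ≤ r') (h4 : r' < ε) :
    dist (P r a) (P r' b) ^ 2 = r ^ 2 + r' ^ 2 - 2 * (r * r') * coneCos θ a b := by
  rw [C.dist_eq r r' a b h1 h2 h3 h4, coneDist_sq]

lemma dist_center (C : IsConeChart q θ ε P) {r : ℝ} (a : ℝ) (h1 : 0 ≤ r) (h2 : r < ε) :
    dist q (P r a) = r := by
  rw [← C.zero 0, C.dist_eq 0 r 0 a le_rfl C.pos h1 h2, coneDist_zero_left h1]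

lemma eq_of_angDist (C : IsConeChart q θ ε P) {r a b : ℝ} (h1 : 0 ≤ r) (h2 : r < ε)
    (h : angDist θ a b = 0) : P r a = P r b := by
  have h3 := C.dist_sq a b h1 h2 h1 h2
  unfold coneCos at h3
  rw [h, min_eq_left Real.pi_pos.le, Real.cos_zero] at h3
  have h4 : dist (P r a) (P r b) ^ 2 = 0 := by rw [h3]; ring
  exact dist_eq_zero.1 (pow_eq_zero_iff two_ne_zero |>.1 h4)

/-- Opposite directions: the geodesic passes through the apex. -/
lemma dist_opp (C : IsConeChart q θ ε P) {r r' a b : ℝ} (h1 : 0 ≤ r) (h2 : r < ε)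
    (h3 : 0 ≤ r') (h4 : r' < ε) (h : Real.pi ≤ angDist θ a b) :
    dist (P r a) (P r' b) = r + r' := by
  have h5 := C.dist_sq a b h1 h2 h3 h4
  rw [coneCos_eq_neg_one h] at h5
  rw [← sq_eq_sq₀ dist_nonneg (by linarith), h5]
  ring

lemma dist_same (C : IsConeChart q θ ε P) {r r' a : ℝ} (h1 : 0 ≤ r) (h2 : r < ε)
    (h3 : 0 ≤ r') (h4 : r' < ε) :
    dist (P r a) (P r' a) = |r - r'| := by
  have h5 := C.dist_sq a a h1 h2 h3 h4
  unfold coneCos at h5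
  rw [angDist_self, min_eq_left Real.pi_pos.le, Real.cos_zero] at h5
  rw [← sq_eq_sq₀ dist_nonneg (abs_nonneg _), h5, sq_abs]
  ring

lemma norm_polar_sub_sq (r r' a b : ℝ) :
    ‖(r : ℂ) * Complex.exp (a * Complex.I) - r' * Complex.exp (b * Complex.I)‖ ^ 2 =
      r ^ 2 + r' ^ 2 - 2 * (r * r') * Real.cos (a - b) := by
  rw [← Complex.normSq_eq_norm_sq, Complex.normSq_apply]
  simp only [Complex.exp_ofReal_mul_I_re, Complex.exp_ofReal_mul_I_im, Complex.sub_re,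
    Complex.sub_im, Complex.mul_re, Complex.mul_im, Complex.ofReal_re, Complex.ofReal_im, zero_mul,
    sub_zero, add_zero]
  rw [Real.cos_sub]
  nlinarith [Real.sin_sq_add_cos_sq a, Real.sin_sq_add_cos_sq b]

/-- The developing of half a plane into the cone: the half plane `0 ≤ arg z` is laid out with its
edge in direction `a`, turning in the sense of the sign `σ`. -/
def dev (P : ℝ → ℝ → S) (a σ : ℝ) (z : ℂ) : S := P ‖z‖ (a + σ * z.arg)

lemma dist_dev (C : IsConeChart q θ ε P) {a σ : ℝ} (hσ : |σ| = 1) {z w : ℂ}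
    (hz : ‖z‖ < ε) (hw : ‖w‖ < ε) (hz0 : 0 ≤ z.im) (hw0 : 0 ≤ w.im) :
    dist (dev P a σ z) (dev P a σ w) = ‖z - w‖ := by
  rw [← sq_eq_sq₀ dist_nonneg (norm_nonneg _)]
  unfold dev
  rw [C.dist_sq _ _ (norm_nonneg _) hz (norm_nonneg _) hw]
  have h1 := Complex.arg_nonneg_iff.2 hz0
  have h2 := Complex.arg_nonneg_iff.2 hw0
  have h3 := Complex.arg_le_pi z
  have h4 := Complex.arg_le_pi w
  have h5 : a + σ * z.arg - (a + σ * w.arg) = σ * (z.arg - w.arg) := by ring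
  have h6 : |a + σ * z.arg - (a + σ * w.arg)| = |z.arg - w.arg| := by
    rw [h5, abs_mul, hσ, one_mul]
  rw [coneCos_eq C.angle_ge (by rw [h6, abs_le]; constructor <;> linarith), ← Real.cos_abs, h6,
    Real.cos_abs, ← norm_polar_sub_sq, Complex.norm_mul_exp_arg_mul_I,
    Complex.norm_mul_exp_arg_mul_I]

/-- Two points of the chart whose directions differ by less than `π` lie in a common developed
half plane. -/
lemma exists_sign (C : IsConeChart q θ ε P) (a b : ℝ) :
    ∃ σ : ℝ, |σ| = 1 ∧ ∀ r, 0 ≤ r → r < ε → P r b = P r (a + σ * angDist θ a b) := by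
  obtain ⟨k, hk⟩ := exists_angDist_eq C.period_pos a b
  have key : ∀ σ : ℝ, σ * angDist θ a b = -(a - b + θ * k) →
      ∀ r, 0 ≤ r → r < ε → P r b = P r (a + σ * angDist θ a b) := by
    intro σ h r h1 h2
    rw [h, show a + -(a - b + θ * k) = b + θ * ((-k : ℤ) : ℝ) by push_cast; ring]
    apply C.eq_of_angDist h1 h2
    rw [angDist_comm, angDist_add_mul C.period_pos, angDist_self]
  rcases abs_choice (a - b + θ * k) with h | h
  · exact ⟨-1, by simp, key _ (by rw [hk, h]; ring)⟩
  · exact ⟨1, by simp, key _ (by rw [hk, h]; ring)⟩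

end IsConeChart

/-! ### Local convexity of the metric -/

/-- A regular point is treated as the apex of a cone of angle `2π`. -/
lemma ESCS.exists_euclideanChart {S : Type} [MetricSpace S] (hS : ESCS S) {s : S}
    (hs : s ∉ hS.conical) : ∃ ε P, IsConeChart s (2 * Real.pi) ε P := by
  obtain ⟨ε, hε, f, hfd, hfi⟩ := hS.euclidean_at s hs
  have hsb : s ∈ ball s ε := mem_ball_self hε
  let e : ℝ → ℝ → EuclideanSpace ℝ (Fin 2) := fun r a => f s + !₂[r * Real.cos a, r * Real.sin a]
  have he : ∀ r r' a b, dist (e r a) (e r' b) ^ 2 =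
      r ^ 2 + r' ^ 2 - 2 * (r * r') * Real.cos (a - b) := by
    intro r r' a b
    rw [dist_add_left, EuclideanSpace.dist_eq, Real.sq_sqrt (by positivity)]
    simp only [Fin.sum_univ_two, Real.dist_eq, sq_abs]
    simp
    rw [Real.cos_sub]
    nlinarith [Real.sin_sq_add_cos_sq a, Real.sin_sq_add_cos_sq b]
  have he0 : ∀ a, e 0 a = f s := by
    intro a
    have h := he 0 0 a a
    have : dist (e 0 a) (e 0 0) = 0 := by
      have := he 0 0 a 0
      simpa using this
    rw [dist_eq_zero.1 this]
    ext i
    fin_cases i <;> simp [e]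
  have heball : ∀ r a, 0 ≤ r → r < ε → e r a ∈ ball (f s) ε := by
    intro r a h1 h2
    rw [mem_ball, ← he0 0]
    have h := he r 0 a 0
    have : dist (e r a) (e 0 0) = r := by
      rw [← sq_eq_sq₀ dist_nonneg h1, h]; ring
    rwa [this]
  have hpre : ∀ r a : ℝ, ∃ y : S, 0 ≤ r → r < ε → y ∈ ball s ε ∧ f y = e r a := by
    intro r a
    by_cases h : 0 ≤ r ∧ r < ε
    · have := heball r a h.1 h.2
      rw [← hfi] at this
      obtain ⟨y, hy, hfy⟩ := this
      exact ⟨y, fun _ _ => ⟨hy, hfy⟩⟩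
    · exact ⟨s, fun h1 h2 => absurd ⟨h1, h2⟩ h⟩
  choose P hP using hpre
  have hinj : ∀ y z, y ∈ ball s ε → z ∈ ball s ε → f y = f z → y = z := by
    intro y z hy hz h
    have := hfd y hy z hz
    rw [h, dist_self] at this
    exact dist_eq_zero.1 this.symm
  have hcos : ∀ a b, coneCos (2 * Real.pi) a b = Real.cos (a - b) := by
    intro a b
    have hp := Real.pi_pos
    obtain ⟨k, hk⟩ := exists_angDist_eq (θ := 2 * Real.pi) (by linarith) a b
    have hle : angDist (2 * Real.pi) a b ≤ Real.pi := by
      have h1 := angDist_le (2 * Real.pi) a b (-round ((a - b) / (2 * Real.pi)))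
      refine h1.trans ?_
      have h2 := abs_sub_round ((a - b) / (2 * Real.pi))
      have h3 : a - b + 2 * Real.pi * ((-round ((a - b) / (2 * Real.pi)) : ℤ) : ℝ) =
          ((a - b) / (2 * Real.pi) - round ((a - b) / (2 * Real.pi))) * (2 * Real.pi) := by
        push_cast
        field_simp
        ring
      rw [h3, abs_mul, abs_of_pos (by linarith : 0 < 2 * Real.pi)]
      nlinarith
    unfold coneCos
    rw [min_eq_left hle, hk, Real.cos_abs, mul_comm, Real.cos_add_int_mul_two_pi]
  refine ⟨ε, P, le_rfl, hε, ?_, ?_, ?_⟩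
  · intro r r' a b h1 h2 h3 h4
    obtain ⟨hy, hfy⟩ := hP r a h1 h2
    obtain ⟨hz, hfz⟩ := hP r' b h3 h4
    rw [← sq_eq_sq₀ dist_nonneg (coneDist_nonneg h1 h3), coneDist_sq, hcos, ← hfd _ hy _ hz, hfy,
      hfz, he]
  · intro a
    obtain ⟨hy, hfy⟩ := hP 0 a le_rfl hε
    exact hinj _ _ hy hsb (by rw [hfy, he0])
  · intro y hy
    have hyb : y ∈ ball s ε := by rwa [mem_ball, dist_comm]
    set v := f y - f s with hv
    have hn : ‖v‖ = dist s y := by rw [hv, ← dist_eq_norm, hfd _ hyb _ hsb, dist_comm]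
    set z : ℂ := ⟨v 0, v 1⟩ with hz
    have hzn : ‖z‖ = dist s y := by
      rw [← hn, EuclideanSpace.norm_eq, Fin.sum_univ_two, Complex.norm_eq_sqrt_sq_add_sq]
      simp [hz]
    refine ⟨z.arg, ?_⟩
    obtain ⟨hy', hfy'⟩ := hP (dist s y) z.arg dist_nonneg hy
    refine hinj _ _ hyb hy' ?_
    rw [hfy']
    have h1 : f y = f s + v := by rw [hv]; abel
    rw [h1]
    simp only [e]
    congr 1
    rw [← hzn]
    ext i
    fin_cases i
    · simp [hz]
    · simp [hz]

lemma ESCS.exists_chart {S : Type} [MetricSpace S] (hS : ESCS S) (s : S) :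
    ∃ θ ε P, IsConeChart s θ ε P := by
  by_cases hs : s ∈ hS.conical
  · exact ⟨_, hS.exists_coneChart hs⟩
  · exact ⟨_, hS.exists_euclideanChart hs⟩

/-- `m` is a midpoint of `x` and `y`. -/
def IsMid {S : Type} [MetricSpace S] (x y m : S) : Prop :=
  dist x m = dist x y / 2 ∧ dist y m = dist x y / 2

namespace IsConeChart

variable {S : Type} [MetricSpace S] {q : S} {θ ε : ℝ} {P : ℝ → ℝ → S}

lemma dev_polar (C : IsConeChart q θ ε P) {a σ r β : ℝ} (hr : 0 ≤ r) (h0 : 0 ≤ β)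
    (h1 : β ≤ Real.pi) :
    dev P a σ (r * Complex.exp (β * Complex.I)) = P r (a + σ * β) := by
  have hp := Real.pi_pos
  unfold dev
  have hn : ‖(r : ℂ) * Complex.exp (β * Complex.I)‖ = r := by
    rw [norm_mul, Complex.norm_exp_ofReal_mul_I, mul_one, Complex.norm_real, Real.norm_eq_abs,
      abs_of_nonneg hr]
  rw [hn]
  rcases hr.eq_or_lt with hr | hr
  · rw [← hr, C.zero, C.zero]
  · rw [Complex.exp_mul_I, Complex.arg_mul_cos_add_sin_mul_I hr ⟨by linarith, h1⟩]

lemma polar_im {r β : ℝ} (hr : 0 ≤ r) (h0 : 0 ≤ β) (h1 : β ≤ Real.pi) :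
    0 ≤ ((r : ℂ) * Complex.exp (β * Complex.I)).im := by
  simp only [Complex.exp_ofReal_mul_I_re, Complex.exp_ofReal_mul_I_im, Complex.mul_im,
    Complex.ofReal_re, Complex.ofReal_im, zero_mul, add_zero]
  exact mul_nonneg hr (Real.sin_nonneg_of_nonneg_of_le_pi h0 h1)

lemma norm_polar {r β : ℝ} (hr : 0 ≤ r) : ‖(r : ℂ) * Complex.exp (β * Complex.I)‖ = r := by
  rw [norm_mul, Complex.norm_exp_ofReal_mul_I, mul_one, Complex.norm_real, Real.norm_eq_abs,
    abs_of_nonneg hr]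

lemma dist_dev_center (C : IsConeChart q θ ε P) {a σ : ℝ} {z : ℂ} (hz : ‖z‖ < ε) :
    dist q (dev P a σ z) = ‖z‖ := C.dist_center _ (norm_nonneg _) hz

/-- Two points of the chart either lie in a common developed half plane or are joined by a
geodesic through the apex. -/
lemma two_points (C : IsConeChart q θ ε P) {x y : S} (hx : dist q x < ε) (hy : dist q y < ε) :
    (∃ a σ : ℝ, ∃ z w : ℂ, |σ| = 1 ∧ 0 ≤ z.im ∧ 0 ≤ w.im ∧ ‖z‖ = dist q x ∧ ‖w‖ = dist q y ∧
      x = dev P a σ z ∧ y = dev P a σ w) ∨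
    (∃ a b : ℝ, Real.pi ≤ angDist θ a b ∧ x = P (dist q x) a ∧ y = P (dist q y) b) := by
  obtain ⟨a, ha⟩ := C.surj x hx
  obtain ⟨b, hb⟩ := C.surj y hy
  have hp := Real.pi_pos
  rcases le_total (angDist θ a b) Real.pi with h | h
  · left
    obtain ⟨σ, hσ, h1⟩ := C.exists_sign a b
    have h0 := angDist_nonneg θ a b
    refine ⟨a, σ, dist q x * Complex.exp ((0 : ℝ) * Complex.I),
      dist q y * Complex.exp (angDist θ a b * Complex.I), hσ, polar_im dist_nonneg le_rfl hp.le,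
      polar_im dist_nonneg h0 h, norm_polar dist_nonneg, norm_polar dist_nonneg, ?_, ?_⟩
    · rw [C.dev_polar dist_nonneg le_rfl hp.le]; simpa using ha
    · rw [C.dev_polar dist_nonneg h0 h, ← h1 _ dist_nonneg hy]; exact hb
  · right; exact ⟨a, b, h, ha, hb⟩

/-- A point `p` of the cone has a comparison point in the plane, with respect to a given point `m`
of a developed half plane: distances to `m` agree, and distances to other points of the half plane
do not increase. -/
lemma exists_comparison (C : IsConeChart q θ ε P) {a σ : ℝ} (hσ : |σ| = 1) {m : ℂ}
    (hm : ‖m‖ < ε) (hm0 : 0 ≤ m.im) {p : S} (hp : dist q p < ε) :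
    ∃ p' : ℂ, ‖p' - m‖ = dist p (dev P a σ m) ∧
      ∀ u : ℂ, 0 ≤ u.im → ‖u‖ < ε → ‖p' - u‖ ≤ dist p (dev P a σ u) := by
  have hpi := Real.pi_pos
  obtain ⟨c, hc⟩ := C.surj p hp
  set R := dist q p
  have hR : 0 ≤ R := dist_nonneg
  have hσ2 : σ * σ = 1 := by rw [← abs_mul_abs_self, hσ, one_mul]
  have harg : ∀ u : ℂ, 0 ≤ u.im → 0 ≤ u.arg ∧ u.arg ≤ Real.pi := fun u hu =>
    ⟨Complex.arg_nonneg_iff.2 hu, Complex.arg_le_pi u⟩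
  have hsq : ∀ u : ℂ, ‖u‖ < ε → dist p (dev P a σ u) ^ 2 =
      R ^ 2 + ‖u‖ ^ 2 - 2 * (R * ‖u‖) * coneCos θ c (a + σ * u.arg) := by
    intro u hu
    rw [hc]; exact C.dist_sq _ _ hR hp (norm_nonneg _) hu
  have hnorm : ∀ (ν : ℝ) (u : ℂ), ‖(R : ℂ) * Complex.exp (ν * Complex.I) - u‖ ^ 2 =
      R ^ 2 + ‖u‖ ^ 2 - 2 * (R * ‖u‖) * Real.cos (ν - u.arg) := by
    intro ν u
    conv_lhs => rw [← Complex.norm_mul_exp_arg_mul_I u]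
    exact norm_polar_sub_sq _ _ _ _
  have hmul : ∀ u : ℂ, 0 ≤ R * ‖u‖ := fun u => mul_nonneg hR (norm_nonneg _)
  obtain ⟨hm1, hm2⟩ := harg m hm0
  rcases le_total (angDist θ c (a + σ * m.arg)) Real.pi with h | h
  · -- lift `c` to the representative closest to the direction of `m`
    obtain ⟨k, hk⟩ := exists_angDist_eq C.period_pos c (a + σ * m.arg)
    set ν := σ * (c + θ * k - a) with hν
    have hc' : ∀ b, coneCos θ c b = coneCos θ (a + σ * ν) b := by
      intro b
      have : a + σ * ν = c + θ * k := by rw [hν, ← mul_assoc, hσ2]; ring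
      rw [this]; unfold coneCos; rw [angDist_add_mul C.period_pos]
    have hd : ∀ x y : ℝ, |a + σ * x - (a + σ * y)| = |x - y| := by
      intro x y
      rw [show a + σ * x - (a + σ * y) = σ * (x - y) by ring, abs_mul, hσ, one_mul]
    have hcosd : ∀ x y : ℝ, Real.cos (a + σ * x - (a + σ * y)) = Real.cos (x - y) := by
      intro x y
      rw [← Real.cos_abs, hd, Real.cos_abs]
    have hνm : |ν - m.arg| ≤ Real.pi := by
      rw [← hd, hν, ← mul_assoc, hσ2]
      rw [hk] at h
      rwa [show a + 1 * (c + θ * k - a) - (a + σ * m.arg) = c - (a + σ * m.arg) + θ * k by ring]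
    refine ⟨R * Complex.exp (ν * Complex.I), ?_, fun u hu hu2 => ?_⟩
    · rw [← sq_eq_sq₀ (norm_nonneg _) dist_nonneg, hnorm, hsq m hm, hc',
        coneCos_eq C.angle_ge (by rw [hd]; exact hνm), hcosd]
    · rw [← sq_le_sq₀ (norm_nonneg _) dist_nonneg, hnorm, hsq u hu2, hc']
      obtain ⟨hu3, hu4⟩ := harg u hu
      rw [abs_le] at hνm
      have := coneCos_le (θ := θ) (a := a + σ * ν) (b := a + σ * u.arg) C.angle_ge
        (by rw [hd, abs_le]; constructor <;> linarith [hνm.1, hνm.2])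
      rw [hcosd] at this
      nlinarith [hmul u]
  · refine ⟨R * Complex.exp ((m.arg + Real.pi : ℝ) * Complex.I), ?_, fun u hu hu2 => ?_⟩
    · rw [← sq_eq_sq₀ (norm_nonneg _) dist_nonneg, hnorm, hsq m hm, coneCos_eq_neg_one h]
      rw [show m.arg + Real.pi - m.arg = Real.pi by ring, Real.cos_pi]
    · rw [← sq_le_sq₀ (norm_nonneg _) dist_nonneg, hnorm, hsq u hu2]
      obtain ⟨hu3, hu4⟩ := harg u hu
      have h1 : Real.cos (m.arg + Real.pi - u.arg) = Real.cos (Real.pi - |m.arg - u.arg|) := by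
        rw [Real.cos_pi_sub, Real.cos_abs,
          show m.arg + Real.pi - u.arg = m.arg - u.arg + Real.pi by ring, Real.cos_add_pi]
      have h2 : |m.arg - u.arg| ≤ Real.pi := by rw [abs_le]; constructor <;> linarith
      have h3 : coneCos θ c (a + σ * u.arg) ≤ Real.cos (Real.pi - |m.arg - u.arg|) := by
        apply coneCos_le_of_le (by linarith) (by linarith [abs_nonneg (m.arg - u.arg)])
        have h4 := angDist_triangle C.period_pos c (a + σ * u.arg) (a + σ * m.arg)
        have h5 := angDist_le_abs θ (a + σ * u.arg) (a + σ * m.arg)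
        rw [show a + σ * u.arg - (a + σ * m.arg) = σ * (u.arg - m.arg) by ring, abs_mul, hσ,
          one_mul, abs_sub_comm] at h5
        linarith
      rw [h1]
      nlinarith [hmul u]

lemma coneCos_add_le {c a b : ℝ} (hθ : 0 < θ) (h : Real.pi ≤ angDist θ a b) :
    coneCos θ c a + coneCos θ c b ≤ 0 := by
  have h1 := angDist_triangle hθ a c b
  rw [angDist_comm θ a c] at h1
  set α := min (angDist θ c a) Real.pi with hα
  have h2 : coneCos θ c b ≤ Real.cos (Real.pi - α) := by
    apply coneCos_le_of_le
    · linarith [min_le_right (angDist θ c a) Real.pi]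
    · have : 0 ≤ α := le_min (angDist_nonneg _ _ _) Real.pi_pos.le
      linarith
    · rcases min_cases (angDist θ c a) Real.pi with h3 | h3
      · rw [hα, h3.1]; linarith
      · rw [hα, h3.1]; simpa using angDist_nonneg θ c b
  rw [Real.cos_pi_sub] at h2
  have : coneCos θ c a = Real.cos α := rfl
  linarith

/-- The inequality of Bruhat and Tits holds in a cone, for one midpoint. -/
lemma cn_aux (C : IsConeChart q θ ε P) {x y : S} (hx : dist q x < ε) (hy : dist q y < ε) :
    ∃ m, ∀ p, dist q p < ε →
      dist p m ^ 2 ≤ (dist p x ^ 2 + dist p y ^ 2) / 2 - dist x y ^ 2 / 4 := by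
  rcases C.two_points hx hy with ⟨a, σ, z, w, hσ, hz, hw, hzn, hwn, hxz, hyw⟩ | ⟨a, b, h, ha, hb⟩
  · rw [← hzn] at hx
    rw [← hwn] at hy
    have hmn : ‖(z + w) / 2‖ < ε := by
      rw [norm_div, Complex.norm_two]
      linarith [norm_add_le z w]
    have hm0 : 0 ≤ ((z + w) / 2).im := by
      simp only [Complex.div_ofNat_im, Complex.add_im]; linarith
    refine ⟨dev P a σ ((z + w) / 2), fun p hp => ?_⟩
    obtain ⟨p', h1, h2⟩ := C.exists_comparison (a := a) hσ hmn hm0 hp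
    rw [hxz, hyw, C.dist_dev hσ hx hy hz hw, ← h1]
    have h3 := h2 z hz hx
    have h4 := h2 w hw hy
    have h5 := pow_le_pow_left₀ (norm_nonneg _) h3 2
    have h6 := pow_le_pow_left₀ (norm_nonneg _) h4 2
    have h7 := parallelogram_law_with_norm ℝ ((p' - z)) (p' - w)
    have h8 : p' - z + (p' - w) = 2 * (p' - (z + w) / 2) := by ring
    have h9 : p' - z - (p' - w) = -(z - w) := by ring
    rw [h8, h9, norm_neg, norm_mul, Complex.norm_two] at h7
    nlinarith
  · have key : ∀ x y : S, dist q x < ε → dist q y < ε → dist q y ≤ dist q x → ∀ a b,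
        Real.pi ≤ angDist θ a b → x = P (dist q x) a → y = P (dist q y) b → ∃ m, ∀ p,
        dist q p < ε → dist p m ^ 2 ≤ (dist p x ^ 2 + dist p y ^ 2) / 2 - dist x y ^ 2 / 4 := by
      clear! x y a b
      intro x y hx hy hxy a b h ha hb
      set X := dist q x
      set Y := dist q y
      have hX : 0 ≤ X := dist_nonneg
      have hY : 0 ≤ Y := dist_nonneg
      refine ⟨P ((X - Y) / 2) a, fun p hp => ?_⟩
      obtain ⟨c, hc⟩ := C.surj p hp
      set R := dist q p
      have hR : 0 ≤ R := dist_nonneg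
      have h1 := coneCos_add_le (c := c) C.period_pos h
      rw [hc, ha, hb, C.dist_opp hX hx hY hy h, C.dist_sq _ _ hR hp (by linarith) (by linarith),
        C.dist_sq _ _ hR hp hX hx, C.dist_sq _ _ hR hp hY hy]
      nlinarith [mul_nonneg hR hY]
    rcases le_total (dist q y) (dist q x) with h1 | h1
    · exact key x y hx hy h1 a b h ha hb
    · rw [angDist_comm] at h
      obtain ⟨m, hm⟩ := key y x hy hx h1 b a h hb ha
      refine ⟨m, fun p hp => ?_⟩
      have := hm p hp
      rw [dist_comm y x] at this
      linarith

lemma cn (C : IsConeChart q θ ε P) {x y p m : S} (hx : dist q x < ε) (hy : dist q y < ε)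
    (hp : dist q p < ε) (hm : dist q m < ε) (h : IsMid x y m) :
    dist p m ^ 2 ≤ (dist p x ^ 2 + dist p y ^ 2) / 2 - dist x y ^ 2 / 4 := by
  obtain ⟨m0, h0⟩ := C.cn_aux hx hy
  have h1 := h0 m hm
  rw [dist_comm m x, dist_comm m y, h.1, h.2] at h1
  have h2 : dist m m0 ^ 2 = 0 := le_antisymm (by nlinarith) (sq_nonneg _)
  have h3 : m = m0 := dist_eq_zero.1 (pow_eq_zero_iff two_ne_zero |>.1 h2)
  rw [h3]; exact h0 p hp

lemma geo (C : IsConeChart q θ ε P) {x y : S} (hx : dist q x < ε) (hy : dist q y < ε) :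
    ∃ γ : ℝ → S, γ 0 = x ∧ γ (dist x y) = y ∧
      ∀ s ∈ Icc 0 (dist x y), ∀ t ∈ Icc 0 (dist x y), dist (γ s) (γ t) = |s - t| := by
  rcases eq_or_ne x y with rfl | hne
  · refine ⟨fun _ => x, rfl, rfl, ?_⟩
    intro s hs t ht
    simp only [dist_self, Icc_self, mem_singleton_iff] at hs ht ⊢
    simp [hs, ht]
  rcases C.two_points hx hy with ⟨a, σ, z, w, hσ, hz, hw, hzn, hwn, hxz, hyw⟩ | ⟨a, b, h, ha, hb⟩
  · rw [← hzn] at hx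
    rw [← hwn] at hy
    have hd : dist x y = ‖z - w‖ := by rw [hxz, hyw, C.dist_dev hσ hx hy hz hw]
    have hd0 : 0 < dist x y := dist_pos.2 hne
    set D := dist x y
    let c : ℝ → ℂ := fun t => z + ((t / D : ℝ) : ℂ) * (w - z)
    have hc : ∀ t ∈ Icc 0 D, ‖c t‖ < ε ∧ 0 ≤ (c t).im := by
      intro t ht
      have h1 : 0 ≤ t / D := div_nonneg ht.1 hd0.le
      have h2 : t / D ≤ 1 := (div_le_one hd0).2 ht.2
      have h3 : c t = ((1 - t / D : ℝ) : ℂ) * z + ((t / D : ℝ) : ℂ) * w := by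
        simp only [c]; push_cast; ring
      constructor
      · rw [h3]
        refine (norm_add_le _ _).trans_lt ?_
        rw [norm_mul, norm_mul, Complex.norm_real, Complex.norm_real, Real.norm_eq_abs,
          Real.norm_eq_abs, abs_of_nonneg h1, abs_of_nonneg (by linarith : 0 ≤ 1 - t / D)]
        rcases h1.eq_or_lt with h4 | h4
        · rw [← h4]; linarith
        · nlinarith
      · rw [h3]
        simp only [Complex.add_im, Complex.mul_im, Complex.ofReal_re, Complex.ofReal_im, zero_mul,
          add_zero]
        have : 0 ≤ 1 - t / D := by linarith
        positivity
    refine ⟨fun t => dev P a σ (c t), ?_, ?_, ?_⟩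
    · simp [c, hxz]
    · have : c D = w := by
        simp only [c, div_self hd0.ne']
        push_cast; ring
      simp only [this, hyw]
    · intro s hs t ht
      obtain ⟨h1, h2⟩ := hc s hs
      obtain ⟨h3, h4⟩ := hc t ht
      rw [C.dist_dev hσ h1 h3 h2 h4]
      have : c s - c t = (((s - t) / D : ℝ) : ℂ) * (w - z) := by simp only [c]; push_cast; ring
      rw [this, norm_mul, Complex.norm_real, Real.norm_eq_abs, norm_sub_rev w z, ← hd, abs_div,
        abs_of_pos hd0, div_mul_cancel₀ _ hd0.ne']
  · set X := dist q x
    set Y := dist q y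
    have hX : 0 ≤ X := dist_nonneg
    have hY : 0 ≤ Y := dist_nonneg
    have hD : dist x y = X + Y := by rw [ha, hb, C.dist_opp hX hx hY hy h]
    rw [hD]
    refine ⟨fun t => if t ≤ X then P (X - t) a else P (t - X) b, ?_, ?_, ?_⟩
    · simp [hX, ← ha]
    · simp only []
      rcases hY.eq_or_lt with h0 | h0
      · rw [← h0] at hb ⊢
        rw [hb, C.zero]
        simp [C.zero]
      · rw [if_neg (by linarith)]; simpa using hb.symm
    · intro s hs t ht
      rcases le_total s t with hst | hst
      all_goals
        simp only []
        split_ifs with h1 h2 h2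
      all_goals first
        | (exfalso; linarith)
        | skip
      · rw [C.dist_same (by linarith) (by linarith [hs.1]) (by linarith) (by linarith [ht.1]),
          abs_sub_comm]
        congr 1; ring
      · push Not at h2
        rw [C.dist_opp (by linarith) (by linarith [hs.1]) (by linarith) (by linarith [ht.2]) h,
          abs_of_nonpos (by linarith)]
        ring
      · push Not at h1 h2
        rw [C.dist_same (by linarith) (by linarith [hs.2]) (by linarith) (by linarith [ht.2])]
        congr 1; ring
      · rw [C.dist_same (by linarith) (by linarith [hs.1]) (by linarith) (by linarith [ht.1]),
          abs_sub_comm]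
        congr 1; ring
      · push Not at h1
        rw [dist_comm, C.dist_opp (by linarith) (by linarith [ht.1]) (by linarith)
          (by linarith [hs.2]) h, abs_of_nonneg (by linarith)]
        ring
      · push Not at h1 h2
        rw [C.dist_same (by linarith) (by linarith [hs.2]) (by linarith) (by linarith [ht.2])]
        congr 1; ring

/-- Geodesic segments can be prolonged, since cone angles are at least `2π`. -/
lemma ext (C : IsConeChart q θ ε P) {x y : S} (hx : dist q x < ε / 4) (hy : dist q y < ε / 4) :
    ∃ z, dist y z = dist x y ∧ dist x z = 2 * dist x y := by
  have hpi := Real.pi_pos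
  have hε := C.pos
  obtain ⟨a, ha⟩ := C.surj x (by linarith)
  obtain ⟨b, hb⟩ := C.surj y (by linarith)
  set X := dist q x
  set Y := dist q y
  have hX : 0 ≤ X := dist_nonneg
  have hY : 0 ≤ Y := dist_nonneg
  rcases le_total (angDist θ a b) Real.pi with h | h
  · obtain ⟨σ, hσ, hs⟩ := C.exists_sign b a
    rw [angDist_comm] at h
    have h0 := angDist_nonneg θ b a
    set β := angDist θ b a
    rw [hs X hX (by linarith)] at ha
    have hσ' : |-σ| = 1 := by rwa [abs_neg]
    set u : ℂ := X * Complex.exp ((-β : ℝ) * Complex.I) with hu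
    have hun : ‖u‖ = X := norm_polar hX
    set z : ℂ := 2 * Y - u with hz
    have hyd : y = dev P b (-σ) (Y : ℂ) := by
      have := C.dev_polar (a := b) (σ := -σ) (β := 0) hY le_rfl hpi.le
      simp at this
      rw [this]; exact hb
    have hzn : ‖z‖ < ε := by
      refine (norm_sub_le _ _).trans_lt ?_
      rw [hun, norm_mul, Complex.norm_two, Complex.norm_real, Real.norm_eq_abs, abs_of_nonneg hY]
      linarith
    have hzi : 0 ≤ z.im := by
      have : z.im = X * Real.sin β := by
        simp only [hz, hu, Complex.sub_im, Complex.mul_im, Complex.exp_ofReal_mul_I_re,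
          Complex.exp_ofReal_mul_I_im, Complex.ofReal_re, Complex.ofReal_im, Real.sin_neg]
        simp
      rw [this]
      exact mul_nonneg hX (Real.sin_nonneg_of_nonneg_of_le_pi h0 h)
    have hYn : ‖(Y : ℂ)‖ < ε := by
      rw [Complex.norm_real, Real.norm_eq_abs, abs_of_nonneg hY]; linarith
    have hxy : dist x y = ‖(Y : ℂ) - u‖ := by
      have h1 := norm_polar_sub_sq Y X 0 (-β)
      rw [← sq_eq_sq₀ dist_nonneg (norm_nonneg _), ha, hb, C.dist_sq _ _ hX (by linarith) hY
        (by linarith), coneCos_eq C.angle_ge]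
      · simp only [Complex.ofReal_zero, zero_mul, Complex.exp_zero, mul_one] at h1
        rw [hu, h1]
        rw [show b + σ * β - b = σ * β by ring, ← Real.cos_abs (σ * β), abs_mul, hσ, one_mul,
          Real.cos_abs]
        simp
        ring
      · rw [show b + σ * β - b = σ * β by ring, abs_mul, hσ, one_mul, abs_of_nonneg h0]
        exact h
    have hyz : dist y (dev P b (-σ) z) = dist x y := by
      rw [hxy, hyd, C.dist_dev hσ' hYn hzn (by simp) hzi, ← norm_neg]
      congr 1
      rw [hz]; ring
    refine ⟨dev P b (-σ) z, hyz, le_antisymm ?_ ?_⟩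
    · linarith [dist_triangle x y (dev P b (-σ) z)]
    · rw [← sq_le_sq₀ (by positivity) dist_nonneg, hxy]
      have h1 : ‖u - z‖ ^ 2 = (2 * ‖(Y : ℂ) - u‖) ^ 2 := by
        rw [hz, show u - (2 * Y - u) = 2 * -((Y : ℂ) - u) by ring, norm_mul, norm_neg,
          Complex.norm_two]
      have h2 : ‖u - z‖ ^ 2 = X ^ 2 + ‖z‖ ^ 2 - 2 * (X * ‖z‖) * Real.cos (-β - z.arg) := by
        conv_lhs => rw [← Complex.norm_mul_exp_arg_mul_I z, hu]
        exact norm_polar_sub_sq _ _ _ _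
      have hz1 := Complex.arg_nonneg_iff.2 hzi
      have hz2 := Complex.arg_le_pi z
      have h3 : coneCos θ (b + σ * β) (b + -σ * z.arg) ≤ Real.cos (-β - z.arg) := by
        have e1 : b + σ * β - (b + -σ * z.arg) = σ * (β + z.arg) := by ring
        have e2 : |b + σ * β - (b + -σ * z.arg)| = β + z.arg := by
          rw [e1, abs_mul, hσ, one_mul, abs_of_nonneg (by linarith)]
        refine (coneCos_le C.angle_ge (by rw [e2]; linarith)).trans_eq ?_
        rw [← Real.cos_abs, e2, ← Real.cos_neg]
        congr 1; ring
      rw [← h1, h2, ha]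
      unfold dev
      rw [C.dist_sq _ _ hX (by linarith) (norm_nonneg _) hzn]
      nlinarith [mul_nonneg hX (norm_nonneg z)]
  · refine ⟨P (2 * Y + X) b, ?_, ?_⟩
    · rw [ha, hb, C.dist_same hY (by linarith) (by linarith) (by linarith),
        C.dist_opp hX (by linarith) hY (by linarith) h, abs_of_nonpos (by linarith)]
      ring
    · rw [ha, hb, C.dist_opp hX (by linarith) (by linarith) (by linarith) h,
        C.dist_opp hX (by linarith) hY (by linarith) h]
      ring

end IsConeChart

/-- The properties of the metric which hold uniformly at scale `ε`: existence of geodesics, the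
inequality of Bruhat and Tits, and extendibility of geodesics. -/
structure Good (S : Type) [MetricSpace S] (ε : ℝ) : Prop where
  pos : 0 < ε
  geo : ∀ x y : S, dist x y < ε → ∃ γ : ℝ → S, γ 0 = x ∧ γ (dist x y) = y ∧
      ∀ s ∈ Icc 0 (dist x y), ∀ t ∈ Icc 0 (dist x y), dist (γ s) (γ t) = |s - t|
  cn : ∀ x y p m : S, dist x y < ε → dist p x < ε → dist p y < ε → IsMid x y m →
      dist p m ^ 2 ≤ (dist p x ^ 2 + dist p y ^ 2) / 2 - dist x y ^ 2 / 4
  ext : ∀ x y : S, dist x y < ε → ∃ z, dist y z = dist x y ∧ dist x z = 2 * dist x y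

lemma ESCS.exists_good {S : Type} [MetricSpace S] (hS : ESCS S) : ∃ ε, Good S ε := by
  have := hS.compact
  choose θ e P C using hS.exists_chart
  obtain ⟨δ, hδ, h⟩ := lebesgue_number_lemma_of_metric (s := (univ : Set S))
    (c := fun s : S => ball s (e s / 8)) isCompact_univ (fun _ => isOpen_ball)
    (fun s _ => mem_iUnion.2 ⟨s, mem_ball_self (by have := (C s).pos; positivity)⟩)
  have h' : ∀ x : S, ∃ s, ∀ y, dist x y < δ → dist s y < e s / 8 := by
    intro x
    obtain ⟨s, hs⟩ := h x (mem_univ x)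
    refine ⟨s, fun y hy => ?_⟩
    have := hs (by rwa [mem_ball, dist_comm] : y ∈ ball x δ)
    rwa [mem_ball, dist_comm] at this
  refine ⟨δ, hδ, ?_, ?_, ?_⟩
  · intro x y hxy
    obtain ⟨s, hs⟩ := h' x
    have := (C s).pos
    exact (C s).geo (by linarith [hs x (by simpa using hδ)]) (by linarith [hs y hxy])
  · intro x y p m hxy hpx hpy hm
    obtain ⟨s, hs⟩ := h' x
    have := (C s).pos
    refine (C s).cn (by linarith [hs x (by simpa using hδ)]) (by linarith [hs y hxy])
      (by linarith [hs p (by rwa [dist_comm])]) (by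
        have := hs m (by rw [hm.1]; linarith)
        linarith) hm
  · intro x y hxy
    obtain ⟨s, hs⟩ := h' x
    have := (C s).pos
    exact (C s).ext (by linarith [hs x (by simpa using hδ)]) (by linarith [hs y hxy])

/-! ### Midpoints -/

section Midpoints

variable {S : Type} [MetricSpace S] {ε : ℝ}

lemma IsMid.symm {x y m : S} (h : IsMid x y m) : IsMid y x m := by
  unfold IsMid at *; rw [dist_comm y x]; exact ⟨h.2, h.1⟩

lemma isMid_self (x : S) : IsMid x x x := by simp [IsMid]

/-- The midpoint of two points, if there is one. -/
def mid (x y : S) : S :=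
  open Classical in if h : ∃ m, IsMid x y m then h.choose else x

lemma Good.isMid_mid (hG : Good S ε) {x y : S} (h : dist x y < ε) : IsMid x y (mid x y) := by
  have hex : ∃ m, IsMid x y m := by
    obtain ⟨γ, h0, h1, h2⟩ := hG.geo x y h
    have hd : 0 ≤ dist x y := dist_nonneg
    refine ⟨γ (dist x y / 2), ?_, ?_⟩
    · have h3 := h2 0 ⟨le_rfl, hd⟩ (dist x y / 2) ⟨by linarith, by linarith⟩
      rw [h0, abs_of_nonpos (by linarith)] at h3
      rw [h3]; ring
    · have h3 := h2 _ ⟨hd, le_rfl⟩ (dist x y / 2) ⟨by linarith, by linarith⟩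
      rw [h1, abs_of_nonneg (by linarith)] at h3
      rw [h3]; ring
  unfold mid
  rw [dif_pos hex]
  exact hex.choose_spec

lemma Good.isMid_unique (hG : Good S ε) {x y m n : S} (h : dist x y < ε) (hm : IsMid x y m)
    (hn : IsMid x y n) : m = n := by
  have hd : 0 ≤ dist x y := dist_nonneg
  have h1 := hG.cn x y n m h (by rw [dist_comm, hn.1]; linarith) (by rw [dist_comm, hn.2]; linarith)
    hm
  rw [dist_comm n x, dist_comm n y, hn.1, hn.2] at h1
  have h2 : dist n m ^ 2 = 0 := le_antisymm (by nlinarith) (sq_nonneg _)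
  exact (dist_eq_zero.1 (pow_eq_zero_iff two_ne_zero |>.1 h2)).symm

lemma Good.mid_eq (hG : Good S ε) {x y m : S} (h : dist x y < ε) (hm : IsMid x y m) :
    mid x y = m := hG.isMid_unique h (hG.isMid_mid h) hm

lemma Good.mid_contract (hG : Good S ε) {a b c m n : S} (hab : dist a b < ε / 2)
    (hac : dist a c < ε / 2) (hbc : dist b c < ε / 2) (hm : IsMid a b m) (hn : IsMid a c n) :
    dist m n ≤ dist b c / 2 := by
  have hε := hG.pos
  have h1 : dist m a = dist a b / 2 := by rw [dist_comm, hm.1]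
  have h2 : dist m c < ε := by
    have := dist_triangle m a c
    linarith [dist_nonneg (x := a) (y := b)]
  have h3 := hG.cn a c m n (by linarith) (by rw [h1]; linarith) h2 hn
  have h4 := hG.cn a b c m (by linarith) (by rw [dist_comm]; linarith) (by rw [dist_comm]; linarith)
    hm
  rw [dist_comm c m, dist_comm c a, dist_comm c b] at h4
  rw [h1] at h3
  rw [← sq_le_sq₀ dist_nonneg (by positivity)]
  nlinarith

/-- Convexity of the metric, for two segments at small distance. -/
lemma Good.mid_quad (hG : Good S ε) {a a' b b' m n : S} (h1 : dist a a' < ε / 2)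
    (h2 : dist b b' < ε / 2) (h3 : dist a b < ε / 2) (h4 : dist a' b' < ε / 2)
    (h5 : dist a b' < ε / 2) (hm : IsMid a a' m) (hn : IsMid b b' n) :
    dist m n ≤ (dist a b + dist a' b') / 2 := by
  have hε := hG.pos
  have hk := hG.isMid_mid (x := a) (y := b') (by linarith)
  have h6 := hG.mid_contract h1 h5 h4 hm hk
  have h7 := hG.mid_contract (a := b') (by rwa [dist_comm]) (by rwa [dist_comm]) h3 hk.symm hn.symm
  linarith [dist_triangle m (mid a b') n]

end Midpoints

/-! ### Curve shortening of chains -/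

section Chains

variable {S : Type} [MetricSpace S] {ε : ℝ} {N : ℕ} {A : ℝ} {x y : ℕ → S}

/-- All `N` steps of the chain `x` have length at most `A`. -/
def Fine (N : ℕ) (A : ℝ) (x : ℕ → S) : Prop := ∀ j < N, dist (x j) (x (j + 1)) ≤ A

/-- A discrete geodesic: each interior point is the midpoint of its neighbours. -/
def GeoChain (N : ℕ) (x : ℕ → S) : Prop := ∀ j, j + 1 < N → IsMid (x j) (x (j + 2)) (x (j + 1))

/-- One step of midpoint curve shortening with fixed endpoints `x 0` and `x N`. -/
def shorten (N : ℕ) (x : ℕ → S) (j : ℕ) : S :=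
  if 0 < j ∧ j < N then mid (x (j - 1)) (x (j + 1)) else x j

lemma shorten_zero : shorten N x 0 = x 0 := by simp [shorten]

lemma shorten_succ {j : ℕ} (h : j + 1 < N) : shorten N x (j + 1) = mid (x j) (x (j + 2)) := by
  simp [shorten, h]

lemma shorten_of_le {j : ℕ} (h : N ≤ j) : shorten N x j = x j := by
  simp [shorten, h]

lemma Fine.two (hx : Fine N A x) {j : ℕ} (h : j + 1 < N) : dist (x j) (x (j + 2)) ≤ 2 * A := by
  linarith [dist_triangle (x j) (x (j + 1)) (x (j + 2)), hx j (by omega), hx (j + 1) h]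

lemma Fine.isMid (hG : Good S ε) (hA : A ≤ ε / 16) (hx : Fine N A x) {j : ℕ} (h : j + 1 < N) :
    IsMid (x j) (x (j + 2)) (shorten N x (j + 1)) := by
  rw [shorten_succ h]
  exact hG.isMid_mid (by linarith [hx.two h, hG.pos])

/-- The shortened steps, in terms of the old ones. The indices `j - 1` (truncated) and
`min (j + 1) (N - 1)` take care of the two end steps. -/
lemma Fine.shorten_step (hG : Good S ε) (hA : A ≤ ε / 16) (hx : Fine N A x) {j : ℕ} (h : j < N) :
    dist (shorten N x j) (shorten N x (j + 1)) ≤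
      (dist (x (j - 1)) (x (j - 1 + 1)) +
        dist (x (min (j + 1) (N - 1))) (x (min (j + 1) (N - 1) + 1))) / 2 := by
  have hε := hG.pos
  rcases Nat.eq_zero_or_pos j with rfl | hj
  · rw [shorten_zero]
    by_cases h1 : 1 < N
    · rw [min_eq_left (by omega)]
      have := (hx.isMid hG hA (j := 0) h1).1
      simp only [zero_add, zero_tsub] at this ⊢
      rw [this]
      linarith [dist_triangle (x 0) (x 1) (x 2)]
    · have : N = 1 := by omega
      subst this
      rw [shorten_of_le (by omega)]
      simp
  · obtain ⟨i, rfl⟩ : ∃ i, j = i + 1 := ⟨j - 1, by omega⟩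
    simp only [Nat.add_sub_cancel]
    by_cases h1 : i + 2 < N
    · rw [min_eq_left (by omega)]
      have m1 := hx.isMid hG hA (j := i) h
      have m2 := hx.isMid hG hA (j := i + 1) h1
      have d1 := hx.two (j := i) h
      have d2 := hx.two (j := i + 1) h1
      have d3 := hx i (by omega)
      have d4 := hx (i + 2) h1
      have d5 := dist_triangle (x i) (x (i + 1)) (x (i + 3))
      exact hG.mid_quad (by linarith) (by linarith) (by linarith) (by linarith) (by linarith) m1 m2
    · have : N = i + 2 := by omega
      subst this
      rw [shorten_of_le (by omega : i + 2 ≤ i + 1 + 1), min_eq_right (by omega)]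
      have := (hx.isMid hG hA (j := i) h).2
      rw [dist_comm, this]
      simp only [show i + 2 - 1 = i + 1 by omega]
      linarith [dist_triangle (x i) (x (i + 1)) (x (i + 2))]

lemma Fine.shorten (hG : Good S ε) (hA : A ≤ ε / 16) (hx : Fine N A x) :
    Fine N A (shorten N x) := by
  intro j hj
  have h1 := hx.shorten_step hG hA hj
  have h2 := hx (j - 1) (by omega)
  have h3 := hx (min (j + 1) (N - 1)) (by omega)
  linarith

/-- The length of a chain. -/
def chainLen (N : ℕ) (x : ℕ → S) : ℝ := ∑ j ∈ Finset.range N, dist (x j) (x (j + 1))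

lemma sum_shift_le (s : ℕ → ℝ) (N : ℕ) :
    ∑ j ∈ Finset.range N, (s (j - 1) + s (min (j + 1) (N - 1))) / 2 =
      ∑ j ∈ Finset.range N, s j := by
  cases N with
  | zero => simp
  | succ M =>
    rw [← Finset.sum_div, Finset.sum_add_distrib]
    have h1 : ∑ j ∈ Finset.range (M + 1), s (j - 1) = ∑ j ∈ Finset.range M, s j + s 0 := by
      rw [Finset.sum_range_succ']; simp
    have h2 : ∑ j ∈ Finset.range (M + 1), s (min (j + 1) (M + 1 - 1)) =
        ∑ j ∈ Finset.range M, s (j + 1) + s M := by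
      rw [Finset.sum_range_succ]
      congr 1
      · apply Finset.sum_congr rfl
        intro j hj
        rw [Finset.mem_range] at hj
        rw [min_eq_left (by omega)]
      · simp
    have h3 := Finset.sum_range_succ s M
    have h4 := Finset.sum_range_succ' s M
    rw [h1, h2]
    linarith

lemma Fine.chainLen_shorten_le (hG : Good S ε) (hA : A ≤ ε / 16) (hx : Fine N A x) :
    chainLen N (ESCSPaper.shorten N x) ≤ chainLen N x := by
  unfold chainLen
  rw [← sum_shift_le (fun j => dist (x j) (x (j + 1)))]
  apply Finset.sum_le_sum
  intro j hj
  exact hx.shorten_step hG hA (Finset.mem_range.1 hj)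

/-- Two fine chains at distance at most `ε / 8`: the distance function is subharmonic under
shortening. -/
lemma Fine.dist_shorten_le (hG : Good S ε) (hA : A ≤ ε / 16) (hx : Fine N A x) (hy : Fine N A y)
    (hxy : ∀ j ≤ N, dist (x j) (y j) ≤ ε / 8) {j : ℕ} (h : j + 1 < N) :
    dist (ESCSPaper.shorten N x (j + 1)) (ESCSPaper.shorten N y (j + 1)) ≤
      (dist (x j) (y j) + dist (x (j + 2)) (y (j + 2))) / 2 := by
  have hε := hG.pos
  have d1 := hx.two h
  have d2 := hy.two h
  have d3 := hxy j (by omega)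
  have d4 := hxy (j + 2) (by omega)
  have d5 := dist_triangle (x j) (y j) (y (j + 2))
  exact hG.mid_quad (by linarith) (by linarith) (by linarith) (by linarith) (by linarith)
    (hx.isMid hG hA h) (hy.isMid hG hA h)

lemma Fine.iterate (hG : Good S ε) (hA : A ≤ ε / 16) (hx : Fine N A x) (n : ℕ) :
    Fine N A ((ESCSPaper.shorten N)^[n] x) := by
  induction n with
  | zero => exact hx
  | succ n ih => rw [Function.iterate_succ_apply']; exact ih.shorten hG hA

lemma iterate_zero (n : ℕ) : ((shorten N)^[n] x) 0 = x 0 := by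
  induction n with
  | zero => rfl
  | succ n ih => rw [Function.iterate_succ_apply', shorten_zero, ih]

lemma iterate_of_le (n : ℕ) {j : ℕ} (h : N ≤ j) : ((shorten N)^[n] x) j = x j := by
  induction n with
  | zero => rfl
  | succ n ih => rw [Function.iterate_succ_apply', shorten_of_le h, ih]

/-- Comparison with a discretely superharmonic function. -/
lemma Fine.iterate_le (hG : Good S ε) (hA : A ≤ ε / 16) (hx : Fine N A x) (hy : Fine N A y)
    {φ : ℕ → ℕ → ℝ} (h0 : ∀ j ≤ N, dist (x j) (y j) ≤ φ 0 j) (hφ : ∀ n, ∀ j ≤ N, φ n j ≤ ε / 8)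
    (hφ0 : ∀ n, φ n 0 ≤ φ (n + 1) 0) (hφN : ∀ n, φ n N ≤ φ (n + 1) N)
    (hφ1 : ∀ n j, j + 1 < N → (φ n j + φ n (j + 2)) / 2 ≤ φ (n + 1) (j + 1)) (n : ℕ) :
    ∀ j ≤ N, dist ((ESCSPaper.shorten N)^[n] x j) ((ESCSPaper.shorten N)^[n] y j) ≤ φ n j := by
  induction n with
  | zero => exact h0
  | succ n ih =>
    intro j hj
    rw [Function.iterate_succ_apply', Function.iterate_succ_apply']
    rcases Nat.eq_zero_or_pos j with rfl | hj0
    · rw [shorten_zero, shorten_zero]; exact (ih 0 hj).trans (hφ0 n)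
    · rcases hj.eq_or_lt with rfl | hj1
      · rw [shorten_of_le le_rfl, shorten_of_le le_rfl]; exact (ih _ le_rfl).trans (hφN n)
      · obtain ⟨i, rfl⟩ : ∃ i, j = i + 1 := ⟨j - 1, by omega⟩
        have h1 := (hx.iterate hG hA n).dist_shorten_le hG hA (hy.iterate hG hA n)
          (fun j hj => (ih j hj).trans (hφ n j hj)) hj1
        have h2 := ih i (by omega)
        have h3 := ih (i + 2) (by omega)
        linarith [hφ1 n i hj1]

/-- Two close chains with the same endpoints approach each other geometrically fast under
shortening: `j (N - j)` is a barrier function. -/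
lemma Fine.iterate_decay (hG : Good S ε) (hA : A ≤ ε / 16) (hx : Fine N A x) (hy : Fine N A y)
    (h0 : x 0 = y 0) (hN : x N = y N) (hxy : ∀ j ≤ N, dist (x j) (y j) ≤ ε / 8) (n : ℕ) {j : ℕ}
    (hj : j ≤ N) :
    dist ((ESCSPaper.shorten N)^[n] x j) ((ESCSPaper.shorten N)^[n] y j) ≤
      ε / 8 * N ^ 2 * (1 - 1 / (N : ℝ) ^ 2) ^ n := by
  have hε := hG.pos
  rcases Nat.eq_zero_or_pos N with rfl | hNpos
  · obtain rfl : j = 0 := by omega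
    rw [iterate_zero, iterate_zero, h0]; simp
  have hN1 : (1 : ℝ) ≤ N := by exact_mod_cast hNpos
  set l : ℝ := 1 - 1 / (N : ℝ) ^ 2 with hl
  have hl2 : 1 / (N : ℝ) ^ 2 ≤ 1 := by
    rw [div_le_one (by positivity)]; nlinarith
  have hl0 : 0 ≤ l := by linarith
  have hl1 : l ≤ 1 := by
    have : 0 ≤ 1 / (N : ℝ) ^ 2 := by positivity
    linarith
  have hln : ∀ n, 0 ≤ l ^ n ∧ l ^ n ≤ 1 := fun n => ⟨pow_nonneg hl0 n, pow_le_one₀ hl0 hl1⟩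
  -- the bound `ε / 8` is carried along, to stay within the range where convexity holds
  have key := Fine.iterate_le hG hA hx hy
    (φ := fun n j => min (ε / 8) (ε / 8 * ((j : ℝ) * (N - j)) * l ^ n)) ?_ ?_ ?_ ?_ ?_ n j hj
  · refine key.trans ((min_le_right _ _).trans ?_)
    have hj' : (j : ℝ) ≤ N := by exact_mod_cast hj
    have : (j : ℝ) * (N - j) ≤ N ^ 2 := by nlinarith [(Nat.cast_nonneg j : (0 : ℝ) ≤ j)]
    have h1 := (hln n).1
    gcongr
  · intro j hj
    refine le_min (hxy j hj) ?_
    rcases Nat.eq_zero_or_pos j with rfl | hj0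
    · simp [h0]
    rcases hj.eq_or_lt with rfl | hj1
    · simp [hN]
    refine (hxy j hj).trans ?_
    have h1 : (1 : ℝ) ≤ j := by exact_mod_cast hj0
    have h2 : (j : ℝ) + 1 ≤ N := by exact_mod_cast hj1
    rw [pow_zero, mul_one]
    nlinarith [mul_nonneg (sub_nonneg.2 h1) (by linarith : (0 : ℝ) ≤ N - j - 1)]
  · intro n j _; exact min_le_left _ _
  · intro n; simp
  · intro n; simp
  · intro n j hj
    have hj' : (j : ℝ) + 1 + 1 ≤ N := by exact_mod_cast hj
    have hj0 : (0 : ℝ) ≤ j := Nat.cast_nonneg j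
    refine le_min ?_ ?_
    · have h1 := min_le_left (ε / 8) (ε / 8 * ((j : ℝ) * (N - j)) * l ^ n)
      have h2 := min_le_left (ε / 8) (ε / 8 * (((j + 2 : ℕ) : ℝ) * (N - (j + 2 : ℕ))) * l ^ n)
      linarith
    · have h1 := min_le_right (ε / 8) (ε / 8 * ((j : ℝ) * (N - j)) * l ^ n)
      have h2 := min_le_right (ε / 8) (ε / 8 * (((j + 2 : ℕ) : ℝ) * (N - (j + 2 : ℕ))) * l ^ n)
      have h3 : ε / 8 * ((j : ℝ) * (N - j)) * l ^ n +
          ε / 8 * (((j + 2 : ℕ) : ℝ) * (N - (j + 2 : ℕ))) * l ^ n =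
          2 * (ε / 8 * l ^ n * (((j : ℝ) + 1) * (N - (j + 1)) - 1)) := by
        push_cast; ring
      have h4 : ((j : ℝ) + 1) * (N - (j + 1)) - 1 ≤ ((j : ℝ) + 1) * (N - (j + 1)) * l := by
        rw [hl, mul_sub _ 1, mul_one]
        have : ((j : ℝ) + 1) * (N - (j + 1)) * (1 / (N : ℝ) ^ 2) ≤ 1 := by
          rw [mul_one_div, div_le_one (by positivity)]
          nlinarith
        linarith
      have h5 : ε / 8 * l ^ n * (((j : ℝ) + 1) * (N - (j + 1)) - 1) ≤
          ε / 8 * l ^ n * (((j : ℝ) + 1) * (N - (j + 1)) * l) :=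
        mul_le_mul_of_nonneg_left h4 (mul_nonneg (by linarith) (hln n).1)
      rw [pow_succ]
      push_cast at h1 h2 h3 h5 ⊢
      nlinarith

lemma decay_tendsto (ε : ℝ) (N : ℕ) (hN : 0 < N) :
    Tendsto (fun n : ℕ => ε / 8 * (N : ℝ) ^ 2 * (1 - 1 / (N : ℝ) ^ 2) ^ n) atTop (𝓝 0) := by
  have hN1 : (1 : ℝ) ≤ N := by exact_mod_cast hN
  have h2 : 1 / (N : ℝ) ^ 2 ≤ 1 := by
    rw [div_le_one (by positivity)]; nlinarith
  have h3 : 0 < 1 / (N : ℝ) ^ 2 := by positivity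
  have := tendsto_pow_atTop_nhds_zero_of_lt_one (r := 1 - 1 / (N : ℝ) ^ 2) (by linarith)
    (by linarith)
  simpa using this.const_mul (ε / 8 * (N : ℝ) ^ 2)

/-- The geodesic chain to which the chain `x` shortens. -/
def tighten (N : ℕ) (x : ℕ → S) (j : ℕ) : S :=
  @limUnder S _ ℕ ⟨x 0⟩ atTop (fun n => (shorten N)^[n] x j)

lemma Fine.tendsto [CompleteSpace S] (hG : Good S ε) (hA : A ≤ ε / 16) (hx : Fine N A x) {j : ℕ} :
    Tendsto (fun n => (ESCSPaper.shorten N)^[n] x j) atTop (𝓝 (tighten N x j)) := by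
  have hε := hG.pos
  suffices h : CauchySeq (fun n => (ESCSPaper.shorten N)^[n] x j) by
    have : Nonempty S := ⟨x 0⟩
    exact CauchySeq.tendsto_limUnder h
  by_cases hj : N ≤ j
  · simp only [iterate_of_le _ hj]; exact cauchySeq_const _
  push Not at hj
  have hN1 : (1 : ℝ) ≤ N := by exact_mod_cast (by omega : 1 ≤ N)
  have hs := hx.shorten hG hA
  refine cauchySeq_of_le_geometric (1 - 1 / (N : ℝ) ^ 2) (ε / 8 * N ^ 2) ?_ (fun n => ?_)
  · have : 0 < 1 / (N : ℝ) ^ 2 := by positivity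
    linarith
  · rw [Function.iterate_succ_apply]
    apply hx.iterate_decay hG hA hs shorten_zero.symm (shorten_of_le le_rfl).symm _ n hj.le
    intro i hi
    rcases Nat.eq_zero_or_pos i with rfl | hi0
    · rw [shorten_zero, dist_self]; positivity
    rcases hi.eq_or_lt with rfl | hi1
    · rw [shorten_of_le le_rfl, dist_self]; positivity
    obtain ⟨k, rfl⟩ : ∃ k, i = k + 1 := ⟨i - 1, by omega⟩
    have h1 := (hx.isMid hG hA hi1).1
    have h2 := dist_triangle (x (k + 1)) (x k) (ESCSPaper.shorten N x (k + 1))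
    have h3 := hx.two hi1
    have h4 := hx k (by omega)
    rw [dist_comm (x (k + 1)) (x k)] at h2
    linarith

section Tighten
variable [CompleteSpace S]

lemma Fine.tighten_zero (hG : Good S ε) (hA : A ≤ ε / 16) (hx : Fine N A x) :
    tighten N x 0 = x 0 := by
  have := hx.tendsto hG hA (j := 0)
  simp only [iterate_zero] at this
  exact (tendsto_nhds_unique this tendsto_const_nhds)

lemma Fine.tighten_last (hG : Good S ε) (hA : A ≤ ε / 16) (hx : Fine N A x) :
    tighten N x N = x N := by
  have := hx.tendsto hG hA (j := N)
  simp only [iterate_of_le _ le_rfl] at this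
  exact (tendsto_nhds_unique this tendsto_const_nhds)

lemma Fine.tighten (hG : Good S ε) (hA : A ≤ ε / 16) (hx : Fine N A x) :
    Fine N A (tighten N x) := fun j hj =>
  le_of_tendsto' ((hx.tendsto hG hA).dist (hx.tendsto hG hA)) fun n => hx.iterate hG hA n j hj

lemma Fine.geoChain_tighten (hG : Good S ε) (hA : A ≤ ε / 16) (hx : Fine N A x) :
    GeoChain N (ESCSPaper.tighten N x) := by
  intro j hj
  have h0 := hx.tendsto hG hA (j := j)
  have h1 := hx.tendsto hG hA (j := j + 2)
  have h2 := (tendsto_add_atTop_iff_nat 1).2 (hx.tendsto hG hA (j := j + 1))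
  have hm : ∀ n, IsMid ((ESCSPaper.shorten N)^[n] x j) ((ESCSPaper.shorten N)^[n] x (j + 2))
      ((ESCSPaper.shorten N)^[n + 1] x (j + 1)) := by
    intro n
    rw [Function.iterate_succ_apply']
    exact (hx.iterate hG hA n).isMid hG hA hj
  constructor
  · refine tendsto_nhds_unique (h0.dist h2) ?_
    simp only [fun n => (hm n).1]
    exact (h0.dist h1).div_const 2
  · refine tendsto_nhds_unique (h1.dist h2) ?_
    simp only [fun n => (hm n).2]
    exact (h0.dist h1).div_const 2

lemma Fine.dist_tighten_le (hG : Good S ε) (hA : A ≤ ε / 16) (hx : Fine N A x) (hy : Fine N A y)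
    {φ : ℕ → ℝ} (h0 : ∀ j ≤ N, dist (x j) (y j) ≤ φ j) (hφ : ∀ j ≤ N, φ j ≤ ε / 8)
    (hφ1 : ∀ j, j + 1 < N → (φ j + φ (j + 2)) / 2 ≤ φ (j + 1)) {j : ℕ} (hj : j ≤ N) :
    dist (ESCSPaper.tighten N x j) (ESCSPaper.tighten N y j) ≤ φ j :=
  le_of_tendsto' ((hx.tendsto hG hA).dist (hy.tendsto hG hA)) fun n =>
    Fine.iterate_le hG hA hx hy (φ := fun _ => φ) h0 (fun _ => hφ) (fun _ => le_rfl)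
      (fun _ => le_rfl) (fun _ => hφ1) n j hj

lemma Fine.tighten_congr (hG : Good S ε) (hA : A ≤ ε / 16) (hx : Fine N A x) (hy : Fine N A y)
    (h0 : x 0 = y 0) (hN : x N = y N) (hxy : ∀ j ≤ N, dist (x j) (y j) ≤ ε / 8) {j : ℕ}
    (hj : j ≤ N) : ESCSPaper.tighten N x j = ESCSPaper.tighten N y j := by
  rcases Nat.eq_zero_or_pos N with rfl | hNpos
  · obtain rfl : j = 0 := by omega
    rw [hx.tighten_zero hG hA, hy.tighten_zero hG hA, h0]
  apply dist_le_zero.1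
  exact le_of_tendsto_of_tendsto' ((hx.tendsto hG hA).dist (hy.tendsto hG hA))
    (decay_tendsto ε N hNpos) fun n => hx.iterate_decay hG hA hy h0 hN hxy n hj

lemma GeoChain.tighten_eq (hG : Good S ε) (hA : A ≤ ε / 16) (hx : Fine N A x)
    (h : GeoChain N x) : ESCSPaper.tighten N x = x := by
  have h1 : ESCSPaper.shorten N x = x := by
    funext j
    unfold ESCSPaper.shorten
    split_ifs with hj
    · obtain ⟨i, rfl⟩ : ∃ i, j = i + 1 := ⟨j - 1, by omega⟩
      exact hG.mid_eq (by simpa using by linarith [hx.two hj.2, hG.pos]) (h i hj.2)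
    · rfl
  funext j
  refine tendsto_nhds_unique (hx.tendsto hG hA (j := j)) ?_
  simp only [Function.iterate_fixed h1]
  exact tendsto_const_nhds

lemma Fine.chainLen_tighten_le (hG : Good S ε) (hA : A ≤ ε / 16) (hx : Fine N A x) :
    chainLen N (ESCSPaper.tighten N x) ≤ chainLen N x := by
  refine le_of_tendsto' (f := fun n => chainLen N ((ESCSPaper.shorten N)^[n] x))
    (tendsto_finsetSum _ fun j _ => (hx.tendsto hG hA).dist (hx.tendsto hG hA)) fun n => ?_
  induction n with
  | zero => exact le_rfl
  | succ n ih =>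
    rw [Function.iterate_succ_apply']
    exact ((hx.iterate hG hA n).chainLen_shorten_le hG hA).trans ih

end Tighten

lemma GeoChain.step_eq (h : GeoChain N x) {j : ℕ} (hj : j < N) :
    dist (x j) (x (j + 1)) = dist (x 0) (x 1) := by
  induction j with
  | zero => rfl
  | succ j ih =>
    rw [← ih (by omega), (h j hj).1, dist_comm, (h j hj).2]

/-- Two close geodesic chains with the same endpoints agree. -/
lemma GeoChain.unique (hG : Good S ε) (hA : A ≤ ε / 16) (hx : Fine N A x) (hy : Fine N A y)
    (hgx : GeoChain N x) (hgy : GeoChain N y)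
    (h0 : x 0 = y 0) (hN : x N = y N) (hxy : ∀ j ≤ N, dist (x j) (y j) ≤ ε / 8) {j : ℕ}
    (hj : j ≤ N) [CompleteSpace S] : x j = y j := by
  have := hx.tighten_congr hG hA hy h0 hN hxy hj
  rwa [hgx.tighten_eq hG hA hx, hgy.tighten_eq hG hA hy] at this

end Chains

/-! ### Rigidity of closed geodesics with an excess angle -/

/-- A continuous periodic function which is locally midpoint convex is constant. -/
lemma const_of_periodic_convex {φ : ℝ → ℝ} (hc : Continuous φ) {T : ℝ} (hT : 0 < T)
    (hp : Function.Periodic φ T)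
    (hconv : ∀ s, ∃ r > 0, ∀ t, 0 < t → t < r → φ s ≤ (φ (s - t) + φ (s + t)) / 2) (s s' : ℝ) :
    φ s = φ s' := by
  obtain ⟨s0, -, hs0⟩ := isCompact_Icc.exists_isMaxOn (nonempty_Icc.2 hT.le)
    (hc.continuousOn (s := Icc 0 T))
  have hmax : ∀ s, φ s ≤ φ s0 := by
    intro s
    obtain ⟨y, hy, hy2⟩ := hp.exists_mem_Ico₀ hT s
    rw [hy2]; exact hs0 ⟨hy.1, hy.2.le⟩
  have hcl : IsClopen {s | φ s = φ s0} := by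
    refine ⟨isClosed_eq hc continuous_const, ?_⟩
    rw [Metric.isOpen_iff]
    intro s hs
    obtain ⟨r, hr, h⟩ := hconv s
    refine ⟨r, hr, fun u hu => ?_⟩
    change φ u = φ s0
    have hs : φ s = φ s0 := hs
    rw [mem_ball, Real.dist_eq] at hu
    rcases lt_trichotomy u s with h1 | h1 | h1
    · rw [abs_of_neg (by linarith)] at hu
      have := h (s - u) (by linarith) (by linarith)
      rw [show s - (s - u) = u by ring] at this
      linarith [hmax u, hmax (s + (s - u))]
    · rw [h1, hs]
    · rw [abs_of_pos (by linarith)] at hu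
      have := h (u - s) (by linarith) (by linarith)
      rw [show s + (u - s) = u by ring] at this
      linarith [hmax u, hmax (s - (u - s))]
  have := hcl.eq_univ ⟨s0, rfl⟩
  have h1 : s ∈ {s | φ s = φ s0} := this ▸ mem_univ s
  have h2 : s' ∈ {s | φ s = φ s0} := this ▸ mem_univ s'
  exact h1.trans h2.symm

/-- `g` is isometric on all windows of length `k`. -/
def WindowIsom {S : Type} [MetricSpace S] (g : ℝ → S) (k : ℝ) : Prop :=
  ∀ s u, |s - u| ≤ k → dist (g s) (g u) = |s - u|

/-- A rigidity property of `g` at the time `t₀`, which holds if `g` passes through a conical point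
making an angle larger than `π` on both sides: a geodesic segment from `b` to `b'` which is
parallel to `g` on `[t₀ - t, t₀ + t]` at distance `δ` lies on `g`. -/
def VertexRigid {S : Type} [MetricSpace S] (g : ℝ → S) (t₀ : ℝ) : Prop :=
  ∃ ρ > 0, ∀ t δ, 0 < t → t < δ → δ < ρ → ∀ b b' m, dist (g (t₀ - t)) b = δ →
    dist (g (t₀ + t)) b' = δ → IsMid b b' m → dist (g t₀) m = δ →
    m = g (t₀ + δ) ∨ m = g (t₀ - δ)

section Rigidity

variable {S : Type} [MetricSpace S] {ε : ℝ} {N : ℕ}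

lemma isMid_of_dist_eq {g : ℝ → S} {s r : ℝ} (hr : 0 ≤ r)
    (h1 : dist (g (s - r)) (g (s + r)) = |s - r - (s + r)|)
    (h2 : dist (g (s - r)) (g s) = |s - r - s|) (h3 : dist (g (s + r)) (g s) = |s + r - s|) :
    IsMid (g (s - r)) (g (s + r)) (g s) := by
  rw [abs_of_nonpos (by linarith)] at h1 h2
  rw [abs_of_nonneg (by linarith)] at h3
  constructor
  · rw [h1, h2]; ring
  · rw [h1, h3]; ring

lemma WindowIsom.isMid {g : ℝ → S} {k : ℝ} (h : WindowIsom g k) {s r : ℝ} (hr : 0 ≤ r)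
    (hr2 : 2 * r ≤ k) : IsMid (g (s - r)) (g (s + r)) (g s) := by
  apply isMid_of_dist_eq hr <;> apply h <;> rw [abs_le] <;> constructor <;> linarith

lemma IsLocalGeodesic.isMid {g : ℝ → S} (h : IsLocalGeodesic g) (s : ℝ) :
    ∃ r0 > 0, ∀ r, 0 ≤ r → r < r0 → IsMid (g (s - r)) (g (s + r)) (g s) := by
  obtain ⟨r0, hr0, h⟩ := h s
  refine ⟨r0, hr0, fun r hr hr2 => ?_⟩
  apply isMid_of_dist_eq hr <;> apply h <;> rw [abs_lt] <;> constructor <;> linarith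

/-- A chain which is close to a geodesic chain, has the same endpoints and no longer steps,
agrees with it. -/
lemma GeoChain.eq_of_step_le [CompleteSpace S] (hG : Good S ε) {x y : ℕ → S} {δ : ℝ}
    (hδ : δ ≤ ε / 32)
    (hx : GeoChain N x) (hxδ : ∀ j < N, dist (x j) (x (j + 1)) = δ) (hy : Fine N δ y)
    (h0 : x 0 = y 0) (hN : x N = y N) (hxy : ∀ j ≤ N, dist (x j) (y j) ≤ ε / 16) {j : ℕ}
    (hj : j ≤ N) : x j = y j := by
  have hε := hG.pos
  have hxf : Fine N δ x := fun j hj => (hxδ j hj).le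
  have hδ' : δ ≤ ε / 16 := by linarith
  refine GeoChain.unique hG hδ' hxf hy hx ?_ h0 hN (fun j hj => by linarith [hxy j hj]) hj
  intro i hi
  by_contra hcon
  have s1 := hy i (by omega)
  have s2 := hy (i + 1) hi
  have hlt : dist (y i) (y (i + 2)) < 2 * δ := by
    by_contra h
    push Not at h
    have h1 := dist_triangle (y i) (y (i + 1)) (y (i + 2))
    apply hcon
    have s3 : dist (y (i + 1)) (y (i + 2)) ≤ δ := s2
    constructor
    · linarith
    · rw [dist_comm]; linarith
  have hm := hG.isMid_mid (x := y i) (y := y (i + 2)) (by linarith)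
  set m := mid (y i) (y (i + 2))
  set y' := Function.update y (i + 1) m with hy'
  have y'1 : y' (i + 1) = m := by simp [hy']
  have y'2 : ∀ k, k ≠ i + 1 → y' k = y k := fun k hk => by simp [hy', hk]
  have hstep : ∀ k < N, dist (y' k) (y' (k + 1)) ≤ δ := by
    intro k hk
    by_cases hk1 : k = i
    · subst hk1
      rw [y'1, y'2 k (by omega), hm.1]; linarith
    by_cases hk2 : k = i + 1
    · subst hk2
      rw [y'1, y'2 _ (by omega), dist_comm]
      have := hm.2
      have h3 : dist (y (i + 1 + 1)) m = dist (y i) (y (i + 2)) / 2 := hm.2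
      rw [h3]; linarith
    rw [y'2 k hk2, y'2 (k + 1) (by omega)]
    exact hy k hk
  have hclose : ∀ k ≤ N, dist (x k) (y' k) ≤ ε / 8 := by
    intro k hk
    by_cases hk2 : k = i + 1
    · subst hk2
      rw [y'1]
      have h1 := hxy (i + 1) hk
      have h2 := dist_triangle (x (i + 1)) (y (i + 1)) m
      have h3 := dist_triangle (y (i + 1)) (y i) m
      rw [hm.1, dist_comm (y (i + 1)) (y i)] at h3
      linarith
    · rw [y'2 k hk2]; linarith [hxy k hk]
  have heq := fun k hk => hxf.tighten_congr hG hδ' (y := y') hstep (by rw [h0, y'2 0 (by omega)])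
    (by rw [hN, y'2 N (by omega)]) hclose (j := k) hk
  rw [hx.tighten_eq hG hδ' hxf] at heq
  have hlen := Fine.chainLen_tighten_le (N := N) (x := y') hG hδ' hstep
  have hlen2 : chainLen N (tighten N y') = N * δ := by
    unfold chainLen
    rw [Finset.sum_congr rfl (g := fun _ => δ)]
    · simp
    · intro k hk
      rw [Finset.mem_range] at hk
      rw [← heq k hk.le, ← heq (k + 1) hk, hxδ k hk]
  have hlen3 : chainLen N y' < N * δ := by
    unfold chainLen
    have : ∑ k ∈ Finset.range N, dist (y' k) (y' (k + 1)) < ∑ k ∈ Finset.range N, δ := by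
      refine Finset.sum_lt_sum (fun k hk => hstep k (Finset.mem_range.1 hk))
        ⟨i, Finset.mem_range.2 (by omega), ?_⟩
      rw [y'1, y'2 i (by omega), hm.1]; linarith
    simpa using this
  linarith

/-- If two closed geodesics are joined by a fine homotopy through chains, they bound an annulus of
parallel geodesics; the rigidity at one point of `g` forces all of these to be translates
of `g`. -/
lemma rigidity_of_chain [CompleteSpace S] (hG : Good S ε) {g h : ℝ → S} {k T₁ T₂ t₀ : ℝ}
    (hk : 0 < k)
    (hg : WindowIsom g k) (hh : IsLocalGeodesic h) (hT₁ : 0 < T₁) (hT₂ : 0 < T₂)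
    (hgp : Function.Periodic g T₁) {ρ : ℝ}
    (hρ : ∀ t δ, 0 < t → t < δ → δ < ρ → ∀ b b' m, dist (g (t₀ - t)) b = δ →
      dist (g (t₀ + t)) b' = δ → IsMid b b' m → dist (g t₀) m = δ →
      m = g (t₀ + δ) ∨ m = g (t₀ - δ))
    {A : ℝ} (hA : A ≤ ε / 32) (hAk : A ≤ k) (hAρ : A < ρ) (hN0 : 0 < N)
    (f : ℕ → ℝ → S) (hfc : ∀ j, Continuous (f j)) (hfp : ∀ j, Function.Periodic (f j) 1)
    (hf0 : ∀ s, f 0 s = g (T₁ * s)) (hfN : ∀ s, f N s = h (T₂ * s))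
    (hfine : ∀ s, Fine N A (fun j => f j s)) :
    ∃ a, ∀ s, h (T₂ * s) = g (T₁ * s + a) := by
  have hε := hG.pos
  have hA' : A ≤ ε / 16 := by linarith
  set c : ℕ → ℝ → S := fun j s => tighten N (fun j => f j s) j with hc
  have c0 : ∀ s, c 0 s = g (T₁ * s) := fun s => by
    rw [← hf0]; exact (hfine s).tighten_zero hG hA'
  have cN : ∀ s, c N s = h (T₂ * s) := fun s => by
    rw [← hfN]; exact (hfine s).tighten_last hG hA'
  have cgeo : ∀ s, GeoChain N (fun j => c j s) := fun s => (hfine s).geoChain_tighten hG hA'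
  have cfine : ∀ s, Fine N A (fun j => c j s) := fun s => (hfine s).tighten hG hA'
  have cper : ∀ j, Function.Periodic (c j) 1 := by
    intro j s
    simp only [hc]
    congr 1
    funext i
    exact hfp i s
  have ccont : ∀ j ≤ N, Continuous (c j) := by
    intro j hj
    rw [continuous_iff_continuousAt]
    intro s
    rw [Metric.continuousAt_iff']
    intro η hη
    have h1 : ∀ᶠ s' in 𝓝 s, ∀ i ∈ Finset.range (N + 1),
        dist (f i s') (f i s) < min (η / 2) (ε / 8) := by
      rw [Filter.eventually_all_finset]
      intro i _
      exact Metric.continuousAt_iff'.1 ((hfc i).continuousAt) _ (by positivity)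
    filter_upwards [h1] with s' hs'
    have h2 := (hfine s').dist_tighten_le hG hA' (hfine s) (φ := fun _ => min (η / 2) (ε / 8))
      (fun i hi => (hs' i (Finset.mem_range.2 (by omega))).le) (fun _ _ => min_le_right _ _)
      (fun _ _ => by linarith) hj
    exact (h2.trans (min_le_left _ _)).trans_lt (by linarith)
  have gcont : Continuous g := by
    rw [Metric.continuous_iff]
    intro t η hη
    refine ⟨min η k, by positivity, fun t' ht => ?_⟩
    rw [Real.dist_eq] at ht
    rw [hg _ _ (ht.le.trans (min_le_right _ _))]
    exact ht.trans_le (min_le_left _ _)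
  -- for fixed `s` and small `r`, the points `c j s` and `c j (s ± r)` are close to each other
  have hnear : ∀ s, ∃ r0 > 0, ∀ r, 0 ≤ r → r < r0 → ∀ j ≤ N,
      dist (c j (s - r)) (c j s) ≤ ε / 48 ∧ dist (c j (s + r)) (c j s) ≤ ε / 48 := by
    intro s
    have h1 : ∀ᶠ s' in 𝓝 s, ∀ i ∈ Finset.range (N + 1), dist (c i s') (c i s) < ε / 48 := by
      rw [Filter.eventually_all_finset]
      intro i hi
      rw [Finset.mem_range] at hi
      exact Metric.continuousAt_iff'.1 ((ccont i (by omega)).continuousAt) _ (by positivity)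
    obtain ⟨r0, hr0, h2⟩ := Metric.eventually_nhds_iff.1 h1
    refine ⟨r0, hr0, fun r hr hr2 j hj => ⟨(h2 ?_ j (Finset.mem_range.2 (by omega))).le,
      (h2 ?_ j (Finset.mem_range.2 (by omega))).le⟩⟩
    · rw [Real.dist_eq, abs_of_nonpos (by linarith)]; linarith
    · rw [Real.dist_eq, abs_of_nonneg (by linarith)]; linarith
  set step : ℝ → ℝ := fun s => dist (c 0 s) (c 1 s) with hstep
  have hstepj : ∀ s, ∀ j < N, dist (c j s) (c (j + 1) s) = step s := fun s j hj =>
    (cgeo s).step_eq hj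
  -- the chain of midpoints of `c j (s - r)` and `c j (s + r)`
  have hmid : ∀ s, ∃ r0 > 0, ∀ r, 0 ≤ r → r < r0 → ∃ y : ℕ → S,
      (∀ j ≤ N, IsMid (c j (s - r)) (c j (s + r)) (y j)) ∧ y 0 = c 0 s ∧ y N = c N s ∧
      Fine N ((step (s - r) + step (s + r)) / 2) y ∧ ∀ j ≤ N, dist (c j s) (y j) ≤ ε / 16 := by
    intro s
    obtain ⟨r1, hr1, h1⟩ := hnear s
    obtain ⟨r2, hr2, h2⟩ := hh.isMid (T₂ * s)
    refine ⟨min r1 (min (r2 / T₂) (k / (2 * T₁))), by positivity, fun r hr hrr => ?_⟩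
    simp only [lt_min_iff] at hrr
    obtain ⟨h3, h4, h5⟩ := hrr
    rw [lt_div_iff₀ hT₂] at h4
    rw [lt_div_iff₀ (by positivity)] at h5
    have hd : ∀ j ≤ N, dist (c j (s - r)) (c j (s + r)) ≤ ε / 24 := by
      intro j hj
      obtain ⟨h6, h7⟩ := h1 r hr h3 j hj
      have := dist_triangle_right (c j (s - r)) (c j (s + r)) (c j s)
      linarith
    have hm : ∀ j ≤ N, IsMid (c j (s - r)) (c j (s + r)) (mid (c j (s - r)) (c j (s + r))) :=
      fun j hj => hG.isMid_mid (by linarith [hd j hj])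
    refine ⟨fun j => mid (c j (s - r)) (c j (s + r)), hm, ?_, ?_, ?_, ?_⟩
    · apply hG.mid_eq (by linarith [hd 0 (by omega)])
      rw [c0, c0, c0, mul_sub, mul_add]
      exact hg.isMid (by positivity) (by linarith)
    · apply hG.mid_eq (by linarith [hd N le_rfl])
      rw [cN, cN, cN, mul_sub, mul_add]
      exact h2 _ (by positivity) (by linarith)
    · intro j hj
      have e1 := hd j hj.le
      have e2 := hd (j + 1) hj
      have e3 := cfine (s - r) j hj
      have e4 := cfine (s + r) j hj
      rw [← hstepj (s - r) j hj, ← hstepj (s + r) j hj]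
      have e5 := dist_triangle (c j (s - r)) (c j (s + r)) (c (j + 1) (s + r))
      simp only at e3 e4
      exact hG.mid_quad (by linarith) (by linarith) (by linarith) (by linarith) (by linarith)
        (hm j hj.le) (hm (j + 1) hj)
    · intro j hj
      obtain ⟨h6, h7⟩ := h1 r hr h3 j hj
      have e1 := (hm j hj).1
      have e2 := hd j hj
      have e3 := dist_triangle (c j s) (c j (s - r)) (mid (c j (s - r)) (c j (s + r)))
      rw [dist_comm] at h6
      linarith
  have hstepA : ∀ s, step s ≤ A := fun s => cfine s 0 hN0
  have hconst : ∀ s s', step s = step s' := by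
    apply const_of_periodic_convex ((ccont 0 (by omega)).dist (ccont 1 (by omega))) one_pos
    · intro s; simp only [cper 0 s, cper 1 s]
    · intro s
      obtain ⟨r0, hr0, h1⟩ := hmid s
      refine ⟨r0, hr0, fun r hr hr2 => ?_⟩
      obtain ⟨y, hy1, hy0, hyN, hyf, hyc⟩ := h1 r hr.le hr2
      have hle : (step (s - r) + step (s + r)) / 2 ≤ ε / 16 := by
        linarith [hstepA (s - r), hstepA (s + r)]
      have hyfA : Fine N A y := fun j hj => (hyf j hj).trans
        (by linarith [hstepA (s - r), hstepA (s + r)])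
      have e1 := fun j hj => (cfine s).tighten_congr hG hA' hyfA hy0.symm hyN.symm
        (fun j hj => by linarith [hyc j hj]) (j := j) hj
      rw [(cgeo s).tighten_eq hG hA' (cfine s)] at e1
      have e2 := hyf.tighten hG hle 0 hN0
      rw [← e1 0 (by omega), ← e1 (0 + 1) hN0] at e2
      exact e2
  set δ := step 0 with hδ
  have hδA : δ ≤ A := hstepA 0
  have hsδ : ∀ s, step s = δ := fun s => hconst s 0
  have hM : ∀ s, ∃ r0 > 0, ∀ r, 0 ≤ r → r < r0 → ∀ j ≤ N,
      IsMid (c j (s - r)) (c j (s + r)) (c j s) := by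
    intro s
    obtain ⟨r0, hr0, h1⟩ := hmid s
    refine ⟨r0, hr0, fun r hr hr2 j hj => ?_⟩
    obtain ⟨y, hy1, hy0, hyN, hyf, hyc⟩ := h1 r hr hr2
    rw [hsδ, hsδ, add_self_div_two] at hyf
    have := (cgeo s).eq_of_step_le hG (by linarith) (fun j hj => (hstepj s j hj).trans (hsδ s)) hyf
      hy0.symm hyN.symm hyc hj
    rw [this]
    exact hy1 j hj
  have hδ0 : 0 ≤ δ := dist_nonneg
  have hind : ∀ j ≤ N, ∃ a, ∀ s, c j s = g (T₁ * s + a) := by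
    intro j
    induction j with
    | zero => intro _; exact ⟨0, fun s => by rw [c0, add_zero]⟩
    | succ j ih =>
      intro hj
      obtain ⟨a, ha⟩ := ih (by omega)
      have hd : ∀ s, dist (c j s) (c (j + 1) s) = δ := fun s => (hstepj s j hj).trans (hsδ s)
      rcases hδ0.eq_or_lt with h0 | hpos
      · refine ⟨a, fun s => ?_⟩
        rw [← ha]
        have := hd s
        rw [← h0] at this
        exact (dist_eq_zero.1 this).symm
      set s0 := (t₀ - a) / T₁ with hs0
      have hs0' : T₁ * s0 + a = t₀ := by rw [hs0]; field_simp; ring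
      have hstart : ∃ d, |d| = δ ∧ c (j + 1) s0 = g (T₁ * s0 + (a + d)) := by
        obtain ⟨r0, hr0, h1⟩ := hM s0
        set r := min (r0 / 2) (min (δ / (2 * T₁)) (k / (2 * T₁))) with hr
        have hr1 : 0 < r := by positivity
        have hr2 : r < r0 := (min_le_left _ _).trans_lt (by linarith)
        have hr3 : T₁ * r < δ := by
          have : r ≤ δ / (2 * T₁) := (min_le_right _ _).trans (min_le_left _ _)
          rw [le_div_iff₀ (by positivity)] at this
          nlinarith
        have hr4 : r * (2 * T₁) ≤ k := by
          have : r ≤ k / (2 * T₁) := (min_le_right _ _).trans (min_le_right _ _)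
          rwa [le_div_iff₀ (by positivity)] at this
        have h2 := h1 r hr1.le hr2
        have h3 : T₁ * (s0 - r) + a = t₀ - T₁ * r := by rw [← hs0']; ring
        have h4 : T₁ * (s0 + r) + a = t₀ + T₁ * r := by rw [← hs0']; ring
        rcases hρ (T₁ * r) δ (by positivity) hr3 (by linarith) (c (j + 1) (s0 - r))
          (c (j + 1) (s0 + r)) (c (j + 1) s0) (by rw [← h3, ← ha, hd]) (by rw [← h4, ← ha, hd])
          (h2 _ hj) (by rw [← hs0', ← ha, hd]) with h6 | h6
        · exact ⟨δ, abs_of_pos hpos, by rw [h6, ← hs0', add_assoc]⟩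
        · exact ⟨-δ, by rw [abs_neg, abs_of_pos hpos], by rw [h6, ← hs0', ← add_assoc]; rfl⟩
      obtain ⟨d, hd1, hd2⟩ := hstart
      refine ⟨a + d, fun s => ?_⟩
      have hedge : ∀ s, dist (g (T₁ * s + (a + d))) (c (j + 1) s) ≤ 2 * δ := by
        intro s
        have h1 := dist_triangle (g (T₁ * s + (a + d))) (c j s) (c (j + 1) s)
        rw [hd, ha] at h1
        have e : T₁ * s + (a + d) - (T₁ * s + a) = d := by ring
        rw [hg _ _ (by rw [e, hd1]; linarith), e, hd1] at h1
        linarith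
      have hconst2 := const_of_periodic_convex
        (φ := fun s => dist (g (T₁ * s + (a + d))) (c (j + 1) s)) (T := 1)
        ((gcont.comp (by fun_prop)).dist (ccont _ hj)) one_pos ?_ ?_ s s0
      · simp only [hd2, dist_self] at hconst2
        exact (dist_eq_zero.1 hconst2).symm
      · intro s
        simp only [cper (j + 1) s]
        rw [show T₁ * (s + 1) + (a + d) = T₁ * s + (a + d) + T₁ by ring, hgp]
      · intro s
        obtain ⟨r0, hr0, h1⟩ := hM s
        refine ⟨min r0 (min (k / (2 * T₁)) (ε / (8 * T₁))), by positivity, fun r hr hr2 => ?_⟩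
        simp only [lt_min_iff] at hr2
        obtain ⟨h3, h4, h5⟩ := hr2
        rw [lt_div_iff₀ (by positivity)] at h4 h5
        have m1 := h1 r hr.le h3 (j + 1) hj
        have m2 := hg.isMid (s := T₁ * s + (a + d)) (r := T₁ * r) (by positivity) (by linarith)
        rw [show T₁ * s + (a + d) - T₁ * r = T₁ * (s - r) + (a + d) by ring,
          show T₁ * s + (a + d) + T₁ * r = T₁ * (s + r) + (a + d) by ring] at m2
        have e1 := hedge (s - r)
        have e2 := hedge (s + r)
        have e0 : |T₁ * (s - r) + (a + d) - (T₁ * (s + r) + (a + d))| = 2 * (T₁ * r) := by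
          rw [abs_of_nonpos (by nlinarith)]; ring
        have e3 : dist (g (T₁ * (s - r) + (a + d))) (g (T₁ * (s + r) + (a + d))) = 2 * (T₁ * r) := by
          rw [hg _ _ (by rw [e0]; linarith), e0]
        have e4 := dist_triangle (g (T₁ * (s - r) + (a + d))) (g (T₁ * (s + r) + (a + d)))
          (c (j + 1) (s + r))
        have e5 := dist_triangle4 (c (j + 1) (s - r)) (g (T₁ * (s - r) + (a + d)))
          (g (T₁ * (s + r) + (a + d))) (c (j + 1) (s + r))
        rw [dist_comm (c (j + 1) (s - r)) (g _)] at e5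
        exact hG.mid_quad (by linarith) (by linarith) (by linarith) (by linarith) (by linarith)
          m2 m1
  obtain ⟨a, ha⟩ := hind N le_rfl
  exact ⟨a, fun s => by rw [← cN, ha]⟩

end Rigidity

namespace IsConeChart

variable {S : Type} [MetricSpace S] {q : S} {θ ε : ℝ} {P : ℝ → ℝ → S}

lemma mid_unique (C : IsConeChart q θ ε P) {x y m n : S} (hx : dist q x < ε) (hy : dist q y < ε)
    (hm : dist q m < ε) (hn : dist q n < ε) (h : IsMid x y m) (h' : IsMid x y n) : m = n := by
  have h1 := C.cn hx hy hn hm h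
  rw [dist_comm n x, dist_comm n y, h'.1, h'.2] at h1
  have : dist n m ^ 2 ≤ 0 := by nlinarith
  have : dist n m = 0 := by nlinarith [sq_nonneg (dist n m)]
  exact (dist_eq_zero.1 this).symm

/-- If the direction of `b` makes an angle at least `π` with the direction of `P t τ`, then the
parallel segment `b b'` lies on the ray of direction `τ'`. -/
lemma parallel_on_ray (C : IsConeChart q θ ε P) {τ τ' t δ B B' φ φ' w : ℝ} {m : S}
    (ht : 0 < t) (htδ : t < δ) (hδ : δ + t < ε) (hB0 : 0 < B) (hB'0 : 0 < B') (hB : B < ε)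
    (hB' : B' < ε)
    (e2 : δ ^ 2 = t ^ 2 + B' ^ 2 - 2 * (t * B') * coneCos θ τ' φ')
    (ew : w ^ 2 = B ^ 2 + B' ^ 2 - 2 * (B * B') * coneCos θ φ φ') (hw : 0 ≤ w)
    (hK : 4 * t ^ 2 + w ^ 2 ≤ 4 * t * (B * coneCos θ τ φ + B' * coneCos θ τ' φ'))
    (hcap : Real.pi ≤ angDist θ τ φ) (hm : IsMid (P B φ) (P B' φ') m) (hqm : dist q m < ε) :
    m = P δ τ' := by
  rw [coneCos_eq_neg_one hcap] at hK
  have c1 := coneCos_le_one θ φ φ'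
  have c2 := coneCos_le_one θ τ' φ'
  have hwB : (B' - B) ^ 2 ≤ w ^ 2 := by nlinarith [mul_pos hB0 hB'0]
  have hwB2 : B' - B ≤ w := by
    by_contra h
    push Not at h
    nlinarith
  have hwK : w ≤ B * -1 + B' * coneCos θ τ' φ' := by
    have : 4 * t * w ≤ 4 * t * (B * -1 + B' * coneCos θ τ' φ') := by
      nlinarith [sq_nonneg (2 * t - w)]
    exact le_of_mul_le_mul_left this (by positivity)
  have hc : coneCos θ τ' φ' = 1 := by
    apply le_antisymm c2
    by_contra h
    push Not at h
    nlinarith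
  rw [hc] at e2 hK hwK
  have hw1 : w = B' - B := by linarith
  have hw2 : w = 2 * t := by
    have : (w - 2 * t) ^ 2 ≤ 0 := by rw [hw1] at hK ⊢; linarith
    nlinarith [sq_nonneg (w - 2 * t)]
  have hB'1 : B' = t + δ := by
    have h1 : (B' - t - δ) * (B' - t + δ) = 0 := by linarith
    rcases mul_eq_zero.1 h1 with h | h <;> linarith
  have hB1 : B = δ - t := by linarith
  have hc2 : coneCos θ φ φ' = 1 := by
    have : 2 * (B * B') * (1 - coneCos θ φ φ') = 0 := by rw [hw1] at ew; nlinarith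
    have h2 : 0 < 2 * (B * B') := by positivity
    rcases mul_eq_zero.1 this with h | h
    · linarith
    · linarith
  have a1 := angDist_eq_zero_of_coneCos hc
  have a2 := angDist_eq_zero_of_coneCos hc2
  have a3 : angDist θ φ τ' = 0 := by
    have := angDist_triangle C.period_pos φ φ' τ'
    rw [a2, angDist_comm θ φ', a1] at this
    exact le_antisymm (by linarith) (angDist_nonneg _ _ _)
  rw [angDist_comm] at a1
  have p1 := C.eq_of_angDist hB0.le hB a3
  have p2 := C.eq_of_angDist hB'0.le hB' a1
  rw [p1, p2] at hm
  refine C.mid_unique (x := P B τ') (y := P B' τ') ?_ ?_ hqm ?_ hm ?_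
  · rwa [C.dist_center _ hB0.le hB]
  · rwa [C.dist_center _ hB'0.le hB']
  · rw [C.dist_center _ (by linarith) (by linarith)]; linarith
  · constructor
    · rw [C.dist_same hB0.le hB (by linarith) (by linarith), C.dist_same hB0.le hB hB'0.le hB',
        abs_of_nonpos (by linarith), abs_of_nonpos (by linarith)]
      linarith
    · rw [C.dist_same hB'0.le hB' (by linarith) (by linarith), C.dist_same hB0.le hB hB'0.le hB',
        abs_of_nonneg (by linarith), abs_of_nonpos (by linarith)]
      linarith

set_option maxHeartbeats 800000 in
/-- A geodesic passing through the apex with angles larger than `π` on both sides is rigid. -/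
lemma vertexRigid (C : IsConeChart q θ ε P) {g : ℝ → S} {t₀ τ τ' ρ : ℝ} (hρ : 0 < ρ)
    (h1 : ∀ t, 0 ≤ t → t < ρ → g (t₀ - t) = P t τ) (h2 : ∀ t, 0 ≤ t → t < ρ → g (t₀ + t) = P t τ')
    (hang : Real.pi < angDist θ τ τ') : VertexRigid g t₀ := by
  have hε := C.pos
  refine ⟨min ρ (ε / 4), by positivity, fun t δ ht htδ hδ b b' m hb hb' hm hmq => ?_⟩
  rw [lt_min_iff] at hδ
  obtain ⟨hδ1, hδ2⟩ := hδ
  have hq : g t₀ = q := by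
    have := h1 0 le_rfl hρ
    rwa [sub_zero, C.zero] at this
  rw [hq] at hmq
  rw [h1 t ht.le (by linarith)] at hb
  rw [h2 t ht.le (by linarith)] at hb'
  have d1 := C.dist_center τ ht.le (by linarith)
  have d2 := C.dist_center τ' ht.le (by linarith)
  have hBl : δ - t ≤ dist q b := by
    have := dist_triangle_left (P t τ) b q
    linarith
  have hBu : dist q b ≤ δ + t := by
    have := dist_triangle q (P t τ) b
    linarith
  have hB'l : δ - t ≤ dist q b' := by
    have := dist_triangle_left (P t τ') b' q
    linarith
  have hB'u : dist q b' ≤ δ + t := by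
    have := dist_triangle q (P t τ') b'
    linarith
  obtain ⟨φ, hφ⟩ := C.surj b (by linarith)
  obtain ⟨φ', hφ'⟩ := C.surj b' (by linarith)
  have hcn := C.cn (x := b) (y := b') (p := q) (m := m) (by linarith) (by linarith)
    (by rw [dist_self]; exact hε) (by linarith) hm
  rw [hmq] at hcn
  set B := dist q b with hB
  set B' := dist q b' with hB'
  have e1 : δ ^ 2 = t ^ 2 + B ^ 2 - 2 * (t * B) * coneCos θ τ φ := by
    rw [← hb, hφ]
    exact C.dist_sq _ _ ht.le (by linarith) (by linarith) (by linarith)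
  have e2 : δ ^ 2 = t ^ 2 + B' ^ 2 - 2 * (t * B') * coneCos θ τ' φ' := by
    rw [← hb', hφ']
    exact C.dist_sq _ _ ht.le (by linarith) (by linarith) (by linarith)
  have ew : dist b b' ^ 2 = B ^ 2 + B' ^ 2 - 2 * (B * B') * coneCos θ φ φ' := by
    conv_lhs => rw [hφ, hφ']
    exact C.dist_sq _ _ (by linarith) (by linarith) (by linarith) (by linarith)
  have hw : 0 ≤ dist b b' := dist_nonneg
  set w := dist b b' with hwdef
  have hK : 4 * t ^ 2 + w ^ 2 ≤ 4 * t * (B * coneCos θ τ φ + B' * coneCos θ τ' φ') := by nlinarith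
  have hB0 : 0 < B := by linarith
  have hB'0 : 0 < B' := by linarith
  have hm2 : IsMid (P B φ) (P B' φ') m := by rwa [← hφ, ← hφ']
  by_cases ca : Real.pi ≤ angDist θ τ φ
  · left
    rw [C.parallel_on_ray ht htδ (by linarith) hB0 hB'0 (by linarith) (by linarith) e2 ew hw hK ca
      hm2 (by linarith), h2 δ (by linarith) hδ1]
  by_cases ca' : Real.pi ≤ angDist θ τ' φ'
  · right
    rw [C.parallel_on_ray (B := B') (B' := B) (φ := φ') (φ' := φ) ht htδ (by linarith) hB'0 hB0
      (by linarith) (by linarith) e1 (w := w) (by rw [ew, coneCos_comm θ φ]; ring) hw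
      (by linarith) ca' hm2.symm (by linarith), h1 δ (by linarith) hδ1]
  exfalso
  have hwK : w ≤ B * coneCos θ τ φ + B' * coneCos θ τ' φ' := by
    have : 4 * t * w ≤ 4 * t * (B * coneCos θ τ φ + B' * coneCos θ τ' φ') := by
      nlinarith [sq_nonneg (2 * t - w)]
    exact le_of_mul_le_mul_left this (by positivity)
  have c1 := coneCos_le_one θ τ φ
  have c2 := coneCos_le_one θ τ' φ'
  by_cases cb : Real.pi ≤ angDist θ φ φ'
  · rw [coneCos_eq_neg_one cb] at ew
    have hw1 : w = B + B' := by
      rw [← sq_eq_sq₀ hw (by positivity), ew]; ring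
    have g1 : coneCos θ τ φ = 1 := by
      have k1 := mul_nonneg hB'0.le (sub_nonneg.2 c2)
      have k2 : B * (1 - coneCos θ τ φ) ≤ 0 := by linarith
      have k3 := nonpos_of_mul_nonpos_right k2 hB0
      linarith
    have g2 : coneCos θ τ' φ' = 1 := by
      have k1 := mul_nonneg hB0.le (sub_nonneg.2 c1)
      have k2 : B' * (1 - coneCos θ τ' φ') ≤ 0 := by linarith
      have k3 := nonpos_of_mul_nonpos_right k2 hB'0
      linarith
    rw [g1] at e1 hK
    rw [g2] at e2 hK
    have f1 : B = t + δ := by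
      have h1 : (B - t - δ) * (B - t + δ) = 0 := by linarith
      rcases mul_eq_zero.1 h1 with h | h <;> linarith
    have f2 : B' = t + δ := by
      have h1 : (B' - t - δ) * (B' - t + δ) = 0 := by linarith
      rcases mul_eq_zero.1 h1 with h | h <;> linarith
    rw [hw1, f1, f2] at hK
    nlinarith
  push Not at ca ca' cb
  have hsum : Real.pi < angDist θ τ φ + angDist θ φ φ' + angDist θ τ' φ' := by
    have i1 := angDist_triangle C.period_pos τ φ τ'
    have i2 := angDist_triangle C.period_pos φ φ' τ'
    rw [angDist_comm θ φ' τ'] at i2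
    linarith
  unfold coneCos at ew hK hwK
  rw [min_eq_left ca.le, min_eq_left ca'.le] at hK hwK
  rw [min_eq_left cb.le] at ew
  have n1 := angDist_nonneg θ τ φ
  have n2 := angDist_nonneg θ τ' φ'
  have n3 := angDist_nonneg θ φ φ'
  set α := angDist θ τ φ
  set α' := angDist θ τ' φ'
  set β := angDist θ φ φ'
  set K := B * Real.cos α + B' * Real.cos α' with hKdef
  have hKpos : 0 < K := by
    by_contra h
    push Not at h
    nlinarith [sq_nonneg w]
  have hwK2 : w ^ 2 ≤ K ^ 2 := by gcongr
  have hBB : 0 < B * B' := by positivity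
  rcases le_or_gt Real.pi (α + α') with hle | hlt
  · have hcos : Real.cos α' ≤ - Real.cos α := by
      rw [← Real.cos_pi_sub]
      exact Real.cos_le_cos_of_nonneg_of_le_pi (by linarith) ca'.le (by linarith)
    have k1 : K ≤ (B - B') * Real.cos α := by
      have := mul_le_mul_of_nonneg_left hcos hB'0.le
      rw [hKdef]; linarith
    have k2 : (B - B') ^ 2 ≤ w ^ 2 := by
      have := mul_le_mul_of_nonneg_left (Real.cos_le_one β) hBB.le
      linarith
    have k3 : K ^ 2 ≤ (B - B') ^ 2 * Real.cos α ^ 2 := by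
      rw [← mul_pow]; gcongr
    have k4 : 0 < Real.sin α := Real.sin_pos_of_pos_of_lt_pi (by linarith) ca
    have k5 := Real.sin_sq_add_cos_sq α
    have k6 : (B - B') ^ 2 * Real.cos α ^ 2 ≤ K ^ 2 * Real.cos α ^ 2 := by
      gcongr ?_ * _
      linarith
    have k7 : 0 < K ^ 2 * Real.sin α ^ 2 := by positivity
    have k8 : K ^ 2 * Real.sin α ^ 2 + K ^ 2 * Real.cos α ^ 2 = K ^ 2 := by
      rw [← mul_add, k5, mul_one]
    linarith
  · have hcos : Real.cos β < - Real.cos (α + α') := by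
      rw [← Real.cos_pi_sub]
      exact Real.cos_lt_cos_of_nonneg_of_le_pi (by linarith) cb.le (by linarith)
    rw [Real.cos_add] at hcos
    have k1 : w ^ 2 > B ^ 2 + B' ^ 2 + 2 * (B * B') *
        (Real.cos α * Real.cos α' - Real.sin α * Real.sin α') := by
      have := mul_lt_mul_of_pos_left hcos hBB
      linarith
    have k2 : K ^ 2 + (B * Real.sin α - B' * Real.sin α') ^ 2 = B ^ 2 + B' ^ 2 + 2 * (B * B') *
        (Real.cos α * Real.cos α' - Real.sin α * Real.sin α') := by
      rw [hKdef]
      linear_combination B ^ 2 * Real.sin_sq_add_cos_sq α + B' ^ 2 * Real.sin_sq_add_cos_sq α'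
    linarith [sq_nonneg (B * Real.sin α - B' * Real.sin α')]

end IsConeChart

/-- A closed geodesic which is rigid at one point is the unique closed geodesic in its free
homotopy class. -/
theorem unique_of_vertexRigid {S : Type} [MetricSpace S] [CompleteSpace S] {ε : ℝ} (hG : Good S ε)
    {g : ℝ → S} {k t₀ T : ℝ} (hk : 0 < k) (hg : WindowIsom g k) (hT : 0 < T)
    (hgp : Function.Periodic g T) (hr : VertexRigid g t₀) : UniqueClosedGeodesic g := by
  have hε := hG.pos
  refine ⟨fun t => ⟨k / 2, by positivity, fun s u hs hu => hg s u ?_⟩, ⟨T, hT, hgp⟩, ?_⟩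
  · have := abs_sub_le s t u
    rw [abs_sub_comm t u] at this
    linarith
  rintro h hh - ⟨T₁, hT₁, T₂, hT₂, hg1, hh1, F, hFc, hF0, hF1, hFp⟩
  obtain ⟨ρ, hρ, hr⟩ := hr
  set A := min (ε / 32) (min k (ρ / 2)) with hA
  have hA0 : 0 < A := by positivity
  have huc := (isCompact_Icc (a := (0 : ℝ)) (b := 1)).prod (isCompact_Icc (a := (0 : ℝ)) (b := 1))
    |>.uniformContinuousOn_of_continuous hFc.continuousOn
  rw [Metric.uniformContinuousOn_iff] at huc
  obtain ⟨η, hη, huc⟩ := huc A hA0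
  obtain ⟨N, hN⟩ := exists_nat_gt (1 / η)
  have hN0 : 0 < N := by
    have : (0 : ℝ) < N := lt_trans (by positivity) hN
    exact_mod_cast this
  have hN0' : (0 : ℝ) < N := by exact_mod_cast hN0
  have hper : ∀ u, Function.Periodic (F u) 1 := fun u s => hFp u s
  obtain ⟨a, ha⟩ := rigidity_of_chain hG hk hg hh hT₁ hT₂ hg1 hr (A := A) (min_le_left _ _)
    ((min_le_right _ _).trans (min_le_left _ _))
    (((min_le_right _ _).trans (min_le_right _ _)).trans_lt (by linarith)) hN0
    (fun j s => F (j / N) s)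
    (fun j => hFc.comp (by fun_prop : Continuous fun s : ℝ => ((j / N : ℝ), s)))
    (fun j => hper _) (fun s => by simp [hF0]) (fun s => by rw [div_self hN0'.ne', hF1]) (by
      intro s j hj
      have hj1 : ((j : ℝ) + 1) ≤ N := by exact_mod_cast hj
      change dist (F (j / N) s) (F ((j + 1 : ℕ) / N) s) ≤ A
      have e1 : ∀ u, F u s = F u (Int.fract s) := fun u => by
        have := (hper u).sub_int_mul_eq (x := s) ⌊s⌋
        rw [mul_one] at this
        exact this.symm
      rw [e1, e1 ((j + 1 : ℕ) / N)]
      have hfr : Int.fract s ∈ Icc (0 : ℝ) 1 := ⟨Int.fract_nonneg s, (Int.fract_lt_one s).le⟩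
      refine (huc (_, _) ⟨?_, hfr⟩ (_, _) ⟨?_, hfr⟩ ?_).le
      · exact ⟨by positivity, (div_le_one hN0').2 (by linarith)⟩
      · exact ⟨by positivity, (div_le_one hN0').2 (by push_cast; linarith)⟩
      · rw [Prod.dist_eq]
        simp only [dist_self]
        rw [max_lt_iff]
        refine ⟨?_, hη⟩
        rw [Real.dist_eq, ← sub_div, Nat.cast_add, Nat.cast_one, sub_add_cancel_left, abs_div,
          abs_neg, abs_one, abs_of_pos hN0', div_lt_iff₀ hN0']
        rwa [div_lt_iff₀ hη, mul_comm] at hN)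
  -- both geodesics have unit speed, so the periods agree
  have hTT : T₁ = T₂ := by
    obtain ⟨e, he, h1⟩ := hh 0
    set s := min (e / (2 * T₂)) (k / T₁) with hs
    have hs0 : 0 < s := by positivity
    have s1 : T₂ * s < e := by
      have : s ≤ e / (2 * T₂) := min_le_left _ _
      rw [le_div_iff₀ (by positivity)] at this
      nlinarith
    have s2 : T₁ * s ≤ k := by
      have : s ≤ k / T₁ := min_le_right _ _
      rw [le_div_iff₀ (by positivity)] at this
      linarith
    have h2 := h1 (T₂ * s) (T₂ * 0) (by rw [sub_zero, abs_of_pos (by positivity)]; exact s1)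
      (by simpa using he)
    rw [ha, ha] at h2
    have e1 : |T₁ * s + a - (T₁ * 0 + a)| = T₁ * s := by
      rw [abs_of_nonneg (by ring_nf; positivity)]; ring
    rw [hg _ _ (by rw [e1]; exact s2), e1, mul_zero, sub_zero, abs_of_pos (by positivity)] at h2
    exact mul_right_cancel₀ hs0.ne' h2
  refine ⟨a, fun t => ?_⟩
  have := ha (t / T₁)
  rw [hTT] at this
  rwa [mul_div_cancel₀ _ hT₂.ne'] at this

/-! ### Geodesic arcs through a conical point -/

section Arcs

variable {S : Type} [MetricSpace S] {q : S} {θ ε e : ℝ} {P : ℝ → ℝ → S}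

/-- There is a locally geodesic arc from the conical point `q` to itself, which leaves `q` in the
direction `τ` and arrives at `q` in the direction `τ'` (in the polar coordinates `P`
around `q`). -/
def Arc (P : ℝ → ℝ → S) (e τ τ' : ℝ) : Prop :=
  ∃ ℓ ρ κ : ℝ, ∃ γ : ℝ → S, 0 < ρ ∧ ρ < ℓ ∧ ρ < e ∧ 0 < κ ∧
    (∀ s u, 0 ≤ s → s ≤ u → u ≤ ℓ → u - s ≤ κ → dist (γ s) (γ u) = u - s) ∧
    (∀ t, 0 ≤ t → t ≤ ρ → γ t = P t τ) ∧ ∀ t, 0 ≤ t → t ≤ ρ → γ (ℓ - t) = P t τ'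

lemma Arc.trans (C : IsConeChart q θ e P) {τ₀ τ₁ τ₂ τ₃ : ℝ} (h1 : Arc P e τ₀ τ₁)
    (h2 : Arc P e τ₂ τ₃) (h : Real.pi ≤ angDist θ τ₁ τ₂) : Arc P e τ₀ τ₃ := by
  obtain ⟨ℓ₁, ρ₁, κ₁, γ₁, a1, a2, a3, a4, a5, a6, a7⟩ := h1
  obtain ⟨ℓ₂, ρ₂, κ₂, γ₂, b1, b2, b3, b4, b5, b6, b7⟩ := h2
  have hend : γ₁ ℓ₁ = γ₂ 0 := by
    have e1 := a7 0 le_rfl a1.le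
    rw [sub_zero, C.zero] at e1
    rw [e1, b6 0 le_rfl b1.le, C.zero]
  refine ⟨ℓ₁ + ℓ₂, min ρ₁ ρ₂, min (min κ₁ κ₂) (min ρ₁ ρ₂),
    fun t => if t ≤ ℓ₁ then γ₁ t else γ₂ (t - ℓ₁), by positivity, ?_, ?_, by positivity,
    ?_, ?_, ?_⟩
  · exact (min_le_left _ _).trans_lt (by linarith)
  · exact (min_le_left _ _).trans_lt a3
  · intro s u hs hsu hu hκ
    simp only [le_min_iff] at hκ
    obtain ⟨⟨k1, k2⟩, k3, k4⟩ := hκ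
    by_cases hs1 : s ≤ ℓ₁
    · by_cases hu1 : u ≤ ℓ₁
      · simp only [hs1, hu1, if_true]
        exact a5 s u hs hsu hu1 k1
      · simp only [hs1, hu1, if_true, if_false]
        have e1 := a7 (ℓ₁ - s) (by linarith) (by linarith)
        rw [sub_sub_cancel] at e1
        rw [e1, b6 (u - ℓ₁) (by linarith) (by linarith),
          C.dist_opp (by linarith) (by linarith) (by linarith) (by linarith) h]
        ring
    · have hu1 : ¬ u ≤ ℓ₁ := by linarith
      simp only [hs1, hu1, if_false]
      rw [b5 _ _ (by linarith) (by linarith) (by linarith) (by linarith)]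
      ring
  · intro t ht ht2
    rw [le_min_iff] at ht2
    simp only [show t ≤ ℓ₁ by linarith, if_true]
    exact a6 t ht ht2.1
  · intro t ht ht2
    rw [le_min_iff] at ht2
    simp only [show ¬ ℓ₁ + ℓ₂ - t ≤ ℓ₁ by linarith, if_false]
    rw [← b7 t ht ht2.2]
    congr 1
    ring

/-- Closing up an arc whose two directions enclose an angle larger than `π`. -/
lemma Arc.close (C : IsConeChart q θ e P) {τ τ' : ℝ} (h : Arc P e τ τ')
    (hang : Real.pi < angDist θ τ' τ) :
    ∃ g : ℝ → S, ∃ k > 0, ∃ T > 0, WindowIsom g k ∧ Function.Periodic g T ∧ VertexRigid g 0 := by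
  obtain ⟨ℓ, ρ, κ, γ, a1, a2, a3, a4, a5, a6, a7⟩ := h
  have hℓ : 0 < ℓ := by linarith
  set g : ℝ → S := fun t => γ (toIcoMod hℓ 0 t) with hg
  have hper : Function.Periodic g ℓ := fun t => by
    simp only [hg]
    rw [toIcoMod_add_right]
  have hg0 : ∀ t, 0 ≤ t → t < ℓ → g t = γ t := by
    intro t h1 h2
    simp only [hg]
    rw [(toIcoMod_eq_self hℓ).2 ⟨h1, by linarith⟩]
  have hgℓ : ∀ t, 0 ≤ t → t ≤ ρ → g (-t) = P t τ' := by
    intro t h1 h2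
    rcases h1.eq_or_lt with h0 | h0
    · rw [← h0, neg_zero, hg0 0 le_rfl hℓ, a6 0 le_rfl a1.le, C.zero, C.zero]
    · rw [← hper, hg0 _ (by linarith) (by linarith), ← a7 t h1 h2]
      congr 1; ring
  have hgρ : ∀ t, 0 ≤ t → t ≤ ρ → g t = P t τ := fun t h1 h2 => by
    rw [hg0 t h1 (by linarith), a6 t h1 h2]
  refine ⟨g, min κ ρ, by positivity, ℓ, hℓ, ?_, hper, ?_⟩
  · have key : ∀ s u, s ≤ u → u - s ≤ min κ ρ → dist (g s) (g u) = u - s := by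
      intro s u hsu hk
      rw [le_min_iff] at hk
      obtain ⟨y, hy, n, hn⟩ : ∃ y ∈ Ico 0 ℓ, ∃ n : ℤ, s = y + n * ℓ := by
        refine ⟨toIcoMod hℓ 0 s, by simpa using toIcoMod_mem_Ico hℓ 0 s, toIcoDiv hℓ 0 s, ?_⟩
        have := toIcoMod_add_toIcoDiv_zsmul hℓ 0 s
        rw [zsmul_eq_mul] at this
        exact this.symm
      obtain ⟨z, hz⟩ : ∃ z, u = z + n * ℓ := ⟨u - n * ℓ, by ring⟩
      have hp := hper.int_mul n
      rw [hn, hz, hp, hp]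
      rw [hn, hz] at hsu hk
      have h1 : y ≤ z := by linarith
      by_cases hz1 : z < ℓ
      · rw [hg0 y hy.1 hy.2, hg0 z (by linarith [hy.1]) hz1,
          a5 y z hy.1 h1 hz1.le (by linarith)]
        ring
      · push Not at hz1
        have e1 := hgℓ (ℓ - y) (by linarith [hy.2]) (by linarith)
        rw [neg_sub] at e1
        have e2 := hper (y - ℓ)
        rw [sub_add_cancel] at e2
        have e3 := hper (z - ℓ)
        rw [sub_add_cancel] at e3
        rw [e2, e1, e3, hgρ (z - ℓ) (by linarith) (by linarith [hy.2]),
          C.dist_opp (by linarith [hy.2]) (by linarith) (by linarith) (by linarith [hy.2]) hang.le]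
        ring
    intro s u hsu
    rcases le_total s u with h | h
    · rw [abs_of_nonpos (by linarith)] at hsu ⊢
      rw [key s u h (by linarith)]; ring
    · rw [abs_of_nonneg (by linarith)] at hsu ⊢
      rw [dist_comm, key u s h (by linarith)]
  · refine C.vertexRigid (τ := τ') (τ' := τ) a1 (fun t h1 h2 => ?_) (fun t h1 h2 => ?_) hang
    · rw [zero_sub]; exact hgℓ t h1 h2.le
    · rw [zero_add]; exact hgρ t h1 h2.le

/-- A discrete geodesic is the restriction of a locally geodesic curve. -/
lemma GeoChain.exists_curve (hG : Good S ε) {y : ℕ → S} {δ : ℝ} (hδ : 0 < δ) (hδε : δ < ε) :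
    ∀ N, GeoChain N y → (∀ j < N, dist (y j) (y (j + 1)) = δ) → ∃ γ : ℝ → S,
      (∀ j ≤ N, γ (j * δ) = y j) ∧
      ∀ s u, 0 ≤ s → s ≤ u → u ≤ N * δ → u - s ≤ δ → dist (γ s) (γ u) = u - s := by
  intro N
  induction N with
  | zero =>
    intro _ _
    refine ⟨fun _ => y 0, fun j hj => by rw [Nat.le_zero.1 hj], fun s u h1 h2 h3 h4 => ?_⟩
    rw [Nat.cast_zero, zero_mul] at h3
    rw [dist_self]; linarith
  | succ N ih =>
    intro hy hyδ
    obtain ⟨γ, hγ1, hγ2⟩ := ih (fun j hj => hy j (by omega)) (fun j hj => hyδ j (by omega))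
    have hd := hyδ N (by omega)
    obtain ⟨σ, hσ0, hσ1, hσ2⟩ := hG.geo (y N) (y (N + 1)) (by rw [hd]; exact hδε)
    rw [hd] at hσ1 hσ2
    have hN0 : (0 : ℝ) ≤ N * δ := by positivity
    have hcast : ((N + 1 : ℕ) : ℝ) * δ = N * δ + δ := by push_cast; ring
    refine ⟨fun t => if t ≤ N * δ then γ t else σ (t - N * δ), ?_, ?_⟩
    · intro j hj
      by_cases hjN : j ≤ N
      · have : (j : ℝ) * δ ≤ N * δ := by
          have : (j : ℝ) ≤ N := by exact_mod_cast hjN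
          gcongr
        simp only [this, if_true]
        exact hγ1 j hjN
      · have hj1 : j = N + 1 := by omega
        subst hj1
        rw [hcast]
        simp only [show ¬ (N * δ + δ ≤ N * δ) by linarith, if_false]
        rw [add_sub_cancel_left, hσ1]
    · intro s u h1 h2 h3 h4
      rw [hcast] at h3
      by_cases hs : s ≤ N * δ
      · by_cases hu : u ≤ N * δ
        · simp only [hs, hu, if_true]
          exact hγ2 s u h1 h2 hu h4
        · simp only [hs, hu, if_true, if_false]
          push Not at hu
          have d1 : dist (y N) (σ (u - N * δ)) = u - N * δ := by
            have := hσ2 0 ⟨le_rfl, hδ.le⟩ (u - N * δ) ⟨by linarith, by linarith⟩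
            rw [hσ0, zero_sub, abs_neg, abs_of_pos (by linarith)] at this
            exact this
          cases N with
          | zero =>
            have hs0 : s = ((0 : ℕ) : ℝ) * δ := by
              rw [Nat.cast_zero, zero_mul] at hs ⊢; linarith
            rw [hs0, hγ1 0 le_rfl, d1]
          | succ M =>
            have d2 : dist (σ (u - (M + 1 : ℕ) * δ)) (y (M + 2)) = (M + 1 : ℕ) * δ + δ - u := by
              have := hσ2 (u - (M + 1 : ℕ) * δ) ⟨by linarith, by linarith⟩ δ ⟨hδ.le, le_rfl⟩
              rw [hσ1, abs_of_nonpos (by linarith)] at this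
              rw [this]; ring
            have hc2 : ((M + 1 : ℕ) : ℝ) * δ = M * δ + δ := by push_cast; ring
            have hM0 : (0 : ℝ) ≤ M * δ := by positivity
            have d3 := hγ2 s ((M + 1 : ℕ) * δ) h1 hs le_rfl (by linarith)
            have d4 := hγ2 (M * δ) s hM0 (by linarith) hs (by linarith)
            rw [hγ1 _ le_rfl] at d3
            rw [hγ1 _ (by omega)] at d4
            have hm := (hy M (by omega)).1
            rw [hyδ M (by omega)] at hm
            have t1 := dist_triangle4 (y M) (γ s) (σ (u - (M + 1 : ℕ) * δ)) (y (M + 2))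
            have t2 := dist_triangle (γ s) (y (M + 1)) (σ (u - (M + 1 : ℕ) * δ))
            apply le_antisymm <;> linarith
      · have hu : ¬ u ≤ N * δ := by linarith
        push Not at hs
        simp only [hs.not_ge, hu, if_false]
        rw [hσ2 _ ⟨by linarith, by linarith⟩ _ ⟨by linarith, by linarith⟩, abs_of_nonpos
          (by linarith)]
        ring

/-- The radial segments are the only geodesics from the apex. -/
lemma IsConeChart.eq_of_between (C : IsConeChart q θ e P) {r t τ : ℝ} {x : S} (h0 : 0 ≤ t)
    (ht : t ≤ r) (hr : r < e) (h1 : dist q x = t) (h2 : dist x (P r τ) = r - t) : x = P t τ := by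
  rcases h0.eq_or_lt with h | hpos
  · rw [← h] at h1 ⊢
    rw [C.zero, dist_eq_zero.1 h1]
  obtain ⟨a, ha⟩ := C.surj x (by linarith)
  rw [h1] at ha
  have h3 := C.dist_sq a τ h0 (by linarith) (by linarith : 0 ≤ r) hr
  rw [← ha, h2] at h3
  have h4 : 2 * (t * r) * (coneCos θ a τ - 1) = 0 := by linarith
  have h5 : 2 * (t * r) ≠ 0 := by
    have : 0 < r := by linarith
    positivity
  have h6 := (mul_eq_zero.1 h4).resolve_left h5
  rw [ha]
  exact C.eq_of_angDist h0 (by linarith) (angDist_eq_zero_of_coneCos (by linarith))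

/-- A discrete geodesic from the apex to itself gives an arc. -/
lemma GeoChain.exists_arc (hG : Good S ε) (C : IsConeChart q θ e P) {N : ℕ} {y : ℕ → S} {δ τ : ℝ}
    (hδ : 0 < δ) (hδε : δ < ε) (hδe : δ < e) (hN : 2 ≤ N) (hy : GeoChain N y)
    (hyδ : ∀ j < N, dist (y j) (y (j + 1)) = δ) (h0 : y 0 = q) (hyN : y N = q)
    (h1 : y 1 = P δ τ) : ∃ τ', Arc P e τ τ' := by
  obtain ⟨γ, hγ1, hγ2⟩ := GeoChain.exists_curve hG hδ hδε N hy hyδ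
  obtain ⟨M, rfl⟩ : ∃ M, N = M + 1 := ⟨N - 1, by omega⟩
  have hlast := hyδ M (by omega)
  rw [hyN, dist_comm] at hlast
  obtain ⟨τ', hτ'⟩ := C.surj (y M) (by rw [hlast]; exact hδe)
  rw [hlast] at hτ'
  have hM : (1 : ℝ) ≤ M := by exact_mod_cast (by omega : 1 ≤ M)
  have hMδ : δ ≤ M * δ := by nlinarith
  have hcast : ((M + 1 : ℕ) : ℝ) * δ = M * δ + δ := by push_cast; ring
  have γ0 : γ 0 = q := by
    have := hγ1 0 (by omega)
    rwa [Nat.cast_zero, zero_mul, h0] at this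
  have γ1 : γ δ = P δ τ := by
    have := hγ1 1 (by omega)
    rwa [Nat.cast_one, one_mul, h1] at this
  have γM := hγ1 M (by omega)
  have γN := hγ1 (M + 1) le_rfl
  rw [hyN] at γN
  rw [hcast] at hγ2 γN
  refine ⟨τ', M * δ + δ, δ, δ, γ, hδ, by linarith, hδe, hδ, hγ2, ?_, ?_⟩
  · intro t ht1 ht2
    refine C.eq_of_between ht1 ht2 hδe ?_ ?_
    · rw [← γ0, hγ2 0 t le_rfl ht1 (by linarith) (by linarith), sub_zero]
    · rw [← γ1, hγ2 t δ ht1 ht2 (by linarith) (by linarith)]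
  · intro t ht1 ht2
    refine C.eq_of_between ht1 ht2 hδe ?_ ?_
    · rw [← γN, dist_comm, hγ2 _ _ (by linarith) (by linarith) le_rfl (by linarith)]
      ring
    · rw [← hτ', ← γM, dist_comm, hγ2 _ _ (by linarith) (by linarith) (by linarith) (by linarith)]
      ring

/-- Geodesics can be extended discretely for ever. -/
lemma Good.exists_extension (hG : Good S ε) {x y : S} {δ : ℝ} (hxy : dist x y = δ) (hδ : δ < ε) :
    ∃ z : ℕ → S, z 0 = x ∧ z 1 = y ∧ (∀ j, dist (z j) (z (j + 1)) = δ) ∧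
      ∀ N, GeoChain N z := by
  have hext : ∀ p : {p : S × S // dist p.1 p.2 = δ}, ∃ p' : {p : S × S // dist p.1 p.2 = δ},
      p'.1.1 = p.1.2 ∧ dist p.1.1 p'.1.2 = 2 * δ := by
    rintro ⟨⟨a, b⟩, hp⟩
    obtain ⟨z, h1, h2⟩ := hG.ext a b (by simp only at hp; linarith)
    simp only at hp
    exact ⟨⟨(b, z), by simp only; linarith⟩, rfl, by simp only; linarith⟩
  choose f hf1 hf2 using hext
  set w : ℕ → {p : S × S // dist p.1 p.2 = δ} := fun n => f^[n] ⟨(x, y), hxy⟩ with hw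
  have hws : ∀ n, w (n + 1) = f (w n) := fun n => by simp only [hw, Function.iterate_succ_apply']
  have e1 : ∀ n, (w (n + 1)).1.1 = (w n).1.2 := fun n => by rw [hws, hf1]
  refine ⟨fun n => (w n).1.1, rfl, e1 0, fun j => ?_, fun N j _ => ?_⟩
  · exact (congrArg (dist _) (e1 j)).trans (w j).2
  · have h1 : dist (w j).1.1 (w (j + 2)).1.1 = 2 * δ := by
      rw [e1, hws]; exact hf2 _
    have h2 : dist (w j).1.1 (w (j + 1)).1.1 = δ := by rw [e1]; exact (w j).2
    have h3 : dist (w (j + 1)).1.1 (w (j + 2)).1.1 = δ := by rw [e1 (j + 1)]; exact (w (j + 1)).2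
    constructor
    · rw [h1, h2]; ring
    · rw [h1, dist_comm, h3]; ring

/-- Moving the endpoint of a discrete geodesic along a short chain `z` turns its initial step only
a little if the number `N` of steps is large. -/
lemma GeoChain.move_end [CompleteSpace S] (hG : Good S ε) {N M : ℕ} (hN : 2 ≤ N) {x z : ℕ → S}
    {B : ℝ} (hx : GeoChain N x) (hxδ : dist (x 0) (x 1) ≤ ε / 64) (hBN : B / N ≤ ε / 64)
    (hz0 : z 0 = x N)
    (hz : ∀ i < M, dist (z i) (z (i + 1)) ≤ ε / 64)
    (hB : ∑ i ∈ Finset.range M, dist (z i) (z (i + 1)) ≤ B) :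
    ∃ y : ℕ → S, GeoChain N y ∧ y 0 = x 0 ∧ y N = z M ∧ dist (y 1) (x 1) ≤ B / N := by
  have hε := hG.pos
  have hN0 : (0 : ℝ) < N := by exact_mod_cast (by omega : 0 < N)
  have main : ∀ i ≤ M, ∃ y : ℕ → S, GeoChain N y ∧ y 0 = x 0 ∧ y N = z i ∧
      dist (y 1) (x 1) ≤ (∑ k ∈ Finset.range i, dist (z k) (z (k + 1))) / N := by
    intro i
    induction i with
    | zero => intro _; exact ⟨x, hx, rfl, hz0.symm, by simp⟩
    | succ i ih =>
      intro hi
      obtain ⟨y, h1, h2, h3, h4⟩ := ih (by omega)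
      have hsum : (∑ k ∈ Finset.range i, dist (z k) (z (k + 1))) ≤ B := by
        refine le_trans ?_ hB
        exact Finset.sum_le_sum_of_subset_of_nonneg (Finset.range_mono (by omega))
          (fun _ _ _ => dist_nonneg)
      have h4' : dist (y 1) (x 1) ≤ B / N := h4.trans (by gcongr)
      have hstep : dist (y 0) (y 1) ≤ ε / 32 := by
        have := dist_triangle (x 0) (x 1) (y 1)
        rw [h2]
        rw [dist_comm (y 1)] at h4'
        linarith
      have hyf : Fine N (ε / 16) y := fun j hj => by rw [h1.step_eq hj]; linarith
      have hd := hz i (by omega)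
      set d := dist (z i) (z (i + 1)) with hd'
      set y' := Function.update y N (z (i + 1)) with hy'
      have y'N : y' N = z (i + 1) := by simp [hy']
      have y'j : ∀ j, j ≠ N → y' j = y j := fun j hj => by simp [hy', hj]
      have hyf' : Fine N (ε / 16) y' := by
        intro j hj
        rw [y'j j (by omega)]
        by_cases hj1 : j + 1 = N
        · rw [hj1, y'N]
          have t1 := dist_triangle (y j) (y (j + 1)) (z (i + 1))
          rw [h1.step_eq hj, hj1, h3] at t1
          linarith
        · rw [y'j _ hj1]; exact hyf j hj
      have hclose := hyf'.dist_tighten_le hG le_rfl hyf (φ := fun j => j / N * d)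
        (fun j hj => by
          by_cases hj1 : j = N
          · rw [hj1, y'N, h3, div_self hN0.ne', one_mul, dist_comm]
          · rw [y'j j hj1, dist_self]; positivity)
        (fun j hj => by
          have : (j : ℝ) / N ≤ 1 := by
            rw [div_le_one hN0]; exact_mod_cast hj
          nlinarith [dist_nonneg (x := z i) (y := z (i + 1))])
        (fun j hj => by push_cast; apply le_of_eq; field_simp; ring) (j := 1) (by omega)
      rw [h1.tighten_eq hG le_rfl hyf] at hclose
      refine ⟨tighten N y', hyf'.geoChain_tighten hG le_rfl, ?_, ?_, ?_⟩
      · rw [hyf'.tighten_zero hG le_rfl, y'j 0 (by omega), h2]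
      · rw [hyf'.tighten_last hG le_rfl, y'N]
      · rw [Finset.sum_range_succ, add_div]
        have t1 := dist_triangle (tighten N y' 1) (y 1) (x 1)
        have t2 : ((1 : ℕ) : ℝ) / N * d = d / N := by push_cast; ring
        rw [t2] at hclose
        linarith
  obtain ⟨y, h1, h2, h3, h4⟩ := main M le_rfl
  exact ⟨y, h1, h2, h3, h4.trans (by gcongr)⟩

/-- A rectifiable path can be cut into short steps whose total length is bounded by its
length. -/
lemma exists_steps {x y : S} {γ : ℝ → S} (hγ : Continuous γ) (h0 : γ 0 = x) (h1 : γ 1 = y)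
    {B : ℝ} (hB0 : 0 ≤ B) (hB : eVariationOn γ (Icc 0 1) ≤ ENNReal.ofReal B) {A : ℝ} (hA : 0 < A) :
    ∃ M : ℕ, ∃ z : ℕ → S, z 0 = x ∧ z M = y ∧ (∀ i < M, dist (z i) (z (i + 1)) ≤ A) ∧
      ∑ i ∈ Finset.range M, dist (z i) (z (i + 1)) ≤ B := by
  have huc := (isCompact_Icc (a := (0 : ℝ)) (b := 1)).uniformContinuousOn_of_continuous
    hγ.continuousOn
  rw [Metric.uniformContinuousOn_iff] at huc
  obtain ⟨η, hη, huc⟩ := huc A hA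
  obtain ⟨M, hM⟩ := exists_nat_gt (1 / η)
  have hM0 : (0 : ℝ) < M := lt_trans (by positivity) hM
  have hmem : ∀ i : ℕ, i ≤ M → (i : ℝ) / M ∈ Icc (0 : ℝ) 1 := fun i hi =>
    ⟨by positivity, (div_le_one hM0).2 (by exact_mod_cast hi)⟩
  refine ⟨M, fun i => γ (i / M), by simp [h0], by simp only [div_self hM0.ne', h1], ?_, ?_⟩
  · intro i hi
    refine (huc _ (hmem i hi.le) _ (hmem (i + 1) hi) ?_).le
    rw [Real.dist_eq, ← sub_div, Nat.cast_add, Nat.cast_one, sub_add_cancel_left, abs_div,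
      abs_neg, abs_one, abs_of_pos hM0, div_lt_iff₀ hM0]
    rwa [div_lt_iff₀ hη, mul_comm] at hM
  · have hmon : Monotone fun i : ℕ => min ((i : ℝ) / M) 1 := fun i j hij => by
      have : (i : ℝ) ≤ j := by exact_mod_cast hij
      simp only
      gcongr
    have := (eVariationOn.sum_le (f := γ) (s := Icc 0 1) (n := M) hmon
      (fun i => ⟨by positivity, min_le_right _ _⟩)).trans hB
    rw [← ENNReal.ofReal_le_ofReal_iff hB0, ENNReal.ofReal_sum_of_nonneg
      (fun _ _ => dist_nonneg)]
    refine le_trans (le_of_eq ?_) this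
    refine Finset.sum_congr rfl fun i hi => ?_
    rw [Finset.mem_range] at hi
    rw [edist_comm, edist_dist, min_eq_left (hmem i hi.le).2, min_eq_left (hmem (i + 1) hi).2]

/-- Near every direction at `q` there is the initial direction of an arc from `q` to itself: extend
a geodesic far in the given direction and move its endpoint to `q`. -/
lemma ESCS.exists_arc_near (hS : ESCS S) (hG : Good S ε) (C : IsConeChart q θ e P) (v : ℝ) {η : ℝ}
    (hη : 0 < η) : ∃ τ τ', angDist θ τ v ≤ η ∧ Arc P e τ τ' := by
  have hcompact := hS.compact
  wlog hηπ : η ≤ Real.pi generalizing η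
  · push Not at hηπ
    obtain ⟨τ, τ', h1, h2⟩ := this Real.pi_pos le_rfl
    exact ⟨τ, τ', h1.trans hηπ.le, h2⟩
  have hε := hG.pos
  have he := C.pos
  obtain ⟨D, hD⟩ := Metric.isBounded_iff.1 (Metric.isBounded_of_compactSpace (s := (univ : Set S)))
  have hD0 : 0 ≤ D := dist_nonneg.trans (hD (mem_univ q) (mem_univ q))
  set B := D + 1 with hB
  have hB0 : 0 < B := by linarith
  have hc : 0 < 1 - Real.cos η := by
    have := Real.cos_lt_cos_of_nonneg_of_le_pi le_rfl hηπ hη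
    rw [Real.cos_zero] at this
    linarith
  set δ := min (ε / 128) (e / 4) with hδ
  have hδ0 : 0 < δ := by positivity
  have hδ1 : δ ≤ ε / 128 := min_le_left _ _
  have hδ2 : δ ≤ e / 4 := min_le_right _ _
  set A := min (δ / 2) (δ * Real.sqrt (1 - Real.cos η)) with hA
  have hA0 : 0 < A := by positivity
  obtain ⟨N, hN⟩ := exists_nat_gt (max 2 (B / A))
  rw [max_lt_iff] at hN
  have hN2 : 2 ≤ N := by
    have : ((2 : ℕ) : ℝ) < N := by exact_mod_cast hN.1
    exact_mod_cast this.le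
  have hN0 : (0 : ℝ) < N := by linarith [hN.1]
  have hBN : B / N < A := by
    rw [div_lt_iff₀ hN0]
    have := hN.2
    rw [div_lt_iff₀ hA0] at this
    linarith
  have hA1 : A ≤ δ / 2 := min_le_left _ _
  have hqv : dist q (P δ v) = δ := C.dist_center v hδ0.le (by linarith)
  obtain ⟨x, x0, x1, xδ, xg⟩ := hG.exists_extension hqv (by linarith)
  obtain ⟨γ, γc, γ0, γ1, γv⟩ := hS.length_metric (x N) q 1 one_pos
  obtain ⟨M, z, z0, zM, z1, z2⟩ := exists_steps γc γ0 γ1 hB0.le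
    (γv.trans (ENNReal.ofReal_le_ofReal (by linarith [hD (mem_univ (x N)) (mem_univ q)])))
    (A := ε / 64) (by positivity)
  obtain ⟨y, yg, y0, yN, y1⟩ := (xg N).move_end hG hN2 (by rw [xδ]; linarith) (by linarith) z0 z1 z2
  rw [x0] at y0
  rw [zM] at yN
  rw [x1] at y1
  set δ' := dist q (y 1) with hδ'
  have l1 : δ / 2 ≤ δ' := by
    have := dist_triangle q (y 1) (P δ v)
    linarith
  have l2 : δ' ≤ 3 * δ / 2 := by
    have := dist_triangle_right q (y 1) (P δ v)
    linarith
  obtain ⟨τ, hτ⟩ := C.surj (y 1) (by linarith)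
  obtain ⟨τ', hτ'⟩ := yg.exists_arc hG C (δ := δ') (τ := τ) (by linarith) (by linarith) (by linarith)
    hN2 (fun j hj => by rw [yg.step_eq hj, y0]) y0 yN hτ
  refine ⟨τ, τ', ?_, hτ'⟩
  by_contra hcon
  push Not at hcon
  have h1 := coneCos_le_of_le hη.le hηπ hcon.le
  have h2 := C.dist_sq τ v (by linarith : 0 ≤ δ') (by linarith) hδ0.le (by linarith)
  rw [← hτ] at h2
  have h3 : dist (y 1) (P δ v) < δ * Real.sqrt (1 - Real.cos η) :=
    y1.trans_lt (hBN.trans_le (min_le_right _ _))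
  have h4 : dist (y 1) (P δ v) ^ 2 < δ ^ 2 * (1 - Real.cos η) := by
    have : dist (y 1) (P δ v) ^ 2 < (δ * Real.sqrt (1 - Real.cos η)) ^ 2 := by gcongr
    rwa [mul_pow, Real.sq_sqrt hc.le] at this
  have h5 : δ' * δ * (1 - Real.cos η) ≤ δ' * δ * (1 - coneCos θ τ v) := by
    have : 0 ≤ δ' * δ := by positivity
    gcongr
  have h6 : δ / 2 * δ * (1 - Real.cos η) ≤ δ' * δ * (1 - Real.cos η) := by gcongr
  nlinarith [sq_nonneg (δ' - δ)]

lemma exists_grid_near (hθ : 0 < θ) {K : ℕ} (hK : 0 < K) (y : ℝ) :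
    ∃ k : Fin K, angDist θ y (θ * (k : ℕ) / K) ≤ θ / K := by
  have hK' : (0 : ℝ) < K := by exact_mod_cast hK
  have f0 := Int.fract_nonneg (y / θ)
  have f1 := Int.fract_lt_one (y / θ)
  have hfl : 0 ≤ Int.fract (y / θ) * K := by positivity
  refine ⟨⟨⌊Int.fract (y / θ) * K⌋₊, ?_⟩, ?_⟩
  · rw [Nat.floor_lt hfl]
    nlinarith
  · have hy : y = θ * Int.fract (y / θ) + θ * (⌊y / θ⌋ : ℤ) := by
      rw [← mul_add, Int.fract_add_floor, mul_div_cancel₀ _ hθ.ne']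
    have hang : ∀ b, angDist θ y b ≤ |θ * Int.fract (y / θ) - b| := fun b => by
      have h1 := angDist_add_mul hθ (θ * Int.fract (y / θ)) b ⌊y / θ⌋
      rw [← hy] at h1
      rw [h1]
      exact angDist_le_abs _ _ _
    refine (hang _).trans ?_
    have e1 := Nat.floor_le hfl
    have e2 := Nat.lt_floor_add_one (Int.fract (y / θ) * K)
    simp only
    set n : ℝ := (⌊Int.fract (y / θ) * K⌋₊ : ℝ)
    have e3 : θ * Int.fract (y / θ) - θ * n / K = θ / K * (Int.fract (y / θ) * K - n) := by
      field_simp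
    rw [e3, abs_mul, abs_of_pos (by positivity), abs_of_nonneg (by linarith)]
    have : 0 < θ / K := by positivity
    nlinarith

/-- If there is a conical point, there is a closed geodesic which is rigid at that point. -/
theorem ESCS.exists_rigid (hS : ESCS S) (hG : Good S ε) (hq : q ∈ hS.conical) :
    ∃ g : ℝ → S, ∃ k > 0, ∃ T > 0, WindowIsom g k ∧ Function.Periodic g T ∧ VertexRigid g 0 := by
  obtain ⟨e, P, C⟩ := hS.exists_coneChart hq
  have hgt := hS.angle_gt q hq
  set θ := hS.angle q
  have hθ := C.period_pos
  set m := θ / 2 - Real.pi with hm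
  have hm0 : 0 < m := by linarith
  obtain ⟨K, hK⟩ := exists_nat_gt (θ / (m / 3))
  have hK0 : (0 : ℝ) < K := lt_trans (by positivity) hK
  have hK1 : 0 < K := by exact_mod_cast hK0
  have hθK : θ / K < m / 3 := by
    rw [div_lt_iff₀ (by positivity)] at hK
    rw [div_lt_iff₀ hK0]; linarith
  choose τ τ' hτ harc using fun k : Fin K =>
    hS.exists_arc_near hG C (θ * (k : ℕ) / K) (η := m / 3) (by positivity)
  have hnx : ∀ k, ∃ k', Real.pi < angDist θ (τ' k) (τ k') := by
    intro k
    obtain ⟨k', hk'⟩ := exists_grid_near hθ hK1 (τ' k + θ / 2)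
    refine ⟨k', ?_⟩
    have h1 : angDist θ (τ' k) (τ' k + θ / 2) = θ / 2 := by
      have e1 : |τ' k - (τ' k + θ / 2)| = θ / 2 := by
        rw [sub_add_cancel_left, abs_neg, abs_of_pos (by positivity)]
      rw [angDist_eq_abs hθ (by rw [e1]), e1]
    have h2 := angDist_triangle hθ (τ' k) (τ k') (τ' k + θ / 2)
    have h3 := angDist_triangle hθ (τ k') (θ * (k' : ℕ) / K) (τ' k + θ / 2)
    rw [angDist_comm θ (θ * (k' : ℕ) / K)] at h3
    linarith [hτ k']
  choose nx hnx using hnx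
  set a : ℕ → Fin K := fun i => nx^[i] ⟨0, hK1⟩ with ha
  have has : ∀ i, a (i + 1) = nx (a i) := fun i => by simp only [ha, Function.iterate_succ_apply']
  obtain ⟨i, j, hij, heq⟩ : ∃ i j, i < j ∧ a i = a j := by
    obtain ⟨i, j, hne, h⟩ := Finite.exists_ne_map_eq_of_infinite a
    rcases lt_or_gt_of_ne hne with h1 | h1
    · exact ⟨i, j, h1, h⟩
    · exact ⟨j, i, h1, h.symm⟩
  obtain ⟨n, rfl⟩ : ∃ n, j = i + n + 1 := ⟨j - i - 1, by omega⟩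
  have hall : ∀ n, Arc P e (τ (a i)) (τ' (a (i + n))) := by
    intro n
    induction n with
    | zero => exact harc _
    | succ n ih =>
      refine ih.trans C (harc (a (i + (n + 1)))) ?_
      rw [← add_assoc, has]
      exact (hnx _).le
  refine (hall n).close C ?_
  rw [heq, has]
  exact hnx _

end Arcs

/-! ### Developing a surface without conical points -/

/-- An isometric map of a disk of `ℂ` fixing the centre is a rotation or a reflection. -/
theorem disk_isometry {f : ℂ → ℂ} {s : ℝ} (hs : 0 < s) (h0 : f 0 = 0)
    (hf : ∀ z w, ‖z‖ < s → ‖w‖ < s → ‖f z - f w‖ = ‖z - w‖) :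
    ∃ u : ℂ, ‖u‖ = 1 ∧ ((∀ z, ‖z‖ < s → f z = u * z) ∨
      ∀ z, ‖z‖ < s → f z = u * (starRingEnd ℂ) z) := by
  have hn : ∀ z, ‖z‖ < s → ‖f z‖ = ‖z‖ := fun z hz => by
    simpa [h0] using hf z 0 hz (by simpa using hs)
  set a : ℂ := ((s / 2 : ℝ) : ℂ) with ha
  have han : ‖a‖ = s / 2 := by rw [ha, Complex.norm_real, Real.norm_of_nonneg (by positivity)]
  have hia : ‖Complex.I * a‖ = s / 2 := by rw [norm_mul, Complex.norm_I, one_mul, han]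
  have ha0 : a ≠ 0 := by rw [← norm_pos_iff, han]; positivity
  set u : ℂ := f a / a with hu
  have hun : ‖u‖ = 1 := by
    rw [hu, norm_div, hn a (by rw [han]; linarith)]
    exact div_self (by rw [han]; positivity)
  have hu0 : u ≠ 0 := by rw [← norm_pos_iff, hun]; norm_num
  -- after normalisation the map fixes `a`, and real parts are determined
  set F : ℂ → ℂ := fun z => f z / u with hF
  have hFn : ∀ z, ‖z‖ < s → ‖F z‖ = ‖z‖ := fun z hz => by simp [hF, hun, hn z hz]
  have hFd : ∀ z w, ‖z‖ < s → ‖w‖ < s → ‖F z - F w‖ = ‖z - w‖ := fun z w hz hw => by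
    rw [hF]; simp only; rw [← sub_div, norm_div, hun, div_one, hf z w hz hw]
  have hFa : F a = a := by
    have : f a ≠ 0 := by rw [← norm_pos_iff, hn a (by rw [han]; linarith), han]; positivity
    simp only [hF, hu]; field_simp
  have sq : ∀ z : ℂ, ‖z‖ ^ 2 = z.re ^ 2 + z.im ^ 2 := fun z => by
    rw [Complex.sq_norm, Complex.normSq_apply]; ring
  have hre : ∀ z, ‖z‖ < s → (F z).re = z.re ∧ (F z).im ^ 2 = z.im ^ 2 := fun z hz => by
    have h1 := congrArg (· ^ 2) (hFn z hz)
    have h2 := congrArg (· ^ 2) (hFd z a hz (by rw [han]; linarith))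
    simp only [hFa, sq, Complex.sub_re, Complex.sub_im] at h1 h2
    rw [ha] at h2
    simp only [Complex.ofReal_re, Complex.ofReal_im] at h2
    have : (F z).re = z.re := by
      have : s * ((F z).re - z.re) = 0 := by linarith
      rcases mul_eq_zero.1 this with h | h <;> linarith
    exact ⟨this, by rw [this] at h1; linarith⟩
  have hias : ‖Complex.I * a‖ < s := by rw [hia]; linarith
  obtain ⟨hb1, hb2⟩ := hre _ hias
  have hiare : (Complex.I * a).re = 0 := by simp [ha]
  have hiaim : (Complex.I * a).im = s / 2 := by simp [ha]
  rw [hiare] at hb1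
  rw [hiaim] at hb2
  have key : ∀ z, ‖z‖ < s → (F z).im * (F (Complex.I * a)).im = z.im * (s / 2) := fun z hz => by
    have h2 := congrArg (· ^ 2) (hFd z _ hz hias)
    simp only [sq, Complex.sub_re, Complex.sub_im, hb1, hiare, hiaim] at h2
    obtain ⟨h3, h4⟩ := hre z hz
    rw [h3] at h2
    nlinarith
  have hback : ∀ z, f z = u * F z := fun z => by simp only [hF]; field_simp
  refine ⟨u, hun, ?_⟩
  rcases sq_eq_sq_iff_eq_or_eq_neg.1 hb2 with hb | hb
  · left
    intro z hz
    have := key z hz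
    rw [hb] at this
    rw [hback]
    congr 1
    exact Complex.ext (hre z hz).1 (mul_right_cancel₀ (by positivity) this)
  · right
    intro z hz
    have := key z hz
    rw [hb] at this
    rw [hback]
    congr 1
    refine Complex.ext (by simpa using (hre z hz).1) ?_
    rw [Complex.conj_im]
    have h6 : (F z).im * (s / 2) = -z.im * (s / 2) := by linarith
    exact mul_right_cancel₀ (by positivity) h6

/-- A frame of radius `r`: an isometric parametrisation `φ` of the ball of radius `r` about `φ 0`
by the disk of radius `r` in `ℂ`. Outside the disk `φ` takes the junk value `φ 0`, so that a frame
is determined by its restriction to the disk. -/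
structure IsFrame {S : Type} [MetricSpace S] (r : ℝ) (φ : ℂ → S) : Prop where
  isom : ∀ z w, ‖z‖ < r → ‖w‖ < r → dist (φ z) (φ w) = ‖z - w‖
  surj : ∀ x, dist (φ 0) x < r → ∃ z, ‖z‖ < r ∧ φ z = x
  out : ∀ z, r ≤ ‖z‖ → φ z = φ 0

theorem IsFrame.inj {S : Type} [MetricSpace S] {r : ℝ} {φ : ℂ → S} (h : IsFrame r φ) {z w : ℂ}
    (hz : ‖z‖ < r) (hw : ‖w‖ < r) (e : φ z = φ w) : z = w := by
  have := h.isom z w hz hw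
  rw [e, dist_self] at this
  exact sub_eq_zero.1 (norm_eq_zero.1 this.symm)

/-- Comparison of a frame with an isometric map into its image. -/
theorem IsFrame.compare {S : Type} [MetricSpace S] {r s : ℝ} {φ g : ℂ → S} (h : IsFrame r φ)
    (hs : 0 < s) (hsr : s ≤ r) (h0 : g 0 = φ 0)
    (hg : ∀ z w, ‖z‖ < s → ‖w‖ < s → dist (g z) (g w) = ‖z - w‖) :
    ∃ u : ℂ, ‖u‖ = 1 ∧ ((∀ z, ‖z‖ < s → g z = φ (u * z)) ∨
      ∀ z, ‖z‖ < s → g z = φ (u * (starRingEnd ℂ) z)) := by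
  have hz0 : ‖(0:ℂ)‖ < s := by simpa using hs
  have hex : ∀ z, ∃ w, ‖z‖ < s → ‖w‖ < r ∧ φ w = g z := fun z => by
    by_cases hz : ‖z‖ < s
    · obtain ⟨w, hw, e⟩ := h.surj (g z) (by
        rw [← h0, hg 0 z hz0 hz, zero_sub, norm_neg]; linarith)
      exact ⟨w, fun _ => ⟨hw, e⟩⟩
    · exact ⟨0, fun h => absurd h hz⟩
  choose f hf using hex
  obtain ⟨u, hu, H⟩ := disk_isometry (f := f) hs
    (h.inj (hf 0 hz0).1 (by simpa using hs.trans_le hsr) ((hf 0 hz0).2.trans h0))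
    (fun z w hz hw => by
      rw [← h.isom _ _ (hf z hz).1 (hf w hw).1, (hf z hz).2, (hf w hw).2, hg z w hz hw])
  refine ⟨u, hu, H.imp ?_ ?_⟩
  all_goals
    intro H z hz
    rw [← H z hz, (hf z hz).2]

theorem IsFrame.eq_of_agree {S : Type} [MetricSpace S] {r δ : ℝ} {φ ψ : ℂ → S} (h : IsFrame r φ)
    (h' : IsFrame r ψ) (hδ : 0 < δ) (hδr : δ ≤ r) (e : ∀ z, ‖z‖ < δ → ψ z = φ z) : ψ = φ := by
  have e0 : ψ 0 = φ 0 := e 0 (by simpa using hδ)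
  obtain ⟨u, hu, H⟩ := h.compare (hδ.trans_le hδr) le_rfl e0 h'.isom
  have han : ‖((δ / 2 : ℝ) : ℂ)‖ = δ / 2 := by
    rw [Complex.norm_real, Real.norm_of_nonneg (by positivity)]
  have ha0 : ((δ / 2 : ℝ) : ℂ) ≠ 0 := by rw [← norm_pos_iff, han]; positivity
  have hin : ‖Complex.I * ((δ / 2 : ℝ) : ℂ)‖ = δ / 2 := by
    rw [norm_mul, Complex.norm_I, one_mul, han]
  have key : ∀ z, ‖z‖ < r → ψ z = φ z := by
    rcases H with H | H
    · have h1 := H _ (show ‖((δ / 2 : ℝ) : ℂ)‖ < r by rw [han]; linarith)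
      rw [e _ (by rw [han]; linarith)] at h1
      have := h.inj (by rw [han]; linarith) (by rw [norm_mul, hu, han]; linarith) h1
      have hu1 : u = 1 := by
        have h3 : 1 * ((δ / 2 : ℝ) : ℂ) = u * ((δ / 2 : ℝ) : ℂ) := by rw [one_mul]; exact this
        exact (mul_right_cancel₀ ha0 h3).symm
      intro z hz
      rw [H z hz, hu1, one_mul]
    · exfalso
      have h1 := H _ (show ‖((δ / 2 : ℝ) : ℂ)‖ < r by rw [han]; linarith)
      rw [e _ (by rw [han]; linarith)] at h1
      have := h.inj (by rw [han]; linarith)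
        (by rw [norm_mul, hu, RCLike.norm_conj, han]; linarith) h1
      rw [Complex.conj_ofReal] at this
      have hu1 : u = 1 := by
        have h3 : 1 * ((δ / 2 : ℝ) : ℂ) = u * ((δ / 2 : ℝ) : ℂ) := by rw [one_mul]; exact this
        exact (mul_right_cancel₀ ha0 h3).symm
      have h1 := H _ (show ‖Complex.I * ((δ / 2 : ℝ) : ℂ)‖ < r by rw [hin]; linarith)
      rw [e _ (by rw [hin]; linarith)] at h1
      have := h.inj (by rw [hin]; linarith)
        (by rw [norm_mul, hu, RCLike.norm_conj, hin]; linarith) h1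
      have := congrArg Complex.im this
      rw [hu1, one_mul, map_mul, Complex.conj_ofReal, Complex.conj_I] at this
      simp only [Complex.mul_im, Complex.neg_im, Complex.neg_re, Complex.I_im, Complex.I_re,
        Complex.ofReal_im, Complex.ofReal_re] at this
      linarith
  funext z
  by_cases hz : ‖z‖ < r
  · exact key z hz
  · rw [h.out z (not_lt.1 hz), h'.out z (not_lt.1 hz), e0]

/-- Precomposing a frame with a linear isometry of `ℂ`. -/
theorem IsFrame.comp {S : Type} [MetricSpace S] {r : ℝ} {φ : ℂ → S} (h : IsFrame r φ)
    (A B : ℂ → ℂ) (hA : ∀ z w, ‖A z - A w‖ = ‖z - w‖) (hA0 : A 0 = 0) (hAB : ∀ z, A (B z) = z) :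
    IsFrame r (φ ∘ A) := by
  have hn : ∀ z, ‖A z‖ = ‖z‖ := fun z => by simpa [hA0] using hA z 0
  refine ⟨fun z w hz hw => ?_, fun x hx => ?_, fun z hz => ?_⟩
  · simp only [Function.comp]
    rw [h.isom _ _ (by rwa [hn]) (by rwa [hn]), hA]
  · obtain ⟨z, hz, e⟩ := h.surj x (by simpa [hA0] using hx)
    refine ⟨B z, ?_, by simpa [hAB] using e⟩
    rwa [← hn, hAB]
  · simp only [Function.comp, hA0]
    exact h.out _ (by rwa [hn])

/-- Frames can be translated by vectors of length less than `r / 2`. -/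
theorem IsFrame.translate {S : Type} [MetricSpace S] {r : ℝ} (hr : 0 < r)
    (hex : ∀ y : S, ∃ ψ, IsFrame r ψ ∧ ψ 0 = y) {φ : ℂ → S} (h : IsFrame r φ) {v : ℂ}
    (hv : ‖v‖ < r / 2) : ∃ ψ, IsFrame r ψ ∧ ∀ w, ‖w‖ < r / 2 → ψ w = φ (v + w) := by
  obtain ⟨ψ, hψ, hψ0⟩ := hex (φ v)
  have hb : ∀ w, ‖w‖ < r / 2 → ‖v + w‖ < r := fun w hw => by
    linarith [norm_add_le v w]
  obtain ⟨u, hu, H⟩ := hψ.compare (s := r / 2) (g := fun w => φ (v + w)) (by positivity)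
    (by linarith) (by simpa using hψ0.symm) (fun z w hz hw => by
      rw [h.isom _ _ (hb z hz) (hb w hw), add_sub_add_left_eq_sub])
  have hu0 : u ≠ 0 := by rw [← norm_pos_iff, hu]; norm_num
  rcases H with H | H
  · refine ⟨_, hψ.comp (fun z => u * z) (fun z => u⁻¹ * z) (fun z w => ?_) (by simp) (fun z => ?_),
      fun w hw => (H w hw).symm⟩
    · rw [← mul_sub, norm_mul, hu, one_mul]
    · rw [← mul_assoc, mul_inv_cancel₀ hu0, one_mul]
  · refine ⟨_, hψ.comp (fun z => u * (starRingEnd ℂ) z) (fun z => (starRingEnd ℂ) (u⁻¹ * z))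
      (fun z w => ?_) (by simp) (fun z => ?_), fun w hw => (H w hw).symm⟩
    · rw [← mul_sub, norm_mul, hu, one_mul, ← map_sub, RCLike.norm_conj]
    · rw [Complex.conj_conj, ← mul_assoc, mul_inv_cancel₀ hu0, one_mul]

/-- A local homomorphism from a disk of `ℂ` to a monoid extends to all of `ℂ`, by
`T v = τ (v / n) ^ n` for large `n`. -/
theorem extend_local_hom {M : Type*} [Monoid M] {ρ : ℝ} (hρ : 0 < ρ) (τ : ℂ → M) (h0 : τ 0 = 1)
    (hτ : ∀ v w, ‖v‖ < ρ → ‖w‖ < ρ → ‖v + w‖ < ρ → τ (v + w) = τ v * τ w) :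
    ∃ T : ℂ → M, (∀ v w, T (v + w) = T v * T w) ∧ ∀ v, ‖v‖ < ρ → T v = τ v := by
  have hpow : ∀ (u : ℂ) (m j : ℕ), j ≤ m → ‖(m : ℂ) * u‖ < ρ → τ u ^ j = τ (j * u) := by
    intro u m j hj hm
    rw [norm_mul, Complex.norm_natCast] at hm
    have hle : ∀ i : ℕ, i ≤ m → ‖(i : ℂ) * u‖ < ρ := fun i hi => by
      rw [norm_mul, Complex.norm_natCast]
      refine lt_of_le_of_lt ?_ hm
      gcongr
    induction j with
    | zero => simp [h0]
    | succ j ih =>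
      have e : ((j + 1 : ℕ) : ℂ) * u = (j : ℂ) * u + u := by push_cast; ring
      rw [pow_succ, ih (by omega), e, hτ _ _ (hle j (by omega)) _ (e ▸ hle (j + 1) hj)]
      simpa using hle 1 (by omega)
  set N : ℂ → ℕ := fun v => ⌈‖v‖ / ρ⌉₊ + 1 with hN
  have hbig : ∀ (v : ℂ) (n : ℕ), ‖v‖ / ρ < n → ‖v / n‖ < ρ := fun v n hn => by
    have hn0 : (0:ℝ) < n := lt_of_le_of_lt (by positivity) hn
    rw [norm_div, Complex.norm_natCast, div_lt_iff₀ hn0]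
    rwa [div_lt_iff₀ hρ, mul_comm] at hn
  have hNv : ∀ v, ‖v‖ / ρ < N v := fun v => by
    simp only [hN]; push_cast
    linarith [Nat.le_ceil (‖v‖ / ρ)]
  have hNpos : ∀ v, 0 < N v := fun v => Nat.succ_pos _
  have hmul : ∀ (v : ℂ) (n m : ℕ), 0 < n → 0 < m → ‖v / n‖ < ρ →
      τ (v / n) ^ n = τ (v / (n * m : ℕ)) ^ (n * m) := fun v n m hn hm hv => by
    have hm0 : (m : ℂ) ≠ 0 := by exact_mod_cast hm.ne'
    have hn0 : (n : ℂ) ≠ 0 := by exact_mod_cast hn.ne'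
    have e : (m : ℂ) * (v / (n * m : ℕ)) = v / n := by push_cast; field_simp
    rw [mul_comm n m, pow_mul, mul_comm m n, hpow _ m m le_rfl (by rwa [e]), e]
  set T : ℂ → M := fun v => τ (v / N v) ^ N v with hT
  have hTn : ∀ (v : ℂ) (n : ℕ), 0 < n → ‖v / n‖ < ρ → T v = τ (v / n) ^ n := fun v n hn hv => by
    rw [hmul v n (N v) hn (hNpos v) hv, mul_comm n, ← hmul v (N v) n (hNpos v) hn (hbig v _ (hNv v))]
  refine ⟨T, fun v w => ?_, fun v hv => ?_⟩
  · set n := max (max (N v) (N w)) (N (v + w)) with hn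
    have hn0 : 0 < n := (hNpos v).trans_le (by simp [hn])
    have h1 : ‖v / n‖ < ρ := hbig v n ((hNv v).trans_le (by exact_mod_cast (by simp [hn])))
    have h2 : ‖w / n‖ < ρ := hbig w n ((hNv w).trans_le (by exact_mod_cast (by simp [hn])))
    have h3 : ‖(v + w) / n‖ < ρ :=
      hbig (v + w) n ((hNv (v + w)).trans_le (by exact_mod_cast (by simp [hn])))
    rw [hTn v n hn0 h1, hTn w n hn0 h2, hTn (v + w) n hn0 h3]
    rw [add_div] at h3 ⊢
    have hc : Commute (τ (v / n)) (τ (w / n)) := by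
      change τ (v / n) * τ (w / n) = τ (w / n) * τ (v / n)
      rw [← hτ _ _ h1 h2 h3, ← hτ _ _ h2 h1 (by rwa [add_comm]), add_comm]
    rw [hτ _ _ h1 h2 h3, hc.mul_pow]
  · have := hTn v 1 one_pos (by simpa using hv)
    simpa using this

/-- The developing map: if frames of a uniform radius exist everywhere, then every point is the
image of `0` under a map `ℂ → S` which is isometric, and onto, on all disks of a fixed radius. -/
theorem exists_developing {S : Type} [MetricSpace S] {r : ℝ} (hr : 0 < r)
    (hex : ∀ y : S, ∃ ψ, IsFrame r ψ ∧ ψ 0 = y) (x : S) :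
    ∃ E : ℂ → S, E 0 = x ∧
      (∀ v w w', ‖w‖ < r / 2 → ‖w'‖ < r / 2 → dist (E (v + w)) (E (v + w')) = ‖w - w'‖) ∧
      ∀ v y, dist (E v) y < r / 2 → ∃ w, ‖w‖ < r / 2 ∧ E (v + w) = y := by
  have htr : ∀ (v : ℂ) (φ : {φ : ℂ → S // IsFrame r φ}), ∃ ψ : {φ : ℂ → S // IsFrame r φ},
      ‖v‖ < r / 2 → ∀ w, ‖w‖ < r / 2 → ψ.1 w = φ.1 (v + w) := fun v φ => by
    by_cases hv : ‖v‖ < r / 2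
    · obtain ⟨ψ, hψ, H⟩ := φ.2.translate hr hex hv
      exact ⟨⟨ψ, hψ⟩, fun _ => H⟩
    · exact ⟨φ, fun h => absurd h hv⟩
  choose τ hτ using htr
  have hr2 : 0 < r / 2 := by positivity
  obtain ⟨T, hT, hTτ⟩ := extend_local_hom (M := Function.End {φ : ℂ → S // IsFrame r φ}) hr2 τ
    (by
      funext φ
      refine Subtype.ext (φ.2.eq_of_agree (τ 0 φ).2 hr2 (by linarith) fun z hz => ?_)
      rw [hτ 0 φ (by simpa using hr2) z hz, zero_add])
    (by
      intro v w hv hw hvw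
      funext φ
      change τ (v + w) φ = τ v (τ w φ)
      refine Subtype.ext ((τ v (τ w φ)).2.eq_of_agree (τ (v + w) φ).2
        (δ := r / 2 - ‖v‖) (by linarith) (by linarith [norm_nonneg v]) fun z hz => ?_)
      have hz2 : ‖z‖ < r / 2 := by linarith [norm_nonneg v]
      rw [hτ _ _ hvw z hz2, hτ _ _ hv z hz2, hτ _ _ hw (v + z) (by linarith [norm_add_le v z])]
      rw [show w + (v + z) = v + w + z by ring])
  obtain ⟨φ₀, hφ₀, h0⟩ := hex x
  set Φ : {φ : ℂ → S // IsFrame r φ} := ⟨φ₀, hφ₀⟩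
  have hz2 : ‖(0 : ℂ)‖ < r / 2 := by simpa using hr2
  have hE : ∀ v w, ‖w‖ < r / 2 → (T (v + w) Φ).1 0 = (T v Φ).1 w := fun v w hw => by
    rw [add_comm, hT, hTτ w hw]
    change (τ w (T v Φ)).1 0 = _
    rw [hτ _ _ hw 0 hz2, add_zero]
  refine ⟨fun v => (T v Φ).1 0, ?_, fun v w w' hw hw' => ?_, fun v y hy => ?_⟩
  · change (T 0 Φ).1 0 = x
    rw [hTτ 0 hz2, hτ 0 Φ hz2 0 hz2, add_zero]
    exact h0
  · simp only [hE v w hw, hE v w' hw']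
    exact (T v Φ).2.isom _ _ (by linarith) (by linarith)
  · obtain ⟨w, hw, e⟩ := (T v Φ).2.surj y (by change dist _ y < _ at hy; linarith)
    have : ‖w‖ < r / 2 := by
      have := (T v Φ).2.isom 0 w (by simpa using hr) hw
      rw [e, zero_sub, norm_neg] at this
      rw [← this]; exact hy
    exact ⟨w, this, by simp only [hE v w this]; exact e⟩

/-- A compact surface without conical points has frames of a uniform radius. -/
theorem ESCS.exists_frames {S : Type} [MetricSpace S] (hS : ESCS S) (hc : hS.conical = ∅) :
    ∃ r > 0, ∀ y : S, ∃ ψ : ℂ → S, IsFrame r ψ ∧ ψ 0 = y := by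
  have := hS.compact
  have := hS.connected
  choose ε hε f hf using fun x => hS.euclidean_at x (by simp [hc])
  obtain ⟨t, ht⟩ := isCompact_univ.elim_nhds_subcover (fun x : S => ball x (ε x / 2))
    (fun x _ => ball_mem_nhds x (half_pos (hε x)))
  have hne : t.Nonempty := by
    obtain ⟨x⟩ : Nonempty S := inferInstance
    obtain ⟨y, hy, -⟩ := mem_iUnion₂.1 (ht.2 (mem_univ x))
    exact ⟨y, hy⟩
  refine ⟨t.inf' hne (fun x => ε x / 2), (Finset.lt_inf'_iff _).2 fun x _ => half_pos (hε x),
    fun y => ?_⟩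
  obtain ⟨x, hx, hyx⟩ := mem_iUnion₂.1 (ht.2 (mem_univ y))
  set r := t.inf' hne (fun x => ε x / 2) with hr
  have hr0 : 0 < r := (Finset.lt_inf'_iff _).2 fun x _ => half_pos (hε x)
  have hrx : r ≤ ε x / 2 := Finset.inf'_le _ hx
  have hsub : ∀ z, dist z y < r → z ∈ ball x (ε x) := fun z hz => by
    rw [mem_ball] at hyx ⊢
    linarith [dist_triangle z y x]
  obtain ⟨hiso, himg⟩ := hf x
  set J := Complex.orthonormalBasisOneI.repr with hJ
  have hyb : y ∈ ball x (ε x) := hsub y (by simpa using hr0)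
  have hJn : ∀ z w, dist (f x y + J z) (f x y + J w) = ‖z - w‖ := fun z w => by
    rw [dist_eq_norm, add_sub_add_left_eq_sub, ← map_sub, LinearIsometryEquiv.norm_map]
  have hex : ∀ z : ℂ, ∃ p : S, (‖z‖ < r → p ∈ ball x (ε x) ∧ f x p = f x y + J z) ∧
      (r ≤ ‖z‖ → p = y) := fun z => by
    by_cases hz : ‖z‖ < r
    · have : f x y + J z ∈ f x '' ball x (ε x) := by
        rw [himg, mem_ball]
        have h1 : dist (f x y) (f x x) < ε x / 2 := by
          rw [hiso y hyb x (mem_ball_self (hε x))]; exact hyx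
        have h2 : dist (f x y + J z) (f x y) = ‖z‖ := by
          simp
        linarith [dist_triangle (f x y + J z) (f x y) (f x x)]
      obtain ⟨p, hp, e⟩ := this
      exact ⟨p, fun _ => ⟨hp, e⟩, fun h => absurd hz (not_lt.2 h)⟩
    · exact ⟨y, fun h => absurd h hz, fun _ => rfl⟩
  choose ψ hψ hψ' using hex
  have hz0 : ‖(0:ℂ)‖ < r := by simpa using hr0
  have e0 : ψ 0 = y := by
    obtain ⟨h1, h2⟩ := hψ 0 hz0
    have := hiso _ h1 y hyb
    rw [h2, map_zero, add_zero, dist_self] at this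
    exact dist_eq_zero.1 this.symm
  refine ⟨ψ, ⟨fun z w hz hw => ?_, fun p hp => ?_, fun z hz => by rw [hψ' z hz, e0]⟩, e0⟩
  · obtain ⟨h1, h2⟩ := hψ z hz
    obtain ⟨h3, h4⟩ := hψ w hw
    rw [← hiso _ h1 _ h3, h2, h4, hJn]
  · rw [e0] at hp
    have hpb := hsub p (by rwa [dist_comm])
    have hzJ : f x y + J (J.symm (f x p - f x y)) = f x p := by simp
    have hzn : ‖J.symm (f x p - f x y)‖ < r := by
      rw [LinearIsometryEquiv.norm_map, ← dist_eq_norm, hiso _ hpb _ hyb, dist_comm]; exact hp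
    refine ⟨_, hzn, ?_⟩
    obtain ⟨h1, h2⟩ := hψ _ hzn
    have := hiso _ h1 p hpb
    rw [h2, hzJ, dist_self] at this
    exact dist_eq_zero.1 this.symm

/-! ### Path lifting and growth of the fundamental group -/

/-- `E : ℂ → S` restricts to an isometry from every disk of radius `ρ` onto the ball of radius `ρ`
about the image of the centre. -/
structure Developing {S : Type} [MetricSpace S] (E : ℂ → S) (ρ : ℝ) : Prop where
  pos : 0 < ρ
  isom : ∀ v w w', ‖w‖ < ρ → ‖w'‖ < ρ → dist (E (v + w)) (E (v + w')) = ‖w - w'‖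
  surj : ∀ v y, dist (E v) y < ρ → ∃ w, ‖w‖ < ρ ∧ E (v + w) = y

namespace Developing

variable {S : Type} [MetricSpace S] {E : ℂ → S} {ρ : ℝ}

theorem eq_of_near (h : Developing E ρ) {p q : ℂ} (hpq : ‖q - p‖ < ρ) (e : E p = E q) : q = p := by
  have := h.isom p 0 (q - p) (by simpa using h.pos) hpq
  rw [add_zero, add_sub_cancel, e, dist_self, zero_sub, norm_neg] at this
  exact sub_eq_zero.1 (norm_eq_zero.1 this.symm)

theorem continuous (h : Developing E ρ) : Continuous E := by
  refine Metric.continuous_iff.2 fun v ε hε => ⟨min ε ρ, lt_min hε h.pos, fun w hw => ?_⟩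
  rw [dist_eq_norm] at hw
  have := h.isom v (w - v) 0 (hw.trans_le (min_le_right _ _)) (by simpa using h.pos)
  rw [add_sub_cancel, add_zero, sub_zero] at this
  rw [this]
  exact hw.trans_le (min_le_left _ _)

/-- The local inverse of `E` on a ball of radius `ρ`. -/
theorem local_inverse (h : Developing E ρ) (v : ℂ) : ∃ l : S → ℂ, l (E v) = v ∧
    (∀ y ∈ ball (E v) ρ, E (l y) = y ∧ ‖l y - v‖ < ρ) ∧ ContinuousOn l (ball (E v) ρ) := by
  have hex : ∀ y, ∃ z, y ∈ ball (E v) ρ → E z = y ∧ ‖z - v‖ < ρ := fun y => by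
    by_cases hy : y ∈ ball (E v) ρ
    · obtain ⟨w, hw, e⟩ := h.surj v y (by rwa [mem_ball, dist_comm] at hy)
      exact ⟨v + w, fun _ => ⟨e, by simpa using hw⟩⟩
    · exact ⟨0, fun h => absurd h hy⟩
  choose l hl using hex
  refine ⟨l, ?_, hl, ?_⟩
  · obtain ⟨h1, h2⟩ := hl (E v) (mem_ball_self h.pos)
    exact h.eq_of_near h2 h1.symm
  · have hd : ∀ y ∈ ball (E v) ρ, ∀ z ∈ ball (E v) ρ, dist (l y) (l z) = dist y z := by
      intro y hy z hz
      have := h.isom v (l y - v) (l z - v) (hl y hy).2 (hl z hz).2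
      rw [add_sub_cancel, add_sub_cancel, (hl y hy).1, (hl z hz).1, sub_sub_sub_cancel_right] at this
      rw [dist_eq_norm, this]
    refine Metric.continuousOn_iff.2 fun y hy ε hε => ⟨ε, hε, fun z hz hzy => ?_⟩
    rwa [hd z hz y hy]

/-- Paths lift through `E`, with a displacement bounded independently of the starting point. -/
theorem lift (h : Developing E ρ) {x x' : S} (γ : Path x x') : ∃ L : ℝ, 0 ≤ L ∧
    ∀ p, E p = x → ∃ p', ∃ δ : Path p p', ‖p' - p‖ ≤ L ∧ ∀ t, E (δ t) = γ t := by
  have huc : UniformContinuous γ.extend := by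
    have h1 : UniformContinuous γ := CompactSpace.uniformContinuous_of_continuous γ.continuous
    exact h1.comp (LipschitzWith.projIcc zero_le_one).uniformContinuous
  obtain ⟨δ, hδ, hγ⟩ := Metric.uniformContinuous_iff.1 huc ρ h.pos
  obtain ⟨M, hM⟩ := exists_nat_gt (1 / δ)
  have hM0 : (0:ℝ) < M := lt_trans (by positivity) hM
  have hMδ : 1 / (M:ℝ) < δ := by rwa [one_div_lt hM0 hδ]
  refine ⟨M * ρ, by have := h.pos; positivity, fun p hp => ?_⟩
  have main : ∀ k : ℕ, ∃ g : ℝ → ℂ, Continuous g ∧ g 0 = p ∧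
      (∀ t, E (g t) = γ.extend (min t (k / M))) ∧ ‖g (k / M) - p‖ ≤ k * ρ := by
    intro k
    induction k with
    | zero =>
      refine ⟨fun _ => p, continuous_const, rfl, fun t => ?_, by simp⟩
      rw [hp, Path.extend_of_le_zero]
      simp
    | succ k ih =>
      obtain ⟨g, hg, hg0, hE, hgn⟩ := ih
      set a : ℝ := k / M with ha
      have ha0 : 0 ≤ a := by positivity
      have hb : ((k + 1 : ℕ) : ℝ) / M = a + 1 / M := by push_cast; rw [ha]; ring
      have hM1 : 0 < 1 / (M:ℝ) := by positivity
      have hEa : E (g a) = γ.extend a := by rw [hE, min_self]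
      obtain ⟨l, hl0, hl, hlc⟩ := h.local_inverse (g a)
      rw [hb]
      have hball : ∀ t, γ.extend (max a (min t (a + 1 / M))) ∈ ball (E (g a)) ρ := fun t => by
        rw [mem_ball, hEa]
        apply hγ
        rw [Real.dist_eq, abs_of_nonneg (by linarith [le_max_left a (min t (a + 1 / M))])]
        have : max a (min t (a + 1 / M)) ≤ a + 1 / M :=
          max_le (by linarith) (min_le_right _ _)
        linarith
      refine ⟨fun t => if t ≤ a then g t else l (γ.extend (max a (min t (a + 1 / M)))),
        ?_, ?_, fun t => ?_, ?_⟩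
      · refine Continuous.if_le hg (hlc.comp_continuous ?_ hball) continuous_id continuous_const ?_
        · exact γ.continuous_extend.comp (by fun_prop)
        · rintro t rfl
          rw [min_eq_left (by simp), max_self, ← hEa, hl0]
      · simp only [ha0, if_true, hg0]
      · by_cases ht : t ≤ a
        · simp only [ht, if_true]
          rw [hE, min_eq_left ht, min_eq_left (by linarith)]
        · simp only [ht, if_false]
          rw [(hl _ (hball t)).1, max_eq_right]
          exact le_min (not_le.1 ht).le (by linarith)
      · have : ¬ (a + 1 / M ≤ a) := by linarith
        simp only [this, if_false]
        have h2 := (hl _ (hball (a + 1 / M))).2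
        have h3 := norm_add_le (l (γ.extend (max a (min (a + 1 / M) (a + 1 / M)))) - g a) (g a - p)
        rw [sub_add_sub_cancel] at h3
        push_cast
        linarith
  obtain ⟨g, hg, hg0, hE, hgn⟩ := main M
  rw [div_self hM0.ne'] at hE hgn
  refine ⟨g 1, ⟨⟨fun t => g t, by fun_prop⟩, by simpa using hg0, by simp⟩, hgn, fun t => ?_⟩
  change E (g t) = γ t
  rw [hE, min_eq_left t.2.2, Path.extend_apply _ t.2]

end Developing

theorem positive_word_injective :
    Function.Injective fun l : List Bool => FreeGroup.mk (l.map fun b => (b, true)) := by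
  intro l l' e
  have hred : ∀ l : List Bool, FreeGroup.IsReduced (l.map fun b => (b, true)) := fun l => by
    induction l with
    | nil => simp
    | cons a l ih =>
      cases l with
      | nil => simp
      | cons b l =>
        simp only [List.map_cons] at ih ⊢
        exact FreeGroup.isReduced_cons_cons.2 ⟨fun _ => rfl, ih⟩
  have := congrArg FreeGroup.toWord e
  simp only [FreeGroup.toWord_mk] at this
  rw [(hred l).reduce_eq, (hred l').reduce_eq] at this
  exact List.map_injective_iff.2 (fun a b h => (Prod.mk.inj h).1) this

/-- If the fundamental group contains a free group of rank two, then `S` has no developing map: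
the `2 ^ n` positive words of length `n` give distinct `ρ`-separated preimages of the basepoint in a
disk of radius `O(n)`. -/
theorem Developing.elim_free {S : Type} [MetricSpace S] {E : ℂ → S} {ρ : ℝ} (h : Developing E ρ)
    (ι : FreeGroup Bool →* FundamentalGroup S (E 0)) (hι : Function.Injective ι) : False := by
  have hcE := h.continuous
  have hrep : ∀ b : Bool, ∃ γ : Path (E 0) (E 0),
      (Path.Homotopic.Quotient.mk γ : FundamentalGroup S (E 0)) = ι (FreeGroup.of b) := fun b =>
    Quotient.exists_rep _
  choose γ hγ using hrep
  choose L₀ hL₀ hlift using fun b => h.lift (γ b)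
  set L := max (L₀ true) (L₀ false) with hL
  have hLb : ∀ b, L₀ b ≤ L := fun b => by cases b <;> simp [hL]
  have hL0 : 0 ≤ L := (hL₀ true).trans (hLb true)
  have words : ∀ l : List Bool, ∃ (p : ℂ) (hp : E p = E 0) (δ : Path 0 p), ‖p‖ ≤ L * l.length ∧
      (Path.Homotopic.Quotient.mk ((δ.map hcE).cast rfl hp.symm) : FundamentalGroup S (E 0)) =
        ι (FreeGroup.mk (l.map fun b => (b, true))) := by
    intro l
    induction l with
    | nil =>
      refine ⟨0, rfl, Path.refl 0, by simp, ?_⟩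
      rw [List.map_nil, ← FreeGroup.one_eq_mk, map_one]
      rfl
    | cons b l ih =>
      obtain ⟨p, hp, δ, hn, hδ⟩ := ih
      obtain ⟨p', η, hn', hη⟩ := hlift b p hp
      have hp' : E p' = E 0 := by simpa using hη 1
      refine ⟨p', hp', δ.trans η, ?_, ?_⟩
      · have h3 := norm_add_le (p' - p) p
        rw [sub_add_cancel] at h3
        have := hLb b
        simp only [List.length_cons]
        push_cast
        linarith
      · have hw : FreeGroup.mk ((b :: l).map fun b => (b, true)) =
            FreeGroup.of b * FreeGroup.mk (l.map fun b => (b, true)) := rfl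
        rw [hw, map_mul, ← hδ, ← hγ]
        have hηγ : (η.map hcE).cast hp.symm hp'.symm = γ b := by
          ext t
          exact hη t
        have : ((δ.trans η).map hcE).cast rfl hp'.symm =
            ((δ.map hcE).cast rfl hp.symm).trans (γ b) := by
          rw [← hηγ, Path.map_trans]
          rfl
        rw [this]
        rfl
  choose P hP δ hPn hδ using words
  have hPinj : Function.Injective P := by
    intro l l' e
    apply positive_word_injective
    apply hι
    simp only
    rw [← hδ, ← hδ]
    have key : ∀ (q : ℂ) (hq : E q = E 0) (e : P l = q) (η : Path 0 q),
        (Path.Homotopic.Quotient.mk (((δ l).map hcE).cast rfl (hP l).symm)) =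
        (Path.Homotopic.Quotient.mk ((η.map hcE).cast rfl hq.symm)) := by
      rintro q hq rfl η
      apply Path.Homotopic.Quotient.eq.2
      have h1 : (δ l).Homotopic η := SimplyConnectedSpace.paths_homotopic _ _
      obtain ⟨H⟩ := h1.map ⟨E, hcE⟩
      exact ⟨H.pathCast rfl (hP l).symm⟩
    exact key _ (hP l') e (δ l')
  obtain ⟨c, hc⟩ := exists_nat_gt (2 * L / ρ)
  have hρ := h.pos
  have hc0 : 1 ≤ c := by
    have : (0:ℝ) < c := lt_of_le_of_lt (by positivity) hc
    exact_mod_cast this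
  have count : ∀ n : ℕ, 2 ^ n ≤ (2 * (c * n) + 1) ^ 2 := by
    intro n
    set F : (Fin n → Bool) → ℤ × ℤ := fun w =>
      (⌊2 * (P (List.ofFn w)).re / ρ⌋, ⌊2 * (P (List.ofFn w)).im / ρ⌋) with hF
    set B : Finset (ℤ × ℤ) := Finset.Icc (-(c * n : ℤ)) (c * n) ×ˢ Finset.Icc (-(c * n : ℤ)) (c * n)
      with hB
    have hfl : ∀ (w : Fin n → Bool) (a : ℝ), |a| ≤ ‖P (List.ofFn w)‖ →
        ⌊2 * a / ρ⌋ ∈ Finset.Icc (-(c * n : ℤ)) (c * n) := fun w a ha => by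
      have h1 : |a| ≤ L * n := ha.trans (by simpa using hPn (List.ofFn w))
      have h2 : |2 * a / ρ| ≤ c * n := by
        rw [abs_div, abs_mul, abs_of_pos hρ, abs_two]
        calc 2 * |a| / ρ ≤ 2 * (L * n) / ρ := by gcongr
          _ = 2 * L / ρ * n := by ring
          _ ≤ c * n := by gcongr
      obtain ⟨h3, h4⟩ := abs_le.1 h2
      rw [Finset.mem_Icc]
      constructor
      · rw [Int.le_floor]; push_cast; exact h3
      · have : ((⌊2 * a / ρ⌋ : ℤ) : ℝ) ≤ ((c * n : ℤ) : ℝ) := by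
          push_cast; exact (Int.floor_le _).trans h4
        exact_mod_cast this
    have hmaps : ∀ w ∈ (Finset.univ : Finset (Fin n → Bool)), F w ∈ B := fun w _ =>
      Finset.mem_product.2 ⟨hfl w _ (Complex.abs_re_le_norm _), hfl w _ (Complex.abs_im_le_norm _)⟩
    have hclose : ∀ a b : ℝ, ⌊2 * a / ρ⌋ = ⌊2 * b / ρ⌋ → |b - a| < ρ / 2 := fun a b e => by
      have := Int.abs_sub_lt_one_of_floor_eq_floor e.symm
      rw [show 2 * b / ρ - 2 * a / ρ = 2 * (b - a) / ρ by ring, abs_div, abs_mul, abs_of_pos hρ,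
        abs_two, div_lt_one hρ] at this
      linarith
    have hFinj : Function.Injective F := by
      intro w w' e
      obtain ⟨e1, e2⟩ := Prod.mk.inj e
      have hn := Complex.norm_le_abs_re_add_abs_im (P (List.ofFn w') - P (List.ofFn w))
      rw [Complex.sub_re, Complex.sub_im] at hn
      have := h.eq_of_near (p := P (List.ofFn w)) (q := P (List.ofFn w'))
        (by linarith [hclose _ _ e1, hclose _ _ e2]) ((hP _).trans (hP _).symm)
      exact (List.ofFn_injective (hPinj this)).symm
    have := Finset.card_le_card_of_injOn F hmaps hFinj.injOn
    rw [Finset.card_univ, Fintype.card_pi, hB, Finset.card_product, Int.card_Icc] at this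
    simp only [Fintype.card_bool, Finset.prod_const, Finset.card_univ, Fintype.card_fin] at this
    have e : ((c * n : ℤ) + 1 - -(c * n : ℤ)).toNat = 2 * (c * n) + 1 := by
      have : (c * n : ℤ) + 1 - -(c * n : ℤ) = ((2 * (c * n) + 1 : ℕ) : ℤ) := by push_cast; ring
      rw [this, Int.toNat_natCast]
    rw [e] at this
    rwa [pow_two (2 * (c * n) + 1)]
  -- quadratic growth contradicts exponential growth at `n = 32 c`
  have h1 := count (4 * (8 * c))
  have h2 : 8 * c + 1 ≤ 2 ^ (8 * c) := Nat.lt_two_pow_self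
  have h3 : (2 * (c * (4 * (8 * c))) + 1) < (8 * c + 1) ^ 2 := by nlinarith
  have h4 : (8 * c + 1) ^ 2 ≤ (2 ^ (8 * c)) ^ 2 := Nat.pow_le_pow_left h2 2
  have h5 : (2 * (c * (4 * (8 * c))) + 1) ^ 2 < ((2 ^ (8 * c)) ^ 2) ^ 2 :=
    Nat.pow_lt_pow_left (h3.trans_le h4) (by norm_num)
  rw [← pow_mul, ← pow_mul] at h5
  have e : 8 * c * (2 * 2) = 4 * (8 * c) := by ring
  rw [e] at h5
  omega

/-- A surface whose fundamental group contains a free group of rank two is not flat. -/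
theorem ESCS.conical_nonempty {S : Type} [MetricSpace S] (hS : ESCS S) : hS.conical.Nonempty := by
  by_contra hne
  obtain ⟨r, hr, hex⟩ := hS.exists_frames (Finset.not_nonempty_iff_eq_empty.1 hne)
  obtain ⟨x, ι, hι⟩ := hS.genus_ge_two
  obtain ⟨E, rfl, h1, h2⟩ := exists_developing hr hex x
  exact Developing.elim_free (ρ := r / 2) ⟨by positivity, h1, h2⟩ ι hι

/-- For any e.s.c.s. `S` there exists a closed geodesic of `S` which
is the unique closed geodesic in its free homotopy class. -/
theorem exists_closed_geodesic_unique_in_class (S : Type) [MetricSpace S]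
    (hS : ESCS S) :
    ∃ g : ℝ → S, UniqueClosedGeodesic g := by
  have := hS.compact
  obtain ⟨ε, hG⟩ := hS.exists_good
  obtain ⟨q, hq⟩ := hS.conical_nonempty
  obtain ⟨g, k, hk, T, hT, hg, hgp, hr⟩ := hS.exists_rigid hG hq
  exact ⟨g, unique_of_vertexRigid hG hk hg hT hgp hr⟩

end ESCSPaper
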